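/- arXiv:2203.08375 — 4 statements merged into one kernel-verified Lean document; each statement's English description precedes it below -/
import Mathlib

section
/- Let (u,p) and (v,q) both be solutions of the steady incompressible Euler system with slip boundary condition in the nozzle Ω. Suppose u₁(x₁,x₂)>0 and v₁(x₁,x₂)>0 for all (x₁,x₂)∈Ω, and that u₁(x₁,x₂)→6Qx₂(1−x₂) and v₁(x₁,x₂)→6Qx₂(1−x₂) as x₁→−∞, uniformly for x₂∈[0,1]. Then u=v everywhere in Ω (i.e., there is at most one such velocity field). -/
open Real Set MeasureTheory

noncomputable section

/-- Partial derivative in the `x₁` direction. -/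
def pd1 (φ : ℝ × ℝ → ℝ) (x : ℝ × ℝ) : ℝ := fderiv ℝ φ x (1, 0)

/-- Partial derivative in the `x₂` direction. -/
def pd2 (φ : ℝ × ℝ → ℝ) (x : ℝ × ℝ) : ℝ := fderiv ℝ φ x (0, 1)

/-- `(u, p)` is a solution of the steady incompressible Euler system in the nozzle `Ω`
bounded by the graphs of `h₀` and `h₁`, with the slip boundary condition:
`u ∈ C²(Ω;ℝ²)`, `u` Lipschitz on the closure of `Ω`, `p ∈ C¹(Ω)`, the Euler equations hold
in `Ω`, and `u₂ = hᵢ' u₁` on both boundary curves. -/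
def IsEulerSlip (h₀ h₁ : ℝ → ℝ) (Ω : Set (ℝ × ℝ)) (u : ℝ × ℝ → ℝ × ℝ)
    (p : ℝ × ℝ → ℝ) : Prop :=
  ContDiffOn ℝ 2 u Ω ∧ (∃ K, LipschitzOnWith K u (closure Ω)) ∧ ContDiffOn ℝ 1 p Ω ∧
  (∀ x ∈ Ω,
    (u x).1 * pd1 (fun y => (u y).1) x + (u x).2 * pd2 (fun y => (u y).1) x + pd1 p x = 0 ∧
    (u x).1 * pd1 (fun y => (u y).2) x + (u x).2 * pd2 (fun y => (u y).2) x + pd2 p x = 0 ∧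
    pd1 (fun y => (u y).1) x + pd2 (fun y => (u y).2) x = 0) ∧
  (∀ x₁ : ℝ, (u (x₁, h₀ x₁)).2 = deriv h₀ x₁ * (u (x₁, h₀ x₁)).1 ∧
             (u (x₁, h₁ x₁)).2 = deriv h₁ x₁ * (u (x₁, h₁ x₁)).1)

/-- The continuous linear form `(x, y) ↦ a * x + b * y` on the plane. -/
def planeForm (a b : ℝ) : ℝ × ℝ →L[ℝ] ℝ :=
  a • ContinuousLinearMap.fst ℝ ℝ ℝ + b • ContinuousLinearMap.snd ℝ ℝ ℝ

@[simp]
theorem planeForm_apply (a b : ℝ) (w : ℝ × ℝ) : planeForm a b w = a * w.1 + b * w.2 := by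
  simp [planeForm]

/-- Divergence theorem on `[x₀, x₁] × [0, s]` for a divergence free field tangent to the bottom. -/
theorem integral_sub_integral_eq_of_divergence_free {A B : ℝ × ℝ → ℝ}
    (hA : Continuous A) (hB : Continuous B)
    (dA : ∀ w : ℝ × ℝ, w.2 ∈ Ioo (0 : ℝ) 1 → DifferentiableAt ℝ A w)
    (dB : ∀ w : ℝ × ℝ, w.2 ∈ Ioo (0 : ℝ) 1 → DifferentiableAt ℝ B w)
    (div : ∀ w : ℝ × ℝ, w.2 ∈ Ioo (0 : ℝ) 1 → fderiv ℝ A w (1, 0) + fderiv ℝ B w (0, 1) = 0)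
    (hB0 : ∀ x, B (x, 0) = 0) (x₀ x₁ : ℝ) {s : ℝ} (hs : s ∈ Icc (0 : ℝ) 1) :
    (∫ t in (0 : ℝ)..s, A (x₁, t)) - ∫ t in (0 : ℝ)..s, A (x₀, t) = -∫ x in x₀..x₁, B (x, s) := by
  have hsub : ∀ w ∈ Ioo (min x₀ x₁) (max x₀ x₁) ×ˢ Ioo (min 0 s) (max 0 s),
      w.2 ∈ Ioo (0 : ℝ) 1 := by
    rintro w ⟨-, hw⟩
    rw [min_eq_left hs.1, max_eq_right hs.1] at hw
    exact ⟨hw.1, hw.2.trans_le hs.2⟩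
  set f' : ℝ × ℝ → ℝ × ℝ →L[ℝ] ℝ := fun w => if w.2 ∈ Ioo (0 : ℝ) 1 then fderiv ℝ A w else 0
  set g' : ℝ × ℝ → ℝ × ℝ →L[ℝ] ℝ := fun w => if w.2 ∈ Ioo (0 : ℝ) 1 then fderiv ℝ B w else 0
  have hz : ∀ w, f' w (1, 0) + g' w (0, 1) = 0 := by
    intro w
    by_cases hw : w.2 ∈ Ioo (0 : ℝ) 1
    · simpa only [f', g', if_pos hw] using div w hw
    · simp only [f', g', if_neg hw]; simp
  have key := integral2_divergence_prod_of_hasFDerivAt A B f' g' x₀ 0 x₁ s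
    hA.continuousOn hB.continuousOn
    (fun w hw => by simpa only [f', if_pos (hsub w hw)] using (dA w (hsub w hw)).hasFDerivAt)
    (fun w hw => by simpa only [g', if_pos (hsub w hw)] using (dB w (hsub w hw)).hasFDerivAt)
    (by simp only [hz]; exact integrableOn_zero)
  simp only [hz, hB0, intervalIntegral.integral_zero] at key
  linarith

/-- The flux of `A` through the vertical segment from `(x, 0)` to `(x, s)`. -/
def fluxBelow (A : ℝ × ℝ → ℝ) (w : ℝ × ℝ) : ℝ := ∫ t in (0 : ℝ)..w.2, A (w.1, t)

theorem continuous_fluxBelow {A : ℝ × ℝ → ℝ} (hA : Continuous A) : Continuous (fluxBelow A) := by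
  refine intervalIntegral.continuous_parametric_intervalIntegral_of_continuous
    (f := fun (w : ℝ × ℝ) t => A (w.1, t)) ?_ continuous_snd
  fun_prop

theorem fluxBelow_strictMonoOn {A : ℝ × ℝ → ℝ} (hA : Continuous A)
    (pos : ∀ w : ℝ × ℝ, w.2 ∈ Ioo (0 : ℝ) 1 → 0 < A w) (x : ℝ) :
    StrictMonoOn (fun s => fluxBelow A (x, s)) (Icc 0 1) := by
  intro s hs t ht hst
  have hc : Continuous fun r => A (x, r) := by fun_prop
  have h1 : (∫ r in (0 : ℝ)..t, A (x, r)) - ∫ r in (0 : ℝ)..s, A (x, r) = ∫ r in s..t, A (x, r) :=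
    intervalIntegral.integral_interval_sub_left (hc.intervalIntegrable _ _)
      (hc.intervalIntegrable _ _)
  have h2 : 0 < ∫ r in s..t, A (x, r) := by
    refine intervalIntegral.intervalIntegral_pos_of_pos_on (hc.intervalIntegrable _ _) ?_ hst
    exact fun r hr => pos _ ⟨hs.1.trans_lt hr.1, hr.2.trans_le ht.2⟩
  simp only [fluxBelow]
  linarith

theorem hasFDerivAt_fluxBelow {A B : ℝ × ℝ → ℝ}
    (hA : Continuous A) (hB : Continuous B)
    (dA : ∀ w : ℝ × ℝ, w.2 ∈ Ioo (0 : ℝ) 1 → DifferentiableAt ℝ A w)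
    (dB : ∀ w : ℝ × ℝ, w.2 ∈ Ioo (0 : ℝ) 1 → DifferentiableAt ℝ B w)
    (div : ∀ w : ℝ × ℝ, w.2 ∈ Ioo (0 : ℝ) 1 → fderiv ℝ A w (1, 0) + fderiv ℝ B w (0, 1) = 0)
    (hB0 : ∀ x, B (x, 0) = 0) {w : ℝ × ℝ} (hw : w.2 ∈ Ioo (0 : ℝ) 1) :
    HasFDerivAt (fluxBelow A) (planeForm (-B w) (A w)) w := by
  have hev : ∀ᶠ z : ℝ × ℝ in nhds w, z.2 ∈ Ioo (0 : ℝ) 1 :=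
    (isOpen_Ioo.preimage continuous_snd).mem_nhds hw
  have key := hasStrictFDerivAt_uncurry_coprod (𝕜 := ℝ) (u := w)
    (f := fun x s => fluxBelow A (x, s))
    (f₁ := fun x s => (-B (x, s)) • ContinuousLinearMap.id ℝ ℝ)
    (f₂ := fun x s => A (x, s) • ContinuousLinearMap.id ℝ ℝ)
    (by
      filter_upwards [hev] with z hz
      have hBc : Continuous fun t => B (t, z.2) := by fun_prop
      have h1 : HasDerivAt (fun x => fluxBelow A (z.1, z.2) - ∫ t in z.1..x, B (t, z.2))
          (-B z) z.1 := by
        simpa using (intervalIntegral.integral_hasDerivAt_right (hBc.intervalIntegrable _ _)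
          (hBc.stronglyMeasurableAtFilter _ _) hBc.continuousAt).const_sub
          (fluxBelow A (z.1, z.2))
      have h2 : (fun x => fluxBelow A (x, z.2)) =
          fun x => fluxBelow A (z.1, z.2) - ∫ t in z.1..x, B (t, z.2) := by
        funext x
        have := integral_sub_integral_eq_of_divergence_free hA hB dA dB div hB0 z.1 x
          (Ioo_subset_Icc_self hz)
        simp only [fluxBelow]
        linarith
      rw [← h2] at h1
      exact h1.hasFDerivAt.congr_fderiv (by ext; simp [Function.HasUncurry.uncurry]))
    (by
      filter_upwards with z
      have hAc : Continuous fun t => A (z.1, t) := by fun_prop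
      exact (intervalIntegral.integral_hasDerivAt_right (hAc.intervalIntegrable _ _)
          (hAc.stronglyMeasurableAtFilter _ _) hAc.continuousAt).hasFDerivAt.congr_fderiv
          (by ext; simp [Function.HasUncurry.uncurry]))
    (by
      apply Continuous.continuousAt
      simp only [Function.HasUncurry.uncurry, id]
      fun_prop)
    (by
      apply Continuous.continuousAt
      simp only [Function.HasUncurry.uncurry, id]
      fun_prop)
  refine key.hasFDerivAt.congr_fderiv ?_
  ext <;> simp [Function.HasUncurry.uncurry]

/-- Inverting the stream function of a divergence free field with positive first component. -/
theorem exists_streamline_height {A B : ℝ × ℝ → ℝ}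
    (hA : Continuous A) (hB : Continuous B)
    (dA : ∀ w : ℝ × ℝ, w.2 ∈ Ioo (0 : ℝ) 1 → DifferentiableAt ℝ A w)
    (dB : ∀ w : ℝ × ℝ, w.2 ∈ Ioo (0 : ℝ) 1 → DifferentiableAt ℝ B w)
    (div : ∀ w : ℝ × ℝ, w.2 ∈ Ioo (0 : ℝ) 1 → fderiv ℝ A w (1, 0) + fderiv ℝ B w (0, 1) = 0)
    (hB0 : ∀ x, B (x, 0) = 0)
    (pos : ∀ w : ℝ × ℝ, w.2 ∈ Ioo (0 : ℝ) 1 → 0 < A w)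
    {m : ℝ} (hm : ∀ x, fluxBelow A (x, 1) = m) :
    ∃ σ : ℝ × ℝ → ℝ,
      (∀ w : ℝ × ℝ, w.2 ∈ Ioo 0 m → σ w ∈ Ioo (0 : ℝ) 1 ∧ fluxBelow A (w.1, σ w) = w.2) ∧
      ∀ w : ℝ × ℝ, w.2 ∈ Ioo 0 m →
        HasFDerivAt σ (planeForm (B (w.1, σ w) / A (w.1, σ w)) (1 / A (w.1, σ w))) w := by
  have hΨ := continuous_fluxBelow hA
  have hmono := fluxBelow_strictMonoOn hA pos
  have h0 : ∀ x, fluxBelow A (x, 0) = 0 := fun x => by simp [fluxBelow]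
  have hex : ∀ w : ℝ × ℝ, ∃ s, w.2 ∈ Ioo 0 m → s ∈ Ioo (0 : ℝ) 1 ∧ fluxBelow A (w.1, s) = w.2 := by
    intro w
    by_cases hw : w.2 ∈ Ioo 0 m
    · have hc : ContinuousOn (fun s => fluxBelow A (w.1, s)) (Icc 0 1) :=
        (hΨ.comp (by fun_prop : Continuous fun s : ℝ => (w.1, s))).continuousOn
      have := intermediate_value_Ioo zero_le_one hc
      simp only [h0, hm] at this
      obtain ⟨s, hs, hs'⟩ := this hw
      exact ⟨s, fun _ => ⟨hs, hs'⟩⟩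
    · exact ⟨0, fun h => absurd h hw⟩
  choose σ hσ using hex
  refine ⟨σ, hσ, fun w hw => ?_⟩
  have hopen : ∀ᶠ z : ℝ × ℝ in nhds w, z.2 ∈ Ioo 0 m :=
    (isOpen_Ioo.preimage continuous_snd).mem_nhds hw
  obtain ⟨hs, hsw⟩ := hσ w hw
  have hcont : ContinuousAt σ w := by
    rw [ContinuousAt, tendsto_order]
    constructor
    · intro r hr
      rcases le_or_gt r 0 with hr0 | hr0
      · filter_upwards [hopen] with z hz using hr0.trans_lt (hσ z hz).1.1
      · have hr1 : r ∈ Icc (0 : ℝ) 1 := ⟨hr0.le, (hr.trans hs.2).le⟩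
        have hlt : fluxBelow A (w.1, r) < w.2 := by
          rw [← hsw]; exact hmono w.1 hr1 (Ioo_subset_Icc_self hs) hr
        have : ∀ᶠ z : ℝ × ℝ in nhds w, fluxBelow A (z.1, r) < z.2 :=
          (isOpen_lt (by fun_prop) continuous_snd).mem_nhds hlt
        filter_upwards [hopen, this] with z hz hz'
        rw [← (hσ z hz).2] at hz'
        exact ((hmono z.1).lt_iff_lt hr1 (Ioo_subset_Icc_self (hσ z hz).1)).1 hz'
    · intro r hr
      rcases le_or_gt 1 r with hr0 | hr0
      · filter_upwards [hopen] with z hz using (hσ z hz).1.2.trans_le hr0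
      · have hr1 : r ∈ Icc (0 : ℝ) 1 := ⟨(hs.1.trans hr).le, hr0.le⟩
        have hlt : w.2 < fluxBelow A (w.1, r) := by
          rw [← hsw]; exact hmono w.1 (Ioo_subset_Icc_self hs) hr1 hr
        have : ∀ᶠ z : ℝ × ℝ in nhds w, z.2 < fluxBelow A (z.1, r) :=
          (isOpen_lt continuous_snd (by fun_prop)).mem_nhds hlt
        filter_upwards [hopen, this] with z hz hz'
        rw [← (hσ z hz).2] at hz'
        exact ((hmono z.1).lt_iff_lt (Ioo_subset_Icc_self (hσ z hz).1) hr1).1 hz'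
  have hA0 : A (w.1, σ w) ≠ 0 := (pos (w.1, σ w) hs).ne'
  have hd := hasFDerivAt_fluxBelow hA hB dA dB div hB0 (w := (w.1, σ w)) hs
  set α := A (w.1, σ w)
  set β := B (w.1, σ w)
  have hpair : HasFDerivAt (fun z : ℝ × ℝ => (z.1, fluxBelow A z))
      ((ContinuousLinearMap.fst ℝ ℝ ℝ).prod (planeForm (-β) α)) (w.1, σ w) :=
    hasFDerivAt_fst.prodMk hd
  have hg : HasFDerivAt (fun z : ℝ × ℝ => (z.1, σ z))
      ((ContinuousLinearMap.fst ℝ ℝ ℝ).prod (planeForm (β / α) (1 / α))) w := by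
    refine (hpair.of_comp_of_leftInverse
      (f'symm := (ContinuousLinearMap.fst ℝ ℝ ℝ).prod (planeForm (β / α) (1 / α)))
      (continuousAt_fst.prodMk hcont) (hasFDerivAt_id _) ?_ ?_).congr_fderiv
      (ContinuousLinearMap.comp_id _)
    · filter_upwards [hopen] with z hz
      exact Prod.ext rfl (hσ z hz).2
    · rintro ⟨s, t⟩
      refine Prod.ext rfl ?_
      simp
      field_simp
      ring
  exact hg.snd

/-- Divergence theorem on a rectangle inside the strip `ℝ × (0, m)`. -/
theorem integral_divergence_strip {f g S : ℝ × ℝ → ℝ} {m : ℝ}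
    (df : ∀ w : ℝ × ℝ, w.2 ∈ Ioo 0 m → DifferentiableAt ℝ f w)
    (dg : ∀ w : ℝ × ℝ, w.2 ∈ Ioo 0 m → DifferentiableAt ℝ g w)
    (div : ∀ w : ℝ × ℝ, w.2 ∈ Ioo 0 m → fderiv ℝ f w (1, 0) + fderiv ℝ g w (0, 1) = S w)
    (hS : ContinuousOn S {w | w.2 ∈ Ioo 0 m}) (x₀ x₁ : ℝ) {s t : ℝ} (hs : 0 < s) (hst : s ≤ t)
    (ht : t < m) :
    (∫ x in x₀..x₁, ∫ ψ in s..t, S (x, ψ)) =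
      (((∫ x in x₀..x₁, g (x, t)) - ∫ x in x₀..x₁, g (x, s)) + ∫ ψ in s..t, f (x₁, ψ)) -
        ∫ ψ in s..t, f (x₀, ψ) := by
  have hmem : ∀ ψ ∈ uIcc s t, ψ ∈ Ioo 0 m := by
    intro ψ hψ
    rw [uIcc_of_le hst] at hψ
    exact ⟨hs.trans_le hψ.1, hψ.2.trans_lt ht⟩
  have hsub : uIcc x₀ x₁ ×ˢ uIcc s t ⊆ {w : ℝ × ℝ | w.2 ∈ Ioo 0 m} := fun w hw => hmem _ hw.2
  have hsub' : ∀ w ∈ Ioo (min x₀ x₁) (max x₀ x₁) ×ˢ Ioo (min s t) (max s t), w.2 ∈ Ioo 0 m :=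
    fun w hw => hmem _ ⟨hw.2.1.le, hw.2.2.le⟩
  have key := integral2_divergence_prod_of_hasFDerivAt f g (fderiv ℝ f) (fderiv ℝ g) x₀ s x₁ t
    (fun w hw => (df w (hsub hw)).continuousAt.continuousWithinAt)
    (fun w hw => (dg w (hsub hw)).continuousAt.continuousWithinAt)
    (fun w hw => (df w (hsub' w hw)).hasFDerivAt)
    (fun w hw => (dg w (hsub' w hw)).hasFDerivAt)
    (((hS.mono hsub).congr fun w hw => div w (hsub hw)).integrableOn_compact
      (isCompact_uIcc.prod isCompact_uIcc))
  rw [← key]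
  refine intervalIntegral.integral_congr fun x _ => ?_
  exact intervalIntegral.integral_congr fun ψ hψ => (div (x, ψ) (hmem ψ hψ)).symm

/-- A flow in streamline coordinates `(x, ψ)` on the strip `ℝ × (0, m)`: `y` is the height of the
streamline, `(a, b)` the velocity and `P` the pressure. -/
structure IsStreamFlow (m : ℝ) (y a b P : ℝ × ℝ → ℝ) : Prop where
  hasFDerivAt_height : ∀ w : ℝ × ℝ, w.2 ∈ Ioo 0 m →
    HasFDerivAt y (planeForm (b w / a w) (1 / a w)) w
  pos : ∀ w : ℝ × ℝ, w.2 ∈ Ioo 0 m → 0 < a w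
  continuousAt : ∀ w : ℝ × ℝ, w.2 ∈ Ioo 0 m → ContinuousAt a w
  differentiableAt : ∀ w : ℝ × ℝ, w.2 ∈ Ioo 0 m → DifferentiableAt ℝ b w
  differentiableAt_pressure : ∀ w : ℝ × ℝ, w.2 ∈ Ioo 0 m → DifferentiableAt ℝ P w
  momentum : ∀ w : ℝ × ℝ, w.2 ∈ Ioo 0 m → fderiv ℝ b w (1, 0) + fderiv ℝ P w (0, 1) = 0
  bernoulli : ∃ G : ℝ → ℝ, ∀ w : ℝ × ℝ, w.2 ∈ Ioo 0 m → P w + (a w ^ 2 + b w ^ 2) / 2 = G w.2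

/-- Two flows in streamline coordinates with asymptotically equal velocities upstream have the
same Bernoulli function up to a constant. -/
theorem IsStreamFlow.exists_bernoulli_sub_eq {m M : ℝ} {y a b P y' a' b' P' : ℝ × ℝ → ℝ}
    (F : IsStreamFlow m y a b P) (F' : IsStreamFlow m y' a' b' P')
    (ha : ∀ w : ℝ × ℝ, w.2 ∈ Ioo 0 m → a w ≤ M)
    (ha' : ∀ w : ℝ × ℝ, w.2 ∈ Ioo 0 m → a' w ≤ M)
    (hlim : ∀ ε > 0, ∃ X : ℝ, ∀ x ≤ X, ∀ ψ ∈ Ioo 0 m,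
      |a (x, ψ) - a' (x, ψ)| ≤ ε ∧ |b (x, ψ)| ≤ ε ∧ |b' (x, ψ)| ≤ ε) :
    ∃ k : ℝ, ∀ w : ℝ × ℝ, w.2 ∈ Ioo 0 m →
      P w - P' w = k - ((a w ^ 2 + b w ^ 2) - (a' w ^ 2 + b' w ^ 2)) / 2 := by
  obtain ⟨G, hG⟩ := F.bernoulli
  obtain ⟨G', hG'⟩ := F'.bernoulli
  suffices h : ∀ s t, 0 < s → s ≤ t → t < m → G t - G' t = G s - G' s by
    refine ⟨G (m / 2) - G' (m / 2), fun w hw => ?_⟩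
    have : G w.2 - G' w.2 = G (m / 2) - G' (m / 2) := by
      have := hw.1.trans hw.2
      rcases le_total w.2 (m / 2) with h' | h'
      · exact (h _ _ hw.1 h' (by linarith)).symm
      · exact h _ _ (by linarith) h' hw.2
    linarith [hG w hw, hG' w hw]
  intro s t hs hst ht
  have hm : 0 < m := by linarith
  have hM : 0 < M := (F.pos (0, s) ⟨hs, by simpa using by linarith⟩).trans_le
    (ha (0, s) ⟨hs, by simpa using by linarith⟩)
  suffices h : ∀ ε > 0, ε ≤ M → |(G t - G' t) - (G s - G' s)| ≤ ε * (4 * M + 4 * m) by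
    by_contra hne
    have hpos : 0 < |(G t - G' t) - (G s - G' s)| := abs_pos.2 (sub_ne_zero.2 hne)
    set c := |(G t - G' t) - (G s - G' s)|
    have h1 := h (min M (c / (8 * M + 8 * m))) (lt_min hM (by positivity)) (min_le_left _ _)
    have h2 : min M (c / (8 * M + 8 * m)) * (4 * M + 4 * m) ≤
        c / (8 * M + 8 * m) * (4 * M + 4 * m) := by gcongr; exact min_le_right _ _
    have h3 : c / (8 * M + 8 * m) * (4 * M + 4 * m) = c / 2 := by field_simp; ring
    linarith
  intro ε hε hεM
  obtain ⟨X, hX⟩ := hlim ε hε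
  have hS : ∀ w : ℝ × ℝ, w.2 ∈ Ioo 0 m →
      fderiv ℝ (fun z => b z - b' z) w (1, 0) + fderiv ℝ (fun z => P z - P' z) w (0, 1) = 0 := by
    intro w hw
    rw [fderiv_fun_sub (F.differentiableAt w hw) (F'.differentiableAt w hw),
      fderiv_fun_sub (F.differentiableAt_pressure w hw) (F'.differentiableAt_pressure w hw)]
    have h1 := F.momentum w hw
    have h2 := F'.momentum w hw
    simp only [sub_apply]
    linarith
  have key := integral_divergence_strip (S := fun _ => 0)
    (fun w hw => (F.differentiableAt w hw).sub (F'.differentiableAt w hw))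
    (fun w hw => (F.differentiableAt_pressure w hw).sub (F'.differentiableAt_pressure w hw))
    hS continuousOn_const (X - 1) X hs hst ht
  simp only [intervalIntegral.integral_zero, Pi.sub_apply] at key
  have hb : ∀ x ≤ X, |∫ ψ in s..t, b (x, ψ) - b' (x, ψ)| ≤ 2 * ε * m := by
    intro x hx
    have h1 : ∀ ψ ∈ uIoc s t, ‖b (x, ψ) - b' (x, ψ)‖ ≤ 2 * ε := by
      intro ψ hψ
      rw [uIoc_of_le hst] at hψ
      obtain ⟨-, h2, h3⟩ := hX x hx ψ ⟨hs.trans hψ.1, hψ.2.trans_lt ht⟩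
      rw [Real.norm_eq_abs]
      linarith [abs_sub (b (x, ψ)) (b' (x, ψ))]
    have h2 := intervalIntegral.norm_integral_le_of_norm_le_const h1
    rw [Real.norm_eq_abs, abs_of_nonneg (by linarith : 0 ≤ t - s)] at h2
    nlinarith
  have hP : ∀ ψ ∈ Ioo 0 m,
      |(∫ x in (X - 1)..X, P (x, ψ) - P' (x, ψ)) - (G ψ - G' ψ)| ≤ 2 * M * ε := by
    intro ψ hψ
    have hbound : IntervalIntegrable (fun x => P (x, ψ) - P' (x, ψ)) volume (X - 1) X := by
      refine ContinuousOn.intervalIntegrable fun x _ => ContinuousAt.continuousWithinAt ?_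
      have h1 : ContinuousAt (fun x : ℝ => (x, ψ)) x := by fun_prop
      exact (ContinuousAt.comp (g := P) (f := fun x : ℝ => (x, ψ)) (F.differentiableAt_pressure (x, ψ) hψ).continuousAt
        h1).sub (ContinuousAt.comp (g := P') (f := fun x : ℝ => (x, ψ))
          (F'.differentiableAt_pressure (x, ψ) hψ).continuousAt h1)
    have h0 : (∫ x in (X - 1)..X, P (x, ψ) - P' (x, ψ)) - (G ψ - G' ψ) =
        ∫ x in (X - 1)..X, (P (x, ψ) - P' (x, ψ)) - (G ψ - G' ψ) := by
      rw [intervalIntegral.integral_sub hbound (by simp)]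
      simp
    rw [h0]
    have h1 : ∀ x ∈ uIoc (X - 1) X, ‖(P (x, ψ) - P' (x, ψ)) - (G ψ - G' ψ)‖ ≤ 2 * M * ε := by
      intro x hx
      rw [uIoc_of_le (by linarith)] at hx
      obtain ⟨h1, h2, h3⟩ := hX x hx.2 ψ hψ
      have e1 := hG (x, ψ) hψ
      have e2 := hG' (x, ψ) hψ
      have p1 := F.pos (x, ψ) hψ
      have p2 := F'.pos (x, ψ) hψ
      have l1 := ha (x, ψ) hψ
      have l2 := ha' (x, ψ) hψ
      have e3 : (P (x, ψ) - P' (x, ψ)) - (G ψ - G' ψ) =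
          -((a (x, ψ) - a' (x, ψ)) * (a (x, ψ) + a' (x, ψ)) + b (x, ψ) ^ 2 - b' (x, ψ) ^ 2) / 2 := by
        simp only at e1 e2
        rw [← e1, ← e2]; ring
      rw [e3, Real.norm_eq_abs]
      have q1 : b (x, ψ) ^ 2 ≤ ε * M := by rw [← sq_abs]; nlinarith [abs_nonneg (b (x, ψ))]
      have q2 : b' (x, ψ) ^ 2 ≤ ε * M := by rw [← sq_abs]; nlinarith [abs_nonneg (b' (x, ψ))]
      have q3 : |(a (x, ψ) - a' (x, ψ)) * (a (x, ψ) + a' (x, ψ))| ≤ ε * (2 * M) := by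
        rw [abs_mul, abs_of_pos (add_pos p1 p2)]
        gcongr
        linarith
      have q4 := abs_le.1 q3
      rw [abs_le]
      constructor <;> nlinarith [sq_nonneg (b (x, ψ)), sq_nonneg (b' (x, ψ))]
    have h2 := intervalIntegral.norm_integral_le_of_norm_le_const h1
    simpa using h2
  have a1 := abs_le.1 (hb X le_rfl)
  have a2 := abs_le.1 (hb (X - 1) (by linarith))
  have a3 := abs_le.1 (hP s ⟨hs, by linarith⟩)
  have a4 := abs_le.1 (hP t ⟨by linarith, ht⟩)
  rw [abs_le]
  constructor <;> nlinarith

theorem continuous_integral_strip {S : ℝ × ℝ → ℝ} {m s t : ℝ}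
    (hS : ContinuousOn S {w | w.2 ∈ Ioo 0 m}) (hs : 0 < s) (hst : s ≤ t) (ht : t < m) :
    Continuous fun x => ∫ ψ in s..t, S (x, ψ) := by
  have h1 : (fun x => ∫ ψ in s..t, S (x, ψ)) =
      fun x => ∫ ψ in s..t, S (x, max s (min ψ t)) := by
    funext x
    refine intervalIntegral.integral_congr fun ψ hψ => ?_
    rw [uIcc_of_le hst] at hψ
    simp only [min_eq_left hψ.2, max_eq_right hψ.1]
  rw [h1]
  refine intervalIntegral.continuous_parametric_intervalIntegral_of_continuous'
    (f := fun x ψ => S (x, max s (min ψ t))) ?_ s t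
  refine hS.comp_continuous (f := fun w : ℝ × ℝ => (w.1, max s (min w.2 t))) (by fun_prop) ?_
  intro w
  exact ⟨hs.trans_le (le_max_left _ _), (max_le hst (min_le_right _ _)).trans_lt ht⟩

/-- A nonnegative density on the strip vanishes if its energy in long boxes is bounded and is
controlled by the energy on the vertical sides of the box. -/
theorem eq_zero_of_energy_bounds {S : ℝ × ℝ → ℝ} {m N C : ℝ}
    (hS : ContinuousOn S {w | w.2 ∈ Ioo 0 m}) (S0 : ∀ w : ℝ × ℝ, w.2 ∈ Ioo 0 m → 0 ≤ S w)
    (hN : 0 ≤ N) (hC : 0 < C)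
    (hE : ∀ X₁ > 0, ∀ η > 0, ∃ δ₀ > 0, ∀ δ, 0 < δ → δ < δ₀ → δ < m / 2 →
      ∀ X, 0 ≤ X → X ≤ X₁ →
        (∫ x in (-X)..X, ∫ ψ in δ..(m - δ), S (x, ψ)) ≤ η + N ∧
        ∀ l > 0, (∫ x in (-X)..X, ∫ ψ in δ..(m - δ), S (x, ψ)) ≤
          η + C * (l + ((∫ ψ in δ..(m - δ), S (X, ψ)) + ∫ ψ in δ..(m - δ), S (-X, ψ)) / l)) :
    ∀ w : ℝ × ℝ, w.2 ∈ Ioo 0 m → S w = 0 := by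
  rintro ⟨x₀, ψ₀⟩ hψ
  simp only at hψ
  by_contra hne
  have hpos : 0 < S (x₀, ψ₀) := lt_of_le_of_ne (S0 _ hψ) (Ne.symm hne)
  have hcS : ∀ x, ∀ δ > 0, ContinuousOn (fun ψ => S (x, ψ)) (Icc δ (m - δ)) := by
    intro x δ hδ
    refine hS.comp (f := fun ψ => (x, ψ)) (by fun_prop) fun ψ h => ?_
    exact ⟨hδ.trans_le h.1, h.2.trans_lt (by linarith)⟩
  have hEc : ∀ δ > 0, δ < m / 2 → Continuous fun x => ∫ ψ in δ..(m - δ), S (x, ψ) :=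
    fun δ h h' => continuous_integral_strip hS h (by linarith) (by linarith)
  have hE0 : ∀ δ > 0, δ < m / 2 → ∀ x, 0 ≤ ∫ ψ in δ..(m - δ), S (x, ψ) := by
    intro δ h h' x
    refine intervalIntegral.integral_nonneg (by linarith) fun ψ hψ' => S0 _ ?_
    exact ⟨h.trans_le hψ'.1, hψ'.2.trans_lt (by linarith)⟩
  obtain ⟨δ₁, hδ₁, hδ₁a, hδ₁b⟩ : ∃ δ₁ > 0, δ₁ < ψ₀ ∧ δ₁ < m - ψ₀ := by
    obtain ⟨d, hd, hd'⟩ := exists_between (lt_min hψ.1 (sub_pos.2 hψ.2))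
    exact ⟨d, hd, lt_min_iff.1 hd'⟩
  have hδ₁m : δ₁ < m / 2 := by linarith
  set X₀ := |x₀| + 1 with hX₀
  have hX₀p : 0 < X₀ := by positivity
  have hxX := abs_le.1 (le_refl |x₀|)
  have hc : 0 < ∫ x in (-X₀)..X₀, ∫ ψ in δ₁..(m - δ₁), S (x, ψ) := by
    refine intervalIntegral.integral_pos (by linarith) (hEc δ₁ hδ₁ hδ₁m).continuousOn
      (fun x _ => hE0 δ₁ hδ₁ hδ₁m x) ⟨x₀, ⟨by linarith, by linarith⟩, ?_⟩
    refine intervalIntegral.integral_pos (by linarith) (hcS x₀ δ₁ hδ₁) (fun ψ h => S0 _ ?_)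
      ⟨ψ₀, ⟨by linarith, by linarith⟩, hpos⟩
    exact ⟨hδ₁.trans h.1, h.2.trans_lt (by linarith)⟩
  set c := ∫ x in (-X₀)..X₀, ∫ ψ in δ₁..(m - δ₁), S (x, ψ)
  set l := c / (4 * C) with hl
  have hlp : 0 < l := by positivity
  set κ := c * l / (4 * C) with hκ
  have hκp : 0 < κ := by positivity
  set X₁ := X₀ + (c / 2 + N) / κ + 1 with hX₁
  have hX₁₀ : X₀ < X₁ := by
    have : 0 ≤ (c / 2 + N) / κ := by positivity
    linarith
  obtain ⟨δ₀, hδ₀, hδ⟩ := hE X₁ (by linarith) (c / 2) (by linarith)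
  obtain ⟨δ, hδp, hδlt⟩ := exists_between (lt_min hδ₀ hδ₁)
  obtain ⟨hδlt₀, hδlt₁⟩ := lt_min_iff.1 hδlt
  have hδm : δ < m / 2 := by linarith
  specialize hδ δ hδp hδlt₀ hδm
  set E := fun x => ∫ ψ in δ..(m - δ), S (x, ψ) with hEdef
  have Ec : Continuous E := hEc δ hδp hδm
  have E0 : ∀ x, 0 ≤ E x := hE0 δ hδp hδm
  have hlow : ∀ X, X₀ ≤ X → c ≤ ∫ x in (-X)..X, E x := by
    intro X hX
    calc c ≤ ∫ x in (-X₀)..X₀, E x := by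
          refine intervalIntegral.integral_mono_on (by linarith)
            ((hEc δ₁ hδ₁ hδ₁m).intervalIntegrable _ _) (Ec.intervalIntegrable _ _) fun x _ => ?_
          refine intervalIntegral.integral_mono_interval hδlt₁.le (by linarith) (by linarith) ?_ ?_
          · refine (ae_restrict_iff' measurableSet_Ioc).2 (.of_forall fun ψ h => S0 _ ?_)
            exact ⟨hδp.trans h.1, h.2.trans_lt (by linarith)⟩
          · refine ContinuousOn.intervalIntegrable ?_
            rw [uIcc_of_le (by linarith)]
            exact hcS x δ hδp
      _ ≤ ∫ x in (-X)..X, E x :=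
          intervalIntegral.integral_mono_interval (by linarith) (by linarith) hX
            (.of_forall fun x => E0 x) (Ec.intervalIntegrable _ _)
  have hside : ∀ X ∈ Icc X₀ X₁, κ ≤ E X + E (-X) := by
    intro X hX
    have h1 := (hδ X (by linarith [hX.1]) hX.2).2 l hlp
    have h2 := hlow X hX.1
    have h3 : c ≤ c / 2 + C * (l + (E X + E (-X)) / l) := h2.trans h1
    have h4 : C * l = c / 4 := by rw [hl]; field_simp
    have h5 : c / 4 ≤ C * ((E X + E (-X)) / l) := by linarith
    have h6 : C * ((E X + E (-X)) / l) = (E X + E (-X)) * (C / l) := by ring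
    rw [h6] at h5
    have h7 : κ = c / 4 / (C / l) := by rw [hκ]; field_simp
    rw [h7, div_le_iff₀ (by positivity)]
    exact h5
  have hup := (hδ X₁ (by linarith) le_rfl).1
  have hEn : Continuous fun x => E (-x) := by fun_prop
  have hbound : κ * (X₁ - X₀) ≤ (∫ x in X₀..X₁, E x) + ∫ x in X₀..X₁, E (-x) := by
    rw [← intervalIntegral.integral_add (Ec.intervalIntegrable _ _) (hEn.intervalIntegrable _ _)]
    have := intervalIntegral.integral_mono_on (μ := volume) hX₁₀.le
      (intervalIntegrable_const (c := κ)) ((Ec.add hEn).intervalIntegrable _ _) hside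
    simp only [intervalIntegral.integral_const, smul_eq_mul, Pi.add_apply] at this
    linarith [mul_comm κ (X₁ - X₀)]
  rw [intervalIntegral.integral_comp_neg] at hbound
  have hsplit : (∫ x in (-X₁)..X₁, E x) =
      (∫ x in (-X₁)..(-X₀), E x) + (∫ x in (-X₀)..X₀, E x) + ∫ x in X₀..X₁, E x := by
    rw [intervalIntegral.integral_add_adjacent_intervals,
      intervalIntegral.integral_add_adjacent_intervals] <;> exact Ec.intervalIntegrable _ _
  have h9 : 0 ≤ ∫ x in (-X₀)..X₀, E x :=
    intervalIntegral.integral_nonneg (by linarith) fun x _ => E0 x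
  have h10 : κ * (X₁ - X₀) = (c / 2 + N) + κ := by rw [hX₁]; field_simp; ring
  have h11 : (∫ x in (-X₁)..X₁, E x) ≤ c / 2 + N := hup
  linarith

/-- Twice the energy density comparing two flows in streamline coordinates. -/
def energyGap (a b a' b' : ℝ × ℝ → ℝ) (w : ℝ × ℝ) : ℝ :=
  ((a w - a' w) ^ 2 + (b w - b' w) ^ 2) / 2 * (1 / a w + 1 / a' w)

section

variable {m k : ℝ} {y a b P y' a' b' P' : ℝ × ℝ → ℝ}

theorem IsStreamFlow.continuousOn_energyGap
    (F : IsStreamFlow m y a b P) (F' : IsStreamFlow m y' a' b' P') :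
    ContinuousOn (energyGap a b a' b') {w | w.2 ∈ Ioo 0 m} := by
  intro w hw
  apply ContinuousAt.continuousWithinAt
  have h1 := F.continuousAt w hw
  have h2 := F'.continuousAt w hw
  have h3 := (F.differentiableAt w hw).continuousAt
  have h4 := (F'.differentiableAt w hw).continuousAt
  have h5 := (F.pos w hw).ne'
  have h6 := (F'.pos w hw).ne'
  unfold energyGap
  fun_prop (disch := assumption)

/-- The energy identity: the energy gap is the divergence of an explicit field. -/
theorem IsStreamFlow.integral_energyGap
    (F : IsStreamFlow m y a b P) (F' : IsStreamFlow m y' a' b' P')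
    (hk : ∀ w : ℝ × ℝ, w.2 ∈ Ioo 0 m →
      P w - P' w = k - ((a w ^ 2 + b w ^ 2) - (a' w ^ 2 + b' w ^ 2)) / 2)
    (x₀ x₁ : ℝ) {s t : ℝ} (hs : 0 < s) (hst : s ≤ t) (ht : t < m) :
    (∫ x in x₀..x₁, ∫ ψ in s..t, energyGap a b a' b' (x, ψ)) =
      (((∫ x in x₀..x₁, (P (x, t) - P' (x, t) - k) * (y (x, t) - y' (x, t))) -
        ∫ x in x₀..x₁, (P (x, s) - P' (x, s) - k) * (y (x, s) - y' (x, s))) +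
        ∫ ψ in s..t, (b (x₁, ψ) - b' (x₁, ψ)) * (y (x₁, ψ) - y' (x₁, ψ))) -
        ∫ ψ in s..t, (b (x₀, ψ) - b' (x₀, ψ)) * (y (x₀, ψ) - y' (x₀, ψ)) := by
  have dy := fun w hw =>
    (F.hasFDerivAt_height w hw).sub (F'.hasFDerivAt_height w hw)
  have db := fun w hw => (F.differentiableAt w hw).hasFDerivAt.sub
    (F'.differentiableAt w hw).hasFDerivAt
  have dP := fun w hw => ((F.differentiableAt_pressure w hw).hasFDerivAt.sub
    (F'.differentiableAt_pressure w hw).hasFDerivAt).sub_const k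
  have df := fun w hw => (db w hw).mul (dy w hw)
  have dg := fun w hw => (dP w hw).mul (dy w hw)
  refine integral_divergence_strip
    (f := fun w => (b w - b' w) * (y w - y' w)) (g := fun w => (P w - P' w - k) * (y w - y' w))
    (fun w hw => (df w hw).differentiableAt) (fun w hw => (dg w hw).differentiableAt) ?_
    (F.continuousOn_energyGap F') x₀ x₁ hs hst ht
  intro w hw
  have e1 := (df w hw).fderiv
  have e2 := (dg w hw).fderiv
  have m1 := F.momentum w hw
  have m2 := F'.momentum w hw
  have h5 := (F.pos w hw).ne'
  have h6 := (F'.pos w hw).ne'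
  have e3 : fderiv ℝ (fun w => (b w - b' w) * (y w - y' w)) w = _ := e1
  have e4 : fderiv ℝ (fun w => (P w - P' w - k) * (y w - y' w)) w = _ := e2
  rw [e3, e4]
  simp only [add_apply, smul_apply, sub_apply, planeForm_apply, smul_eq_mul, Pi.sub_apply, hk w hw]
  have e5 : ∀ z : ℝ, z * fderiv ℝ b w (1, 0) + z * fderiv ℝ P w (0, 1) = 0 :=
    fun z => by rw [← mul_add, m1, mul_zero]
  have e6 : ∀ z : ℝ, z * fderiv ℝ b' w (1, 0) + z * fderiv ℝ P' w (0, 1) = 0 :=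
    fun z => by rw [← mul_add, m2, mul_zero]
  have e7 : energyGap a b a' b' w = (b w - b' w) * (b w / a w - b' w / a' w) +
      (-((a w ^ 2 + b w ^ 2) - (a' w ^ 2 + b' w ^ 2)) / 2) * (1 / a w - 1 / a' w) := by
    unfold energyGap
    field_simp
    ring
  rw [e7]
  linear_combination e5 (y w - y' w) - e6 (y w - y' w)

/-- Uniqueness in streamline coordinates. -/
theorem IsStreamFlow.energyGap_eq_zero {M W : ℝ}
    (F : IsStreamFlow m y a b P) (F' : IsStreamFlow m y' a' b' P')
    (hk : ∀ w : ℝ × ℝ, w.2 ∈ Ioo 0 m →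
      P w - P' w = k - ((a w ^ 2 + b w ^ 2) - (a' w ^ 2 + b' w ^ 2)) / 2)
    (hm : 0 < m) (hM : 0 < M) (hW : 0 < W)
    (ha : ∀ w : ℝ × ℝ, w.2 ∈ Ioo 0 m → a w ≤ M ∧ |b w| ≤ M)
    (ha' : ∀ w : ℝ × ℝ, w.2 ∈ Ioo 0 m → a' w ≤ M ∧ |b' w| ≤ M)
    (hy : ∀ w : ℝ × ℝ, w.2 ∈ Ioo 0 m → |y w - y' w| ≤ W)
    (hbd : ∀ X > 0, ∀ ε > 0, ∃ δ₀ > 0, ∀ δ, 0 < δ → δ < δ₀ → δ < m / 2 → ∀ x, |x| ≤ X →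
      |y (x, δ) - y' (x, δ)| ≤ ε ∧ |y (x, m - δ) - y' (x, m - δ)| ≤ ε) :
    ∀ w : ℝ × ℝ, w.2 ∈ Ioo 0 m → energyGap a b a' b' w = 0 := by
  have hcS := F.continuousOn_energyGap F'
  have hgapb : ∀ w : ℝ × ℝ, w.2 ∈ Ioo 0 m → (b w - b' w) ^ 2 ≤ M * energyGap a b a' b' w := by
    intro w hw
    have p1 := F.pos w hw
    have p2 := F'.pos w hw
    have r1 : 1 / M ≤ 1 / a w := one_div_le_one_div_of_le p1 (ha w hw).1
    have r2 : 1 / M ≤ 1 / a' w := one_div_le_one_div_of_le p2 (ha' w hw).1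
    have r3 : ((a w - a' w) ^ 2 + (b w - b' w) ^ 2) / 2 * (1 / M + 1 / M) ≤
        energyGap a b a' b' w := by
      unfold energyGap
      gcongr
    have r4 : M * (((a w - a' w) ^ 2 + (b w - b' w) ^ 2) / 2 * (1 / M + 1 / M)) =
        (a w - a' w) ^ 2 + (b w - b' w) ^ 2 := by field_simp; ring
    nlinarith [sq_nonneg (a w - a' w), mul_le_mul_of_nonneg_left r3 hM.le]
  refine eq_zero_of_energy_bounds (N := 4 * M * W * m) (C := W * m + W * M) hcS ?_ (by positivity)
    (by positivity) ?_
  · intro w hw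
    have p1 := F.pos w hw
    have p2 := F'.pos w hw
    unfold energyGap
    positivity
  intro X₁ hX₁ η hη
  obtain ⟨δ₀, hδ₀, hδ⟩ := hbd X₁ hX₁ (η / (4 * M ^ 2 * X₁)) (by positivity)
  refine ⟨δ₀, hδ₀, fun δ hδp hδlt hδm X hX0 hX => ?_⟩
  have hst : δ ≤ m - δ := by linarith
  have hmem : ∀ ψ ∈ uIoc δ (m - δ), ψ ∈ Ioo 0 m := by
    intro ψ h
    rw [uIoc_of_le hst] at h
    exact ⟨hδp.trans h.1, h.2.trans_lt (by linarith)⟩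
  have hg : ∀ ψ ∈ Ioo 0 m, (∀ x, |x| ≤ X₁ → |y (x, ψ) - y' (x, ψ)| ≤ η / (4 * M ^ 2 * X₁)) →
      |∫ x in (-X)..X, (P (x, ψ) - P' (x, ψ) - k) * (y (x, ψ) - y' (x, ψ))| ≤ η / 2 := by
    intro ψ hψ hyψ
    have h1 : ∀ x ∈ uIoc (-X) X,
        ‖(P (x, ψ) - P' (x, ψ) - k) * (y (x, ψ) - y' (x, ψ))‖ ≤
          M ^ 2 * (η / (4 * M ^ 2 * X₁)) := by
      intro x hx
      rw [uIoc_of_le (by linarith)] at hx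
      have hx' : |x| ≤ X₁ := abs_le.2 ⟨by linarith [hx.1], by linarith [hx.2]⟩
      rw [norm_mul, Real.norm_eq_abs, Real.norm_eq_abs]
      refine mul_le_mul ?_ (hyψ x hx') (abs_nonneg _) (by positivity)
      have e := hk (x, ψ) hψ
      obtain ⟨i1, i2⟩ := ha (x, ψ) hψ
      obtain ⟨i3, i4⟩ := ha' (x, ψ) hψ
      have p1 := F.pos (x, ψ) hψ
      have p2 := F'.pos (x, ψ) hψ
      have j1 : a (x, ψ) ^ 2 ≤ M ^ 2 := by gcongr
      have j2 : a' (x, ψ) ^ 2 ≤ M ^ 2 := by gcongr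
      have j3 : b (x, ψ) ^ 2 ≤ M ^ 2 := sq_le_sq' (by linarith [abs_le.1 i2]) (abs_le.1 i2).2
      have j4 : b' (x, ψ) ^ 2 ≤ M ^ 2 := sq_le_sq' (by linarith [abs_le.1 i4]) (abs_le.1 i4).2
      rw [e, abs_le]
      constructor <;>
        linarith [sq_nonneg (a (x, ψ)), sq_nonneg (a' (x, ψ)), sq_nonneg (b (x, ψ)),
          sq_nonneg (b' (x, ψ))]
    have h2 := intervalIntegral.norm_integral_le_of_norm_le_const h1
    rw [Real.norm_eq_abs, abs_of_nonneg (by linarith : 0 ≤ X - -X)] at h2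
    refine h2.trans ?_
    calc M ^ 2 * (η / (4 * M ^ 2 * X₁)) * (X - -X)
        ≤ M ^ 2 * (η / (4 * M ^ 2 * X₁)) * (2 * X₁) := by gcongr; linarith
      _ = η / 2 := by field_simp; ring
  have hf : ∀ x, |∫ ψ in δ..(m - δ), (b (x, ψ) - b' (x, ψ)) * (y (x, ψ) - y' (x, ψ))| ≤
      2 * M * W * m := by
    intro x
    have h1 : ∀ ψ ∈ uIoc δ (m - δ),
        ‖(b (x, ψ) - b' (x, ψ)) * (y (x, ψ) - y' (x, ψ))‖ ≤ 2 * M * W := by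
      intro ψ h
      rw [norm_mul, Real.norm_eq_abs, Real.norm_eq_abs]
      refine mul_le_mul ?_ (hy (x, ψ) (hmem ψ h)) (abs_nonneg _) (by positivity)
      linarith [abs_sub (b (x, ψ)) (b' (x, ψ)), (ha (x, ψ) (hmem ψ h)).2,
        (ha' (x, ψ) (hmem ψ h)).2]
    have h2 := intervalIntegral.norm_integral_le_of_norm_le_const h1
    rw [Real.norm_eq_abs, abs_of_nonneg (by linarith : 0 ≤ m - δ - δ)] at h2
    refine h2.trans ?_
    gcongr
    linarith
  have hf' : ∀ l > 0, ∀ x,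
      |∫ ψ in δ..(m - δ), (b (x, ψ) - b' (x, ψ)) * (y (x, ψ) - y' (x, ψ))| ≤
        W * m / 2 * l + W * M / 2 * ((∫ ψ in δ..(m - δ), energyGap a b a' b' (x, ψ)) / l) := by
    intro l hl x
    have hci : IntervalIntegrable (fun ψ => energyGap a b a' b' (x, ψ)) volume δ (m - δ) := by
      refine ContinuousOn.intervalIntegrable (hcS.comp (f := fun ψ => (x, ψ)) (by fun_prop) ?_)
      intro ψ h
      rw [uIcc_of_le hst] at h
      exact ⟨hδp.trans_le h.1, h.2.trans_lt (by linarith)⟩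
    have h1 : ∀ ψ ∈ Ioc δ (m - δ),
        ‖(b (x, ψ) - b' (x, ψ)) * (y (x, ψ) - y' (x, ψ))‖ ≤
          W * l / 2 + W * M / (2 * l) * energyGap a b a' b' (x, ψ) := by
      intro ψ h
      have hψ : ψ ∈ Ioo 0 m := ⟨hδp.trans h.1, h.2.trans_lt (by linarith)⟩
      rw [norm_mul, Real.norm_eq_abs, Real.norm_eq_abs]
      have j1 := hgapb (x, ψ) hψ
      have j2 : |b (x, ψ) - b' (x, ψ)| ≤ l / 2 + M * energyGap a b a' b' (x, ψ) / (2 * l) := by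
        rw [← sq_abs] at j1
        have j3 : 2 * l * |b (x, ψ) - b' (x, ψ)| ≤ l ^ 2 + M * energyGap a b a' b' (x, ψ) := by
          nlinarith [sq_nonneg (l - |b (x, ψ) - b' (x, ψ)|)]
        have j4 : l / 2 + M * energyGap a b a' b' (x, ψ) / (2 * l) =
            (l ^ 2 + M * energyGap a b a' b' (x, ψ)) / (2 * l) := by field_simp
        rw [j4, le_div_iff₀ (by positivity)]
        linarith
      have j5 : 0 ≤ l / 2 + M * energyGap a b a' b' (x, ψ) / (2 * l) := (abs_nonneg _).trans j2
      refine (mul_le_mul j2 (hy (x, ψ) hψ) (abs_nonneg _) j5).trans (le_of_eq ?_)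
      ring
    have h2 := intervalIntegral.norm_integral_le_of_norm_le hst
      (.of_forall h1) (intervalIntegrable_const.add (hci.const_mul _))
    rw [intervalIntegral.integral_add intervalIntegrable_const (hci.const_mul _),
      intervalIntegral.integral_const_mul, intervalIntegral.integral_const, smul_eq_mul,
      Real.norm_eq_abs] at h2
    refine h2.trans ?_
    have j6 : (m - δ - δ) * (W * l / 2) ≤ m * (W * l / 2) := by gcongr; linarith
    have j7 : W * M / (2 * l) * (∫ ψ in δ..(m - δ), energyGap a b a' b' (x, ψ)) =
        W * M / 2 * ((∫ ψ in δ..(m - δ), energyGap a b a' b' (x, ψ)) / l) := by field_simp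
    linarith
  have key := F.integral_energyGap F' hk (-X) X hδp hst (by linarith)
  have g1 := abs_le.1 (hg δ ⟨hδp, by linarith⟩ fun x hx => (hδ δ hδp hδlt hδm x hx).1)
  have g2 := abs_le.1 (hg (m - δ) ⟨by linarith, by linarith⟩
    fun x hx => (hδ δ hδp hδlt hδm x hx).2)
  refine ⟨?_, fun l hl => ?_⟩
  · have f1 := abs_le.1 (hf X)
    have f2 := abs_le.1 (hf (-X))
    linarith
  · have f1 := abs_le.1 (hf' l hl X)
    have f2 := abs_le.1 (hf' l hl (-X))
    have hE0 : ∀ x, 0 ≤ ∫ ψ in δ..(m - δ), energyGap a b a' b' (x, ψ) := by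
      intro x
      refine intervalIntegral.integral_nonneg hst fun ψ h => ?_
      have hψ : ψ ∈ Ioo 0 m := ⟨hδp.trans_le h.1, h.2.trans_lt (by linarith)⟩
      have p1 := F.pos (x, ψ) hψ
      have p2 := F'.pos (x, ψ) hψ
      unfold energyGap
      positivity
    set E₁ := ∫ ψ in δ..(m - δ), energyGap a b a' b' (X, ψ)
    set E₂ := ∫ ψ in δ..(m - δ), energyGap a b a' b' (-X, ψ)
    have h1 : 0 ≤ E₁ / l := div_nonneg (hE0 X) hl.le
    have h2 : 0 ≤ E₂ / l := div_nonneg (hE0 (-X)) hl.le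
    rw [add_div]
    have h3 : 0 ≤ W * m * (E₁ / l + E₂ / l) := by positivity
    have h4 : 0 ≤ W * M * (E₁ / l + E₂ / l) := by positivity
    have h5 : 0 ≤ W * M * l := by positivity
    nlinarith

end

theorem hasFDerivAt_planeForm_pd {φ : ℝ × ℝ → ℝ} {w : ℝ × ℝ} (h : DifferentiableAt ℝ φ w) :
    HasFDerivAt φ (planeForm (pd1 φ w) (pd2 φ w)) w := by
  refine h.hasFDerivAt.congr_fderiv ?_
  ext <;> simp [pd1, pd2]

/-- Chain rule along the map `(x, t) ↦ (x, y (x, t))`. -/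
theorem hasFDerivAt_comp_height {φ y : ℝ × ℝ → ℝ} {w : ℝ × ℝ} {α β : ℝ}
    (hφ : DifferentiableAt ℝ φ (w.1, y w)) (hy : HasFDerivAt y (planeForm α β) w) :
    HasFDerivAt (fun z : ℝ × ℝ => φ (z.1, y z))
      (planeForm (pd1 φ (w.1, y w) + pd2 φ (w.1, y w) * α) (pd2 φ (w.1, y w) * β)) w := by
  have h1 : HasFDerivAt (fun z : ℝ × ℝ => (z.1, y z))
      ((ContinuousLinearMap.fst ℝ ℝ ℝ).prod (planeForm α β)) w := hasFDerivAt_fst.prodMk hy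
  have h2 := HasFDerivAt.comp (g := φ) (f := fun z : ℝ × ℝ => (z.1, y z)) w
    (hasFDerivAt_planeForm_pd hφ) h1
  refine h2.congr_fderiv ?_
  ext <;> simp

/-- The open region between the graphs of `h₀` and `h₁`. -/
def nozzle (h₀ h₁ : ℝ → ℝ) : Set (ℝ × ℝ) := {x | h₀ x.1 < x.2 ∧ x.2 < h₁ x.1}

/-- The height of the point at relative level `w.2` over `w.1`. -/
def levelHeight (h₀ h₁ : ℝ → ℝ) (w : ℝ × ℝ) : ℝ := h₀ w.1 + w.2 * (h₁ w.1 - h₀ w.1)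

/-- Projection of the real line to the unit interval. -/
def clampUnit (s : ℝ) : ℝ := max 0 (min s 1)

theorem clampUnit_mem (s : ℝ) : clampUnit s ∈ Icc (0 : ℝ) 1 :=
  ⟨le_max_left _ _, max_le zero_le_one (min_le_right _ _)⟩

theorem clampUnit_of_mem {s : ℝ} (hs : s ∈ Icc (0 : ℝ) 1) : clampUnit s = s := by
  simp [clampUnit, hs.1, hs.2]

theorem continuous_clampUnit : Continuous clampUnit := by
  unfold clampUnit
  fun_prop

/-- First component of the velocity in flattened coordinates. -/
def flatFlux (h₀ h₁ : ℝ → ℝ) (u : ℝ × ℝ → ℝ × ℝ) (w : ℝ × ℝ) : ℝ :=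
  (h₁ w.1 - h₀ w.1) * (u (w.1, levelHeight h₀ h₁ (w.1, clampUnit w.2))).1

/-- Second component of the velocity in flattened coordinates. -/
def flatCross (h₀ h₁ : ℝ → ℝ) (u : ℝ × ℝ → ℝ × ℝ) (w : ℝ × ℝ) : ℝ :=
  (u (w.1, levelHeight h₀ h₁ (w.1, clampUnit w.2))).2 -
    (deriv h₀ w.1 + clampUnit w.2 * (deriv h₁ w.1 - deriv h₀ w.1)) *
      (u (w.1, levelHeight h₀ h₁ (w.1, clampUnit w.2))).1

/-- A nozzle which is the strip of height `1` upstream and a straight strip downstream. -/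
structure IsNozzle (h₀ h₁ : ℝ → ℝ) (Lm Lp a b : ℝ) : Prop where
  contDiff_bot : ContDiff ℝ 2 h₀
  contDiff_top : ContDiff ℝ 2 h₁
  lt : ∀ x, h₀ x < h₁ x
  le : Lm ≤ Lp
  upstream : ∀ x ≤ Lm, h₀ x = 0 ∧ h₁ x = 1
  downstream : ∀ x ≥ Lp, h₀ x = a ∧ h₁ x = b

section nozzle

variable {h₀ h₁ : ℝ → ℝ} {Lm Lp a b : ℝ} {u : ℝ × ℝ → ℝ × ℝ} {p : ℝ × ℝ → ℝ}

theorem isOpen_nozzle (hN : IsNozzle h₀ h₁ Lm Lp a b) : IsOpen (nozzle h₀ h₁) := by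
  have h1 := hN.contDiff_bot.continuous
  have h2 := hN.contDiff_top.continuous
  exact (isOpen_lt (by fun_prop) continuous_snd).inter (isOpen_lt continuous_snd (by fun_prop))

theorem mem_closure_nozzle (hlt : ∀ x, h₀ x < h₁ x) {x z : ℝ} (hz : z ∈ Icc (h₀ x) (h₁ x)) :
    (x, z) ∈ closure (nozzle h₀ h₁) := by
  rw [← closure_Ioo (hlt x).ne] at hz
  exact map_mem_closure (f := fun t => (x, t)) (by fun_prop) hz fun t ht => ht

theorem levelHeight_mem_Icc (hlt : ∀ x, h₀ x < h₁ x) {x s : ℝ} (hs : s ∈ Icc (0 : ℝ) 1) :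
    levelHeight h₀ h₁ (x, s) ∈ Icc (h₀ x) (h₁ x) := by
  have := hlt x
  simp only [levelHeight]
  constructor <;> nlinarith [hs.1, hs.2]

theorem levelHeight_mem_nozzle (hlt : ∀ x, h₀ x < h₁ x) {x s : ℝ} (hs : s ∈ Ioo (0 : ℝ) 1) :
    (x, levelHeight h₀ h₁ (x, s)) ∈ nozzle h₀ h₁ := by
  have := hlt x
  simp only [levelHeight, nozzle, mem_ofPred_eq]
  constructor <;> nlinarith [hs.1, hs.2]

theorem IsNozzle.hasDerivAt_bot (hN : IsNozzle h₀ h₁ Lm Lp a b) (x : ℝ) :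
    HasDerivAt h₀ (deriv h₀ x) x :=
  (hN.contDiff_bot.differentiable (by norm_num) x).hasDerivAt

theorem IsNozzle.hasDerivAt_top (hN : IsNozzle h₀ h₁ Lm Lp a b) (x : ℝ) :
    HasDerivAt h₁ (deriv h₁ x) x :=
  (hN.contDiff_top.differentiable (by norm_num) x).hasDerivAt

theorem HasDerivAt.hasFDerivAt_comp_fst {f : ℝ → ℝ} {f' : ℝ} {w : ℝ × ℝ}
    (h : HasDerivAt f f' w.1) : HasFDerivAt (fun z : ℝ × ℝ => f z.1) (planeForm f' 0) w := by
  refine (HasFDerivAt.comp (g := f) (f := Prod.fst) w h.hasFDerivAt hasFDerivAt_fst).congr_fderiv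
    ?_
  ext <;> simp

/-- Derivative of the height of a point at variable relative level. -/
theorem IsNozzle.hasFDerivAt_level (hN : IsNozzle h₀ h₁ Lm Lp a b) {σ : ℝ × ℝ → ℝ} {w : ℝ × ℝ}
    {α β : ℝ} (hσ : HasFDerivAt σ (planeForm α β) w) :
    HasFDerivAt (fun z : ℝ × ℝ => levelHeight h₀ h₁ (z.1, σ z))
      (planeForm (deriv h₀ w.1 + σ w * (deriv h₁ w.1 - deriv h₀ w.1) + α * (h₁ w.1 - h₀ w.1))
        (β * (h₁ w.1 - h₀ w.1))) w := by
  have d0 := (hN.hasDerivAt_bot w.1).hasFDerivAt_comp_fst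
  have d1 := (hN.hasDerivAt_top w.1).hasFDerivAt_comp_fst
  refine (d0.add (hσ.mul (d1.sub d0))).congr_fderiv ?_
  ext <;> simp <;> ring

theorem IsNozzle.hasFDerivAt_levelHeight (hN : IsNozzle h₀ h₁ Lm Lp a b) (w : ℝ × ℝ) :
    HasFDerivAt (levelHeight h₀ h₁)
      (planeForm (deriv h₀ w.1 + w.2 * (deriv h₁ w.1 - deriv h₀ w.1)) (h₁ w.1 - h₀ w.1)) w := by
  have h : HasFDerivAt (Prod.snd : ℝ × ℝ → ℝ) (planeForm 0 1) w :=
    hasFDerivAt_snd.congr_fderiv (by ext <;> simp)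
  simpa using hN.hasFDerivAt_level h

theorem continuous_velocity_level (hN : IsNozzle h₀ h₁ Lm Lp a b)
    (hu : IsEulerSlip h₀ h₁ (nozzle h₀ h₁) u p) :
    Continuous fun w : ℝ × ℝ => u (w.1, levelHeight h₀ h₁ (w.1, clampUnit w.2)) := by
  obtain ⟨-, ⟨K, hK⟩, -⟩ := hu
  have h1 := hN.contDiff_bot.continuous
  have h2 := hN.contDiff_top.continuous
  have h3 := continuous_clampUnit
  refine hK.continuousOn.comp_continuous (by unfold levelHeight; fun_prop) fun w => ?_
  exact mem_closure_nozzle hN.lt (levelHeight_mem_Icc hN.lt (clampUnit_mem _))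

theorem continuous_flatFlux (hN : IsNozzle h₀ h₁ Lm Lp a b)
    (hu : IsEulerSlip h₀ h₁ (nozzle h₀ h₁) u p) : Continuous (flatFlux h₀ h₁ u) := by
  have h0 := continuous_velocity_level hN hu
  have h1 := hN.contDiff_bot.continuous
  have h2 := hN.contDiff_top.continuous
  exact ((h2.comp continuous_fst).sub (h1.comp continuous_fst)).mul h0.fst

theorem continuous_flatCross (hN : IsNozzle h₀ h₁ Lm Lp a b)
    (hu : IsEulerSlip h₀ h₁ (nozzle h₀ h₁) u p) : Continuous (flatCross h₀ h₁ u) := by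
  have h0 := continuous_velocity_level hN hu
  have h1 := hN.contDiff_bot.continuous_deriv (by norm_num)
  have h2 := hN.contDiff_top.continuous_deriv (by norm_num)
  have h3 := continuous_clampUnit
  exact h0.snd.sub (((h1.comp continuous_fst).add ((h3.comp continuous_snd).mul
    ((h2.comp continuous_fst).sub (h1.comp continuous_fst)))).mul h0.fst)

theorem differentiableAt_velocity (hN : IsNozzle h₀ h₁ Lm Lp a b)
    (hu : IsEulerSlip h₀ h₁ (nozzle h₀ h₁) u p) {x : ℝ × ℝ} (hx : x ∈ nozzle h₀ h₁) :
    DifferentiableAt ℝ (fun y => (u y).1) x ∧ DifferentiableAt ℝ (fun y => (u y).2) x ∧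
      DifferentiableAt ℝ p x := by
  obtain ⟨h1, -, h2, -⟩ := hu
  have hx' := (isOpen_nozzle hN).mem_nhds hx
  have d1 := (h1.contDiffAt hx').differentiableAt (by norm_num)
  exact ⟨d1.fst, d1.snd, (h2.contDiffAt hx').differentiableAt (by norm_num)⟩

theorem flatFlux_flatCross_divergence (hN : IsNozzle h₀ h₁ Lm Lp a b)
    (hu : IsEulerSlip h₀ h₁ (nozzle h₀ h₁) u p) {w : ℝ × ℝ} (hw : w.2 ∈ Ioo (0 : ℝ) 1) :
    DifferentiableAt ℝ (flatFlux h₀ h₁ u) w ∧ DifferentiableAt ℝ (flatCross h₀ h₁ u) w ∧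
      fderiv ℝ (flatFlux h₀ h₁ u) w (1, 0) + fderiv ℝ (flatCross h₀ h₁ u) w (0, 1) = 0 := by
  have hx := levelHeight_mem_nozzle hN.lt (x := w.1) hw
  obtain ⟨d1, d2, -⟩ := differentiableAt_velocity hN hu hx
  obtain ⟨-, -, -, heq, -⟩ := hu
  have hdiv := (heq _ hx).2.2
  have dl := hN.hasFDerivAt_levelHeight w
  have e1 := hasFDerivAt_comp_height d1 dl
  have e2 := hasFDerivAt_comp_height d2 dl
  have d0 := (hN.hasDerivAt_bot w.1).hasFDerivAt_comp_fst
  have d1' := (hN.hasDerivAt_top w.1).hasFDerivAt_comp_fst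
  have dd0 := (((contDiff_succ_iff_deriv (n := 1)).1 hN.contDiff_bot).2.2.differentiable
    (by norm_num) w.1).hasDerivAt.hasFDerivAt_comp_fst
  have dd1 := (((contDiff_succ_iff_deriv (n := 1)).1 hN.contDiff_top).2.2.differentiable
    (by norm_num) w.1).hasDerivAt.hasFDerivAt_comp_fst
  have hev : ∀ᶠ z : ℝ × ℝ in nhds w, clampUnit z.2 = z.2 := by
    filter_upwards [(isOpen_Ioo.preimage continuous_snd).mem_nhds hw] with z hz
    exact clampUnit_of_mem (Ioo_subset_Icc_self hz)
  have hs : HasFDerivAt (Prod.snd : ℝ × ℝ → ℝ) (planeForm 0 1) w :=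
    hasFDerivAt_snd.congr_fderiv (by ext <;> simp)
  have hA := ((d1'.sub d0).mul e1).congr_of_eventuallyEq (f₁ := flatFlux h₀ h₁ u) (by
    filter_upwards [hev] with z hz
    simp [flatFlux, hz])
  have hB := (e2.sub ((dd0.add (hs.mul (dd1.sub dd0))).mul e1)).congr_of_eventuallyEq
    (f₁ := flatCross h₀ h₁ u) (by
    filter_upwards [hev] with z hz
    simp [flatCross, hz])
  refine ⟨hA.differentiableAt, hB.differentiableAt, ?_⟩
  rw [hA.fderiv, hB.fderiv]
  simp only [add_apply, smul_apply, sub_apply, planeForm_apply, smul_eq_mul, Pi.sub_apply,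
    Pi.add_apply, Pi.mul_apply]
  linear_combination (h₁ w.1 - h₀ w.1) * hdiv

theorem flatCross_bot (hu : IsEulerSlip h₀ h₁ (nozzle h₀ h₁) u p) (x : ℝ) :
    flatCross h₀ h₁ u (x, 0) = 0 := by
  obtain ⟨-, -, -, -, hb⟩ := hu
  have h := (hb x).1
  simp [flatCross, clampUnit_of_mem (left_mem_Icc.2 zero_le_one), levelHeight, h]

theorem flatCross_top (hu : IsEulerSlip h₀ h₁ (nozzle h₀ h₁) u p) (x : ℝ) :
    flatCross h₀ h₁ u (x, 1) = 0 := by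
  obtain ⟨-, -, -, -, hb⟩ := hu
  have h := (hb x).2
  simp [flatCross, clampUnit_of_mem (right_mem_Icc.2 zero_le_one), levelHeight, h]

theorem flatFlux_pos (hN : IsNozzle h₀ h₁ Lm Lp a b) (hpos : ∀ x ∈ nozzle h₀ h₁, 0 < (u x).1)
    {w : ℝ × ℝ} (hw : w.2 ∈ Ioo (0 : ℝ) 1) : 0 < flatFlux h₀ h₁ u w := by
  unfold flatFlux
  rw [clampUnit_of_mem (Ioo_subset_Icc_self hw)]
  exact mul_pos (sub_pos.2 (hN.lt _)) (hpos _ (levelHeight_mem_nozzle hN.lt hw))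

/-- Change of the stream function along a level line of the flattened coordinates. -/
theorem fluxBelow_sub_fluxBelow (hN : IsNozzle h₀ h₁ Lm Lp a b)
    (hu : IsEulerSlip h₀ h₁ (nozzle h₀ h₁) u p) (x₀ x₁ : ℝ) {s : ℝ} (hs : s ∈ Icc (0 : ℝ) 1) :
    fluxBelow (flatFlux h₀ h₁ u) (x₁, s) - fluxBelow (flatFlux h₀ h₁ u) (x₀, s) =
      -∫ x in x₀..x₁, flatCross h₀ h₁ u (x, s) :=
  integral_sub_integral_eq_of_divergence_free (continuous_flatFlux hN hu)
    (continuous_flatCross hN hu) (fun _ hw => (flatFlux_flatCross_divergence hN hu hw).1)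
    (fun _ hw => (flatFlux_flatCross_divergence hN hu hw).2.1)
    (fun _ hw => (flatFlux_flatCross_divergence hN hu hw).2.2) (flatCross_bot hu) x₀ x₁ hs

theorem IsNozzle.flat_upstream (hN : IsNozzle h₀ h₁ Lm Lp a b) {x s : ℝ} (hx : x ≤ Lm)
    (hs : s ∈ Icc (0 : ℝ) 1) : flatFlux h₀ h₁ u (x, s) = (u (x, s)).1 := by
  simp [flatFlux, levelHeight, clampUnit_of_mem hs, hN.upstream x hx]

theorem IsNozzle.deriv_upstream (hN : IsNozzle h₀ h₁ Lm Lp a b) {x : ℝ} (hx : x < Lm) :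
    deriv h₀ x = 0 ∧ deriv h₁ x = 0 := by
  have e0 : h₀ =ᶠ[nhds x] fun _ => 0 := by
    filter_upwards [Iio_mem_nhds hx] with z hz using (hN.upstream z hz.le).1
  have e1 : h₁ =ᶠ[nhds x] fun _ => 1 := by
    filter_upwards [Iio_mem_nhds hx] with z hz using (hN.upstream z hz.le).2
  exact ⟨by simp [e0.deriv_eq], by simp [e1.deriv_eq]⟩

theorem IsNozzle.deriv_bot_downstream (hN : IsNozzle h₀ h₁ Lm Lp a b) {x : ℝ} (hx : Lp < x) :
    deriv h₀ x = 0 := by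
  have e0 : h₀ =ᶠ[nhds x] fun _ => a := by
    filter_upwards [Ioi_mem_nhds hx] with z hz using (hN.downstream z hz.le).1
  simp [e0.deriv_eq]

theorem IsNozzle.flatCross_upstream (hN : IsNozzle h₀ h₁ Lm Lp a b) {x s : ℝ} (hx : x < Lm)
    (hs : s ∈ Icc (0 : ℝ) 1) : flatCross h₀ h₁ u (x, s) = (u (x, s)).2 := by
  simp [flatCross, levelHeight, clampUnit_of_mem hs, hN.upstream x hx.le, hN.deriv_upstream hx]

end nozzle

/-- A flow in a nozzle with positive horizontal velocity which is a Poiseuille flow of flux `Q` far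
upstream. -/
structure IsNozzleFlow (h₀ h₁ : ℝ → ℝ) (Lm Lp a b Q : ℝ) (u : ℝ × ℝ → ℝ × ℝ) (p : ℝ × ℝ → ℝ) :
    Prop where
  isNozzle : IsNozzle h₀ h₁ Lm Lp a b
  euler : IsEulerSlip h₀ h₁ (nozzle h₀ h₁) u p
  velocity_pos : ∀ x ∈ nozzle h₀ h₁, 0 < (u x).1
  flux_pos : 0 < Q
  poiseuille : ∀ ε > 0, ∃ M : ℝ, ∀ x ≤ M, ∀ z ∈ Icc (0 : ℝ) 1,
    |(u (x, z)).1 - 6 * Q * z * (1 - z)| < ε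

namespace IsNozzleFlow

variable {h₀ h₁ : ℝ → ℝ} {Lm Lp a b Q : ℝ} {u v : ℝ × ℝ → ℝ × ℝ} {p q : ℝ × ℝ → ℝ}

theorem fluxBelow_upstream (F : IsNozzleFlow h₀ h₁ Lm Lp a b Q u p) {ε : ℝ} (hε : 0 < ε) :
    ∃ M : ℝ, ∀ x ≤ M, ∀ s ∈ Icc (0 : ℝ) 1,
      |fluxBelow (flatFlux h₀ h₁ u) (x, s) - Q * (3 * s ^ 2 - 2 * s ^ 3)| ≤ ε := by
  obtain ⟨M, hM⟩ := F.poiseuille ε hε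
  refine ⟨min M Lm, fun x hx s hs => ?_⟩
  have hc := continuous_flatFlux F.isNozzle F.euler
  have hc' : Continuous fun t => flatFlux h₀ h₁ u (x, t) := by fun_prop
  have hp : ∫ t in (0 : ℝ)..s, 6 * Q * t * (1 - t) = Q * (3 * s ^ 2 - 2 * s ^ 3) := by
    have hd : ∀ t : ℝ, HasDerivAt (fun t : ℝ => Q * (3 * t ^ 2 - 2 * t ^ 3))
        (6 * Q * t * (1 - t)) t := by
      intro t
      have h2 := (hasDerivAt_pow 2 t).const_mul 3
      have h3 := (hasDerivAt_pow 3 t).const_mul 2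
      refine ((h2.sub h3).const_mul Q).congr_deriv ?_
      norm_num
      ring
    rw [intervalIntegral.integral_eq_sub_of_hasDerivAt (fun t _ => hd t)
      (Continuous.intervalIntegrable (by fun_prop) _ _)]
    ring
  have hsub : fluxBelow (flatFlux h₀ h₁ u) (x, s) - Q * (3 * s ^ 2 - 2 * s ^ 3) =
      ∫ t in (0 : ℝ)..s, (flatFlux h₀ h₁ u (x, t) - 6 * Q * t * (1 - t)) := by
    rw [intervalIntegral.integral_sub (hc'.intervalIntegrable _ _)
      (Continuous.intervalIntegrable (by fun_prop) _ _), hp, fluxBelow]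
  rw [hsub, ← Real.norm_eq_abs]
  refine (intervalIntegral.norm_integral_le_of_norm_le_const (C := ε) fun t ht => ?_).trans ?_
  · rw [uIoc_of_le hs.1] at ht
    have ht' : t ∈ Icc (0 : ℝ) 1 := ⟨ht.1.le, ht.2.trans hs.2⟩
    rw [F.isNozzle.flat_upstream (hx.trans (min_le_right _ _)) ht', Real.norm_eq_abs]
    exact (hM x (hx.trans (min_le_left _ _)) t ht').le
  · rw [sub_zero, abs_of_nonneg hs.1]
    nlinarith [hs.2]

theorem fluxBelow_one (F : IsNozzleFlow h₀ h₁ Lm Lp a b Q u p) (x : ℝ) :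
    fluxBelow (flatFlux h₀ h₁ u) (x, 1) = Q := by
  refine eq_of_forall_dist_le fun ε hε => ?_
  obtain ⟨M, hM⟩ := F.fluxBelow_upstream hε
  have h1 : (1 : ℝ) ∈ Icc (0 : ℝ) 1 := ⟨zero_le_one, le_rfl⟩
  have h2 := fluxBelow_sub_fluxBelow F.isNozzle F.euler M x h1
  simp only [flatCross_top F.euler, intervalIntegral.integral_zero, neg_zero, sub_eq_zero] at h2
  have h3 := hM M le_rfl 1 h1
  norm_num at h3
  rwa [h2, Real.dist_eq]

/-- Passage to the coordinates given by `x₁` and the stream function; `σ` is the relative level of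
streamlines. -/
theorem exists_level (F : IsNozzleFlow h₀ h₁ Lm Lp a b Q u p) :
    ∃ σ : ℝ × ℝ → ℝ, (∀ w : ℝ × ℝ, w.2 ∈ Ioo 0 Q → σ w ∈ Ioo (0 : ℝ) 1 ∧
        fluxBelow (flatFlux h₀ h₁ u) (w.1, σ w) = w.2) ∧
      IsStreamFlow Q (fun w => levelHeight h₀ h₁ (w.1, σ w))
        (fun w => (u (w.1, levelHeight h₀ h₁ (w.1, σ w))).1)
        (fun w => (u (w.1, levelHeight h₀ h₁ (w.1, σ w))).2)
        (fun w => p (w.1, levelHeight h₀ h₁ (w.1, σ w))) := by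
  have hN := F.isNozzle
  have hu := F.euler
  obtain ⟨σ, hσ, dσ⟩ := exists_streamline_height (continuous_flatFlux hN hu)
    (continuous_flatCross hN hu) (fun _ hw => (flatFlux_flatCross_divergence hN hu hw).1)
    (fun _ hw => (flatFlux_flatCross_divergence hN hu hw).2.1)
    (fun _ hw => (flatFlux_flatCross_divergence hN hu hw).2.2) (flatCross_bot hu)
    (fun _ hw => flatFlux_pos hN F.velocity_pos hw) F.fluxBelow_one
  refine ⟨σ, hσ, ?_⟩
  have hmem : ∀ w : ℝ × ℝ, w.2 ∈ Ioo 0 Q →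
      (w.1, levelHeight h₀ h₁ (w.1, σ w)) ∈ nozzle h₀ h₁ := fun w hw =>
    levelHeight_mem_nozzle hN.lt (hσ w hw).1
  have dy : ∀ w : ℝ × ℝ, w.2 ∈ Ioo 0 Q →
      HasFDerivAt (fun w => levelHeight h₀ h₁ (w.1, σ w))
        (planeForm ((u (w.1, levelHeight h₀ h₁ (w.1, σ w))).2 /
          (u (w.1, levelHeight h₀ h₁ (w.1, σ w))).1)
          (1 / (u (w.1, levelHeight h₀ h₁ (w.1, σ w))).1)) w := by
    intro w hw
    have hp := F.velocity_pos _ (hmem w hw)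
    have hH := sub_pos.2 (hN.lt w.1)
    refine (hN.hasFDerivAt_level (dσ w hw)).congr_fderiv ?_
    simp only [flatFlux, flatCross, clampUnit_of_mem (Ioo_subset_Icc_self (hσ w hw).1)]
    congr 1
    · field_simp
      ring
    · field_simp
  have d1 := fun (w : ℝ × ℝ) (hw : w.2 ∈ Ioo 0 Q) =>
    hasFDerivAt_comp_height (differentiableAt_velocity hN hu (hmem w hw)).1 (dy w hw)
  have d2 := fun (w : ℝ × ℝ) (hw : w.2 ∈ Ioo 0 Q) =>
    hasFDerivAt_comp_height (differentiableAt_velocity hN hu (hmem w hw)).2.1 (dy w hw)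
  have d3 := fun (w : ℝ × ℝ) (hw : w.2 ∈ Ioo 0 Q) =>
    hasFDerivAt_comp_height (differentiableAt_velocity hN hu (hmem w hw)).2.2 (dy w hw)
  have heq := fun (w : ℝ × ℝ) (hw : w.2 ∈ Ioo 0 Q) => hu.2.2.2.1 _ (hmem w hw)
  refine ⟨dy, fun w hw => F.velocity_pos _ (hmem w hw), fun w hw => (d1 w hw).continuousAt,
    fun w hw => (d2 w hw).differentiableAt, fun w hw => (d3 w hw).differentiableAt,
    fun w hw => ?_, ?_⟩
  · have hp := F.velocity_pos _ (hmem w hw)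
    have h := (heq w hw).2.1
    rw [(d2 w hw).fderiv, (d3 w hw).fderiv]
    simp only [planeForm_apply]
    field_simp
    linear_combination h
  · refine ⟨fun ψ => p (0, levelHeight h₀ h₁ (0, σ (0, ψ))) +
      ((u (0, levelHeight h₀ h₁ (0, σ (0, ψ)))).1 ^ 2 +
        (u (0, levelHeight h₀ h₁ (0, σ (0, ψ)))).2 ^ 2) / 2, ?_⟩
    rintro ⟨x, ψ⟩ hψ
    have hd : ∀ x : ℝ, HasDerivAt (fun x => p (x, levelHeight h₀ h₁ (x, σ (x, ψ))) +
      ((u (x, levelHeight h₀ h₁ (x, σ (x, ψ)))).1 ^ 2 +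
        (u (x, levelHeight h₀ h₁ (x, σ (x, ψ)))).2 ^ 2) / 2) 0 x := by
      intro x
      have hw : ((x, ψ) : ℝ × ℝ).2 ∈ Ioo 0 Q := hψ
      have hl : HasDerivAt (fun x : ℝ => (x, ψ)) (1, 0) x :=
        (hasDerivAt_id x).prodMk (hasDerivAt_const x ψ)
      have e1 := (d1 (x, ψ) hw).comp_hasDerivAt x hl
      have e2 := (d2 (x, ψ) hw).comp_hasDerivAt x hl
      have e3 := (d3 (x, ψ) hw).comp_hasDerivAt x hl
      have hp := F.velocity_pos _ (hmem _ hw)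
      have h1 := (heq _ hw).1
      have h2 := (heq _ hw).2.1
      refine (e3.add (((e1.pow 2).add (e2.pow 2)).div_const 2)).congr_deriv ?_
      simp only [planeForm_apply, Function.comp_apply] at hp h1 h2 ⊢
      generalize (u (x, levelHeight h₀ h₁ (x, σ (x, ψ)))).1 = A at hp h1 h2 ⊢
      generalize (u (x, levelHeight h₀ h₁ (x, σ (x, ψ)))).2 = B at h1 h2 ⊢
      field_simp
      norm_num
      linear_combination 2 * A * h1 + 2 * B * h2
    exact is_const_of_deriv_eq_zero (fun x => (hd x).differentiableAt) (fun x => (hd x).deriv) x 0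

end IsNozzleFlow

theorem IsNozzle.exists_bounds {h₀ h₁ : ℝ → ℝ} {Lm Lp a b : ℝ} (hN : IsNozzle h₀ h₁ Lm Lp a b) :
    ∃ c C D : ℝ, 0 < c ∧ 0 ≤ D ∧
      ∀ x, c ≤ h₁ x - h₀ x ∧ h₁ x - h₀ x ≤ C ∧ |deriv h₀ x| ≤ D := by
  have hc : Continuous fun x => h₁ x - h₀ x :=
    hN.contDiff_top.continuous.sub hN.contDiff_bot.continuous
  have hd : Continuous fun x => |deriv h₀ x| :=
    (hN.contDiff_bot.continuous_deriv (by norm_num)).abs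
  have hne : (Icc Lm Lp).Nonempty := nonempty_Icc.2 hN.le
  obtain ⟨x₀, -, hmin⟩ := isCompact_Icc.exists_isMinOn hne hc.continuousOn
  obtain ⟨x₁, -, hmax⟩ := isCompact_Icc.exists_isMaxOn hne hc.continuousOn
  obtain ⟨x₂, -, hmax'⟩ := isCompact_Icc.exists_isMaxOn hne hd.continuousOn
  refine ⟨h₁ x₀ - h₀ x₀, h₁ x₁ - h₀ x₁, |deriv h₀ x₂|, sub_pos.2 (hN.lt _), abs_nonneg _,
    fun x => ?_⟩
  rcases lt_or_ge x Lm with hx | hx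
  · have hL : Lm ∈ Icc Lm Lp := left_mem_Icc.2 hN.le
    have e1 := hN.upstream x hx.le
    have e2 := hN.upstream Lm le_rfl
    have l1 := hmin hL
    have l2 := hmax hL
    simp only [mem_ofPred_eq, e2] at l1 l2
    rw [e1.1, e1.2, (hN.deriv_upstream hx).1, abs_zero]
    exact ⟨l1, l2, abs_nonneg _⟩
  rcases lt_or_ge Lp x with hx' | hx'
  · have hL : Lp ∈ Icc Lm Lp := right_mem_Icc.2 hN.le
    have e1 := hN.downstream x hx'.le
    have e2 := hN.downstream Lp le_rfl
    have l1 := hmin hL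
    have l2 := hmax hL
    simp only [mem_ofPred_eq, e2] at l1 l2
    rw [e1.1, e1.2, hN.deriv_bot_downstream hx', abs_zero]
    exact ⟨l1, l2, abs_nonneg _⟩
  · exact ⟨hmin ⟨hx, hx'⟩, hmax ⟨hx, hx'⟩, hmax' ⟨hx, hx'⟩⟩

namespace IsNozzleFlow

variable {h₀ h₁ : ℝ → ℝ} {Lm Lp a b Q : ℝ} {u v : ℝ × ℝ → ℝ × ℝ} {p q : ℝ × ℝ → ℝ}

theorem exists_lipschitz (F : IsNozzleFlow h₀ h₁ Lm Lp a b Q u p) :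
    ∃ K : ℝ, 0 ≤ K ∧ ∀ x ∈ closure (nozzle h₀ h₁), ∀ y ∈ closure (nozzle h₀ h₁),
      |(u x).1 - (u y).1| ≤ K * dist x y ∧ |(u x).2 - (u y).2| ≤ K * dist x y := by
  obtain ⟨-, ⟨K, hK⟩, -⟩ := F.euler
  refine ⟨K, K.2, fun x hx y hy => ?_⟩
  have h := hK.dist_le_mul x hx y hy
  rw [Prod.dist_eq] at h
  exact ⟨(le_max_left _ _).trans h, (le_max_right _ _).trans h⟩

theorem exists_velocity_bound (F : IsNozzleFlow h₀ h₁ Lm Lp a b Q u p) :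
    ∃ M : ℝ, ∀ x ∈ nozzle h₀ h₁, (u x).1 ≤ M ∧ |(u x).2| ≤ M := by
  have hN := F.isNozzle
  obtain ⟨c, C, D, hc, hD, hbd⟩ := hN.exists_bounds
  obtain ⟨K, hK, hlip⟩ := F.exists_lipschitz
  have hcont := continuous_flatFlux hN F.euler
  have vert : ∀ x z z' : ℝ, z ∈ Icc (h₀ x) (h₁ x) → z' ∈ Icc (h₀ x) (h₁ x) →
      |(u (x, z)).1 - (u (x, z')).1| ≤ K * C ∧ |(u (x, z)).2 - (u (x, z')).2| ≤ K * C := by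
    intro x z z' hz hz'
    have hd : K * dist ((x, z) : ℝ × ℝ) (x, z') ≤ K * C := by
      refine mul_le_mul_of_nonneg_left ?_ hK
      rw [Prod.dist_eq]
      simp only [dist_self, Real.dist_eq, abs_nonneg, sup_of_le_right]
      have := (hbd x).2.1
      rw [abs_le]
      constructor <;> linarith [hz.1, hz.2, hz'.1, hz'.2]
    have h := hlip _ (mem_closure_nozzle hN.lt hz) _ (mem_closure_nozzle hN.lt hz')
    exact ⟨h.1.trans hd, h.2.trans hd⟩
  have h1 : ∀ x z : ℝ, z ∈ Icc (h₀ x) (h₁ x) → |(u (x, z)).1| ≤ Q / c + K * C := by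
    intro x z hz
    obtain ⟨t, ht, hA⟩ : ∃ t ∈ Ioo (0 : ℝ) 1, flatFlux h₀ h₁ u (x, t) ≤ Q := by
      by_contra! hcon
      have hc' : Continuous fun t => flatFlux h₀ h₁ u (x, t) := by fun_prop
      have hpos : 0 < ∫ t in (0 : ℝ)..1, (flatFlux h₀ h₁ u (x, t) - Q) :=
        intervalIntegral.intervalIntegral_pos_of_pos_on
          ((hc'.sub continuous_const).intervalIntegrable _ _)
          (fun t ht => sub_pos.2 (hcon t ht)) zero_lt_one
      rw [intervalIntegral.integral_sub (hc'.intervalIntegrable _ _)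
        (continuous_const.intervalIntegrable _ _)] at hpos
      have := F.fluxBelow_one x
      simp only [fluxBelow] at this
      simp [this] at hpos
    have ht' := Ioo_subset_Icc_self ht
    have hp := F.velocity_pos _ (levelHeight_mem_nozzle hN.lt (x := x) ht)
    have hv := (vert x z _ hz (levelHeight_mem_Icc hN.lt ht')).1
    simp only [flatFlux, clampUnit_of_mem ht'] at hA
    have hle : (u (x, levelHeight h₀ h₁ (x, t))).1 ≤ Q / c := by
      rw [le_div_iff₀ hc]
      nlinarith [(hbd x).1]
    rw [abs_le] at hv ⊢
    constructor <;> linarith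
  refine ⟨(Q / c + K * C) + (D * (Q / c + K * C) + K * C), ?_⟩
  rintro ⟨x, z⟩ hx
  have hz : z ∈ Icc (h₀ x) (h₁ x) := ⟨hx.1.le, hx.2.le⟩
  have hb : h₀ x ∈ Icc (h₀ x) (h₁ x) := left_mem_Icc.2 (hN.lt x).le
  have e1 := h1 x z hz
  have e2 : |(u (x, h₀ x)).2| ≤ D * (Q / c + K * C) := by
    rw [(F.euler.2.2.2.2 x).1, abs_mul]
    exact mul_le_mul (hbd x).2.2 (h1 x _ hb) (abs_nonneg _) hD
  have e3 := (vert x z _ hz hb).2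
  have n1 : 0 ≤ D * (Q / c + K * C) := (abs_nonneg _).trans e2
  have n2 : 0 ≤ K * C := (abs_nonneg _).trans e3
  have n3 : 0 ≤ Q / c + K * C := (abs_nonneg _).trans e1
  rw [abs_le] at e1 e2 e3
  refine ⟨by linarith, abs_le.2 ⟨by linarith, by linarith⟩⟩

theorem vertical_velocity_upstream (F : IsNozzleFlow h₀ h₁ Lm Lp a b Q u p) {ε : ℝ} (hε : 0 < ε) :
    ∃ X : ℝ, ∀ x ≤ X, ∀ s ∈ Icc (0 : ℝ) 1, |(u (x, s)).2| ≤ ε := by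
  have hN := F.isNozzle
  obtain ⟨K, hK, hlip⟩ := F.exists_lipschitz
  obtain ⟨r, hr, hKr⟩ : ∃ r : ℝ, 0 < r ∧ K * r ≤ ε / 2 := by
    refine ⟨ε / (2 * (K + 1)), by positivity, ?_⟩
    rw [← mul_div_assoc, div_le_iff₀ (by positivity)]
    nlinarith
  obtain ⟨M, hM⟩ := F.fluxBelow_upstream (ε := ε * r / 4) (by positivity)
  refine ⟨min M (Lm - 1), fun x hx s hs => ?_⟩
  have hxM := hx.trans (min_le_left _ _)
  have hxL := hx.trans (min_le_right _ _)
  have hc : Continuous fun t => flatCross h₀ h₁ u (t, s) :=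
    (continuous_flatCross hN F.euler).comp (by fun_prop)
  have hmem : ∀ t ≤ x, (t, s) ∈ closure (nozzle h₀ h₁) := by
    intro t ht
    obtain ⟨e0, e1⟩ := hN.upstream t (by linarith)
    exact mem_closure_nozzle hN.lt (by rwa [e0, e1])
  have hflux := fluxBelow_sub_fluxBelow hN F.euler (x - r) x hs
  have b1 := abs_le.1 (hM x hxM s hs)
  have b2 := abs_le.1 (hM (x - r) (by linarith) s hs)
  have hbound : |∫ t in (x - r)..x, (flatCross h₀ h₁ u (t, s) - (u (x, s)).2)| ≤ (ε / 2) * r := by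
    rw [← Real.norm_eq_abs]
    refine (intervalIntegral.norm_integral_le_of_norm_le_const (C := ε / 2) fun t ht => ?_).trans ?_
    · rw [uIoc_of_le (by linarith)] at ht
      rw [hN.flatCross_upstream (by linarith [ht.2]) hs, Real.norm_eq_abs]
      refine (hlip _ (hmem t ht.2) _ (hmem x le_rfl)).2.trans (le_trans ?_ hKr)
      refine mul_le_mul_of_nonneg_left ?_ hK
      rw [Prod.dist_eq]
      simp only [dist_self, Real.dist_eq, abs_nonneg, sup_of_le_left]
      rw [abs_le]
      constructor <;> linarith [ht.1, ht.2]
    · rw [sub_sub_cancel, abs_of_pos hr]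
  rw [intervalIntegral.integral_sub (hc.intervalIntegrable _ _)
    (continuous_const.intervalIntegrable _ _), intervalIntegral.integral_const, sub_sub_cancel,
    smul_eq_mul, abs_le] at hbound
  rw [abs_le]
  constructor <;> refine le_of_mul_le_mul_left ?_ hr <;> linarith

theorem horizontal_velocity_upstream (F : IsNozzleFlow h₀ h₁ Lm Lp a b Q u p)
    (F' : IsNozzleFlow h₀ h₁ Lm Lp a b Q v q) {ε : ℝ} (hε : 0 < ε) :
    ∃ X : ℝ, ∀ x ≤ X, ∀ s ∈ Icc (0 : ℝ) 1, ∀ s' ∈ Icc (0 : ℝ) 1,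
      fluxBelow (flatFlux h₀ h₁ u) (x, s) = fluxBelow (flatFlux h₀ h₁ v) (x, s') →
      |(u (x, s)).1 - (v (x, s')).1| ≤ ε := by
  have hQ := F.flux_pos
  have gap : ∀ s ∈ Icc (0 : ℝ) 1, ∀ s' ∈ Icc (0 : ℝ) 1, s' ≤ s →
      (s - s') ^ 2 ≤ (3 * s ^ 2 - 2 * s ^ 3) - (3 * s' ^ 2 - 2 * s' ^ 3) := by
    intro s hs s' hs' h
    have key : 0 ≤ (s - s') * (3 * (s + s') - 2 * (s ^ 2 + s * s' + s' ^ 2) - (s - s')) := by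
      refine mul_nonneg (sub_nonneg.2 h) ?_
      nlinarith [mul_nonneg hs'.1 (sub_nonneg.2 hs'.2), mul_nonneg hs.1 (sub_nonneg.2 hs.2),
        mul_nonneg hs'.1 (sub_nonneg.2 hs.2)]
    linarith
  set d : ℝ := ε / (12 * Q) with hd
  have hd0 : 0 < d := by positivity
  have hdQ : 12 * Q * d = ε := by rw [hd]; field_simp
  obtain ⟨M₁, hM₁⟩ := F.poiseuille (ε / 4) (by positivity)
  obtain ⟨M₂, hM₂⟩ := F'.poiseuille (ε / 4) (by positivity)
  obtain ⟨M₃, hM₃⟩ := F.fluxBelow_upstream (ε := Q * d ^ 2 / 2) (by positivity)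
  obtain ⟨M₄, hM₄⟩ := F'.fluxBelow_upstream (ε := Q * d ^ 2 / 2) (by positivity)
  refine ⟨min (min M₁ M₂) (min M₃ M₄), fun x hx s hs s' hs' heq => ?_⟩
  simp only [le_min_iff] at hx
  obtain ⟨⟨hx1, hx2⟩, hx3, hx4⟩ := hx
  have b1 := abs_lt.1 (hM₁ x hx1 s hs)
  have b2 := abs_lt.1 (hM₂ x hx2 s' hs')
  have b3 := abs_le.1 (hM₃ x hx3 s hs)
  have b4 := abs_le.1 (hM₄ x hx4 s' hs')
  have hsq : Q * (s - s') ^ 2 ≤ Q * d ^ 2 := by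
    rcases le_total s' s with h | h
    · have := mul_le_mul_of_nonneg_left (gap s hs s' hs' h) hQ.le
      linarith
    · have := mul_le_mul_of_nonneg_left (gap s' hs' s hs h) hQ.le
      linarith
  have hss : |s - s'| ≤ d := abs_le_of_sq_le_sq (le_of_mul_le_mul_left hsq hQ) hd0.le
  have hU : |6 * Q * s * (1 - s) - 6 * Q * s' * (1 - s')| ≤ ε / 2 := by
    have e : 6 * Q * s * (1 - s) - 6 * Q * s' * (1 - s') =
      6 * Q * ((s - s') * (1 - s - s')) := by ring
    have h1 : |1 - s - s'| ≤ 1 := abs_le.2 ⟨by linarith [hs.2, hs'.2], by linarith [hs.1, hs'.1]⟩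
    rw [e, abs_mul, abs_of_pos (by positivity : 0 < 6 * Q), abs_mul]
    have h2 : |s - s'| * |1 - s - s'| ≤ d := by nlinarith [abs_nonneg (s - s')]
    nlinarith
  rw [abs_le] at hU ⊢
  constructor <;> linarith

theorem level_near_boundary (F : IsNozzleFlow h₀ h₁ Lm Lp a b Q u p) {X ε : ℝ} (hX : 0 < X)
    (hε : 0 < ε) :
    ∃ δ₀ > 0, ∀ δ < δ₀, ∀ x, |x| ≤ X → ∀ s ∈ Icc (0 : ℝ) 1,
      (fluxBelow (flatFlux h₀ h₁ u) (x, s) = δ → s ≤ ε) ∧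
      (fluxBelow (flatFlux h₀ h₁ u) (x, s) = Q - δ → 1 - ε ≤ s) := by
  have hcont := continuous_flatFlux F.isNozzle F.euler
  have hmono := fluxBelow_strictMonoOn hcont
    (fun _ hw => flatFlux_pos F.isNozzle F.velocity_pos hw)
  have hflux := continuous_fluxBelow hcont
  set e : ℝ := min ε (1 / 2) with he
  have he0 : 0 < e := lt_min hε (by norm_num)
  have heε : e ≤ ε := min_le_left _ _
  have he1 : e ≤ 1 / 2 := min_le_right _ _
  have hne : (Icc (-X) X).Nonempty := nonempty_Icc.2 (by linarith)
  have m0 : (0 : ℝ) ∈ Icc (0 : ℝ) 1 := ⟨le_rfl, zero_le_one⟩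
  have m1 : (1 : ℝ) ∈ Icc (0 : ℝ) 1 := ⟨zero_le_one, le_rfl⟩
  have me : e ∈ Icc (0 : ℝ) 1 := ⟨he0.le, by linarith⟩
  have me' : 1 - e ∈ Icc (0 : ℝ) 1 := ⟨by linarith, by linarith⟩
  obtain ⟨x₀, -, hmin⟩ := isCompact_Icc.exists_isMinOn hne
    (hflux.comp (by fun_prop : Continuous fun x : ℝ => (x, e))).continuousOn
  obtain ⟨x₁, -, hmax⟩ := isCompact_Icc.exists_isMaxOn hne
    (hflux.comp (by fun_prop : Continuous fun x : ℝ => (x, 1 - e))).continuousOn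
  have p0 := hmono x₀ m0 me he0
  have p1 := hmono x₁ me' m1 (by linarith)
  simp only [F.fluxBelow_one] at p1
  have p0' : 0 < fluxBelow (flatFlux h₀ h₁ u) (x₀, e) := by simpa [fluxBelow] using p0
  refine ⟨min (fluxBelow (flatFlux h₀ h₁ u) (x₀, e)) (Q - fluxBelow (flatFlux h₀ h₁ u) (x₁, 1 - e)),
    lt_min p0' (sub_pos.2 p1), fun δ hδ x hx s hs => ⟨fun h => ?_, fun h => ?_⟩⟩
  · by_contra! hcon
    have h1 := hmono x me hs (by linarith)
    have h2 := hmin (abs_le.1 hx)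
    simp only [mem_ofPred_eq, Function.comp_apply] at h1 h2
    linarith [hδ.trans_le (min_le_left _ _)]
  · by_contra! hcon
    have h1 := hmono x hs me' (by linarith)
    have h2 := hmax (abs_le.1 hx)
    simp only [mem_ofPred_eq, Function.comp_apply] at h1 h2
    linarith [hδ.trans_le (min_le_right _ _)]

theorem exists_level_eq (F : IsNozzleFlow h₀ h₁ Lm Lp a b Q u p) {σ : ℝ × ℝ → ℝ}
    (hσ : ∀ w : ℝ × ℝ, w.2 ∈ Ioo 0 Q → σ w ∈ Ioo (0 : ℝ) 1 ∧
      fluxBelow (flatFlux h₀ h₁ u) (w.1, σ w) = w.2) {x z : ℝ} (hz : (x, z) ∈ nozzle h₀ h₁) :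
    ∃ ψ ∈ Ioo 0 Q, levelHeight h₀ h₁ (x, σ (x, ψ)) = z := by
  have hmono := fluxBelow_strictMonoOn (continuous_flatFlux F.isNozzle F.euler)
    (fun _ hw => flatFlux_pos F.isNozzle F.velocity_pos hw) x
  have hH := sub_pos.2 (F.isNozzle.lt x)
  obtain ⟨hz0, hz1⟩ : h₀ x < z ∧ z < h₁ x := hz
  set s : ℝ := (z - h₀ x) / (h₁ x - h₀ x) with hs
  have hs0 : 0 < s := div_pos (by linarith) hH
  have hs1 : s < 1 := (div_lt_one hH).2 (by linarith)
  have ms : s ∈ Icc (0 : ℝ) 1 := ⟨hs0.le, hs1.le⟩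
  have p0 := hmono ⟨le_rfl, zero_le_one⟩ ms hs0
  have p1 := hmono ms ⟨zero_le_one, le_rfl⟩ hs1
  simp only [F.fluxBelow_one] at p1
  have hψ : fluxBelow (flatFlux h₀ h₁ u) (x, s) ∈ Ioo 0 Q :=
    ⟨by simpa [fluxBelow] using p0, p1⟩
  refine ⟨_, hψ, ?_⟩
  obtain ⟨hmem, heq⟩ := hσ (x, fluxBelow (flatFlux h₀ h₁ u) (x, s)) hψ
  rw [hmono.injOn (Ioo_subset_Icc_self hmem) ms heq, levelHeight, hs]
  field_simp
  ring

theorem velocity_eq (F : IsNozzleFlow h₀ h₁ Lm Lp a b Q u p)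
    (F' : IsNozzleFlow h₀ h₁ Lm Lp a b Q v q) : ∀ x ∈ nozzle h₀ h₁, u x = v x := by
  have hN := F.isNozzle
  have hQ := F.flux_pos
  obtain ⟨c, C, D, hc, hD, hbd⟩ := hN.exists_bounds
  have hC : 0 < C := hc.trans_le ((hbd 0).1.trans (hbd 0).2.1)
  obtain ⟨M, hM⟩ := F.exists_velocity_bound
  obtain ⟨M', hM'⟩ := F'.exists_velocity_bound
  obtain ⟨σ, hσ, S⟩ := F.exists_level
  obtain ⟨τ, hτ, T⟩ := F'.exists_level
  have memσ : ∀ w : ℝ × ℝ, w.2 ∈ Ioo 0 Q →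
      (w.1, levelHeight h₀ h₁ (w.1, σ w)) ∈ nozzle h₀ h₁ :=
    fun w hw => levelHeight_mem_nozzle hN.lt (hσ w hw).1
  have memτ : ∀ w : ℝ × ℝ, w.2 ∈ Ioo 0 Q →
      (w.1, levelHeight h₀ h₁ (w.1, τ w)) ∈ nozzle h₀ h₁ :=
    fun w hw => levelHeight_mem_nozzle hN.lt (hτ w hw).1
  have hM0 : ∀ w : ℝ × ℝ, w.2 ∈ Ioo 0 Q →
      (u (w.1, levelHeight h₀ h₁ (w.1, σ w))).1 ≤ max M M' ∧
        |(u (w.1, levelHeight h₀ h₁ (w.1, σ w))).2| ≤ max M M' := fun w hw =>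
    ⟨(hM _ (memσ w hw)).1.trans (le_max_left _ _), (hM _ (memσ w hw)).2.trans (le_max_left _ _)⟩
  have hM0' : ∀ w : ℝ × ℝ, w.2 ∈ Ioo 0 Q →
      (v (w.1, levelHeight h₀ h₁ (w.1, τ w))).1 ≤ max M M' ∧
        |(v (w.1, levelHeight h₀ h₁ (w.1, τ w))).2| ≤ max M M' := fun w hw =>
    ⟨(hM' _ (memτ w hw)).1.trans (le_max_right _ _), (hM' _ (memτ w hw)).2.trans (le_max_right _ _)⟩
  have hdiff : ∀ x s t : ℝ, |levelHeight h₀ h₁ (x, s) - levelHeight h₀ h₁ (x, t)| ≤ C * |s - t| := by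
    intro x s t
    have e : levelHeight h₀ h₁ (x, s) - levelHeight h₀ h₁ (x, t) = (h₁ x - h₀ x) * (s - t) := by
      simp only [levelHeight]
      ring
    rw [e, abs_mul, abs_of_pos (sub_pos.2 (hN.lt x))]
    exact mul_le_mul_of_nonneg_right (hbd x).2.1 (abs_nonneg _)
  have hup : ∀ ε > 0, ∃ X : ℝ, ∀ x ≤ X, ∀ ψ ∈ Ioo 0 Q,
      |(u (x, levelHeight h₀ h₁ (x, σ (x, ψ)))).1 - (v (x, levelHeight h₀ h₁ (x, τ (x, ψ)))).1| ≤ ε ∧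
        |(u (x, levelHeight h₀ h₁ (x, σ (x, ψ)))).2| ≤ ε ∧
        |(v (x, levelHeight h₀ h₁ (x, τ (x, ψ)))).2| ≤ ε := by
    intro ε hε
    obtain ⟨X₁, hX₁⟩ := F.horizontal_velocity_upstream F' hε
    obtain ⟨X₂, hX₂⟩ := F.vertical_velocity_upstream hε
    obtain ⟨X₃, hX₃⟩ := F'.vertical_velocity_upstream hε
    refine ⟨min (min X₁ X₂) (min X₃ Lm), fun x hx ψ hψ => ?_⟩
    simp only [le_min_iff] at hx
    obtain ⟨⟨hx1, hx2⟩, hx3, hx4⟩ := hx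
    have hl : ∀ s, levelHeight h₀ h₁ (x, s) = s := by simp [levelHeight, hN.upstream x hx4]
    obtain ⟨s1, s2⟩ := hσ (x, ψ) hψ
    obtain ⟨t1, t2⟩ := hτ (x, ψ) hψ
    have s1' := Ioo_subset_Icc_self s1
    have t1' := Ioo_subset_Icc_self t1
    simp only [hl]
    exact ⟨hX₁ x hx1 _ s1' _ t1' (s2.trans t2.symm), hX₂ x hx2 _ s1', hX₃ x hx3 _ t1'⟩
  have hbdry : ∀ X > 0, ∀ ε > 0, ∃ δ₀ > 0, ∀ δ, 0 < δ → δ < δ₀ → δ < Q / 2 → ∀ x, |x| ≤ X →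
      |levelHeight h₀ h₁ (x, σ (x, δ)) - levelHeight h₀ h₁ (x, τ (x, δ))| ≤ ε ∧
      |levelHeight h₀ h₁ (x, σ (x, Q - δ)) - levelHeight h₀ h₁ (x, τ (x, Q - δ))| ≤ ε := by
    intro X hX ε hε
    obtain ⟨δ₁, hδ₁, h1⟩ := F.level_near_boundary hX (div_pos hε hC)
    obtain ⟨δ₂, hδ₂, h2⟩ := F'.level_near_boundary hX (div_pos hε hC)
    refine ⟨min δ₁ δ₂, lt_min hδ₁ hδ₂, fun δ hδ hδ' hδQ x hx => ?_⟩
    have l1 := h1 δ (hδ'.trans_le (min_le_left _ _)) x hx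
    have l2 := h2 δ (hδ'.trans_le (min_le_right _ _)) x hx
    have hCε : C * (ε / C) = ε := mul_div_cancel₀ _ hC.ne'
    have m1 : δ ∈ Ioo 0 Q := ⟨hδ, by linarith⟩
    have m2 : Q - δ ∈ Ioo 0 Q := ⟨by linarith, by linarith⟩
    have a1 := hσ (x, δ) m1
    have a2 := hτ (x, δ) m1
    have a3 := hσ (x, Q - δ) m2
    have a4 := hτ (x, Q - δ) m2
    have b1 := (l1 _ (Ioo_subset_Icc_self a1.1)).1 a1.2
    have b2 := (l2 _ (Ioo_subset_Icc_self a2.1)).1 a2.2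
    have b3 := (l1 _ (Ioo_subset_Icc_self a3.1)).2 a3.2
    have b4 := (l2 _ (Ioo_subset_Icc_self a4.1)).2 a4.2
    constructor
    · refine (hdiff _ _ _).trans ?_
      rw [← hCε]
      refine mul_le_mul_of_nonneg_left (abs_le.2 ⟨?_, ?_⟩) hC.le <;>
        linarith [a1.1.1, a2.1.1]
    · refine (hdiff _ _ _).trans ?_
      rw [← hCε]
      refine mul_le_mul_of_nonneg_left (abs_le.2 ⟨?_, ?_⟩) hC.le <;>
        linarith [a3.1.2, a4.1.2]
  obtain ⟨k, hk⟩ := S.exists_bernoulli_sub_eq T (fun w hw => (hM0 w hw).1)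
    (fun w hw => (hM0' w hw).1) hup
  have hMpos : 0 < max M M' := by
    have hw : ((0, Q / 2) : ℝ × ℝ).2 ∈ Ioo 0 Q := ⟨by simpa using hQ, by simpa using hQ⟩
    exact (S.pos _ hw).trans_le (hM0 _ hw).1
  have hgap := S.energyGap_eq_zero T hk hQ hMpos hC hM0 hM0' (fun w hw => by
    refine (hdiff _ _ _).trans ?_
    have h1 := (hσ w hw).1
    have h2 := (hτ w hw).1
    have : |σ w - τ w| ≤ 1 := abs_le.2 ⟨by linarith [h1.1, h2.2], by linarith [h1.2, h2.1]⟩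
    nlinarith) hbdry
  have hvel : ∀ w : ℝ × ℝ, w.2 ∈ Ioo 0 Q →
      u (w.1, levelHeight h₀ h₁ (w.1, σ w)) = v (w.1, levelHeight h₀ h₁ (w.1, τ w)) := by
    intro w hw
    have h := hgap w hw
    have p1 := S.pos w hw
    have p2 := T.pos w hw
    simp only [energyGap] at h p1 p2
    have hs : 0 < 1 / (u (w.1, levelHeight h₀ h₁ (w.1, σ w))).1 +
      1 / (v (w.1, levelHeight h₀ h₁ (w.1, τ w))).1 := by positivity
    have h0 := (mul_eq_zero.1 h).resolve_right hs.ne'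
    refine Prod.ext ?_ ?_ <;> nlinarith
  have hheight : ∀ w : ℝ × ℝ, w.2 ∈ Ioo 0 Q →
      levelHeight h₀ h₁ (w.1, σ w) = levelHeight h₀ h₁ (w.1, τ w) := by
    rintro ⟨x, ψ⟩ hψ
    have hd : ∀ t ∈ Ioo 0 Q, HasDerivAt (fun t => levelHeight h₀ h₁ (x, σ (x, t)) -
        levelHeight h₀ h₁ (x, τ (x, t))) 0 t := by
      intro t ht
      have hl : HasDerivAt (fun t : ℝ => (x, t)) (0, 1) t :=
        (hasDerivAt_const t x).prodMk (hasDerivAt_id t)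
      have e1 := (S.hasFDerivAt_height (x, t) ht).comp_hasDerivAt t hl
      have e2 := (T.hasFDerivAt_height (x, t) ht).comp_hasDerivAt t hl
      refine (e1.sub e2).congr_deriv ?_
      simp [hvel (x, t) ht]
    have hconst : ∀ t ∈ Ioo 0 Q, levelHeight h₀ h₁ (x, σ (x, ψ)) - levelHeight h₀ h₁ (x, τ (x, ψ)) =
        levelHeight h₀ h₁ (x, σ (x, t)) - levelHeight h₀ h₁ (x, τ (x, t)) := fun t ht =>
      isOpen_Ioo.is_const_of_deriv_eq_zero isPreconnected_Ioo
        (fun t ht => (hd t ht).differentiableAt.differentiableWithinAt)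
        (fun t ht => (hd t ht).deriv) hψ ht
    refine eq_of_forall_dist_le fun ε hε => ?_
    obtain ⟨δ₀, hδ₀, h⟩ := hbdry (|x| + 1) (by positivity) ε hε
    obtain ⟨δ, h1, h2⟩ := exists_between (lt_min hδ₀ (half_pos hQ))
    rw [Real.dist_eq, hconst δ ⟨h1, by linarith [h2.trans_le (min_le_right _ _)]⟩]
    exact (h δ h1 (h2.trans_le (min_le_left _ _)) (h2.trans_le (min_le_right _ _)) x
      (by linarith)).1
  rintro ⟨x, z⟩ hz
  obtain ⟨ψ, hψ, rfl⟩ := F.exists_level_eq hσ hz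
  have h := hvel (x, ψ) hψ
  rwa [← hheight (x, ψ) hψ] at h

end IsNozzleFlow

/-- Uniqueness of solutions of the steady incompressible Euler system in a nozzle with
positive horizontal velocity and Poiseuille flow as upstream far-field state. -/
theorem stmt0
    (Q α : ℝ) (hQ : 0 < Q) (hα : α ∈ Set.Ioo (0 : ℝ) 1)
    (h₀ h₁ : ℝ → ℝ)
    (hh₀ : ContDiff ℝ 2 h₀) (hh₁ : ContDiff ℝ 2 h₁)
    (hh₀α : ∃ C : ℝ, ∀ x y : ℝ, |deriv (deriv h₀) x - deriv (deriv h₀) y| ≤ C * |x - y| ^ α)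
    (hh₁α : ∃ C : ℝ, ∀ x y : ℝ, |deriv (deriv h₁) x - deriv (deriv h₁) y| ≤ C * |x - y| ^ α)
    (hlt : ∀ x₁ : ℝ, h₀ x₁ < h₁ x₁)
    (Lm Lp a b : ℝ) (hLm : Lm < 0) (hLp : 0 < Lp)
    (ha : 0 ≤ a) (hab : a < b) (hb : b ≤ 1)
    (hup : ∀ x₁ ≤ Lm, h₀ x₁ = 0 ∧ h₁ x₁ = 1)
    (hdown : ∀ x₁ ≥ Lp, h₀ x₁ = a ∧ h₁ x₁ = b)
    (Ω : Set (ℝ × ℝ)) (hΩ : Ω = {x : ℝ × ℝ | h₀ x.1 < x.2 ∧ x.2 < h₁ x.1})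
    (u v : ℝ × ℝ → ℝ × ℝ) (p q : ℝ × ℝ → ℝ)
    (hu : IsEulerSlip h₀ h₁ Ω u p) (hv : IsEulerSlip h₀ h₁ Ω v q)
    (hu1 : ∀ x ∈ Ω, 0 < (u x).1) (hv1 : ∀ x ∈ Ω, 0 < (v x).1)
    (huf : ∀ ε > 0, ∃ M : ℝ, ∀ x₁ ≤ M, ∀ x₂ ∈ Set.Icc (0 : ℝ) 1,
      |(u (x₁, x₂)).1 - 6 * Q * x₂ * (1 - x₂)| < ε)
    (hvf : ∀ ε > 0, ∃ M : ℝ, ∀ x₁ ≤ M, ∀ x₂ ∈ Set.Icc (0 : ℝ) 1,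
      |(v (x₁, x₂)).1 - 6 * Q * x₂ * (1 - x₂)| < ε) :
    ∀ x ∈ Ω, u x = v x := by
  subst hΩ
  have hN : IsNozzle h₀ h₁ Lm Lp a b :=
    ⟨hh₀, hh₁, hlt, (hLm.trans hLp).le, hup, hdown⟩
  have F : IsNozzleFlow h₀ h₁ Lm Lp a b Q u p := ⟨hN, hu, hu1, hQ, huf⟩
  have F' : IsNozzleFlow h₀ h₁ Lm Lp a b Q v q := ⟨hN, hv, hv1, hQ, hvf⟩
  exact F.velocity_eq F'
end
end

section
/- Let (u,p) be a solution of the steady incompressible Euler system in the strip Ω̂=ℝ×(0,1) with the slip condition u₂=0 on ∂Ω̂. If u₁(x₁,x₂)>0 for all (x₁,x₂)∈Ω̂ and u₁(x₁,x₂)→6Qx₂(1−x₂) as x₁→−∞ uniformly for x₂∈[0,1], then u(x₁,x₂)=(6Qx₂(1−x₂),0) for all (x₁,x₂)∈Ω̂̄, i.e., u is the Poiseuille flow. -/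
open Real Set MeasureTheory

noncomputable section

/-- The strip `Ω̂ = ℝ × (0,1)`. -/
def Strip : Set (ℝ × ℝ) := {x : ℝ × ℝ | 0 < x.2 ∧ x.2 < 1}

/-- `(u, p)` is a solution of the steady incompressible Euler system in the strip
`Ω̂ = ℝ × (0,1)` with slip condition: `u ∈ C²(Ω̂;ℝ²)`, `u` Lipschitz on the closure,
`p ∈ C¹(Ω̂)`, the Euler equations hold in `Ω̂`, and `u₂(x₁,0) = u₂(x₁,1) = 0`. -/
def IsEulerSlipStrip (u : ℝ × ℝ → ℝ × ℝ) (p : ℝ × ℝ → ℝ) : Prop :=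
  ContDiffOn ℝ 2 u Strip ∧ (∃ K, LipschitzOnWith K u (closure Strip)) ∧
  ContDiffOn ℝ 1 p Strip ∧
  (∀ x ∈ Strip,
    (u x).1 * pd1 (fun y => (u y).1) x + (u x).2 * pd2 (fun y => (u y).1) x + pd1 p x = 0 ∧
    (u x).1 * pd1 (fun y => (u y).2) x + (u x).2 * pd2 (fun y => (u y).2) x + pd2 p x = 0 ∧
    pd1 (fun y => (u y).1) x + pd2 (fun y => (u y).2) x = 0) ∧
  (∀ x₁ : ℝ, (u (x₁, 0)).2 = 0 ∧ (u (x₁, 1)).2 = 0)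

theorem isOpen_strip : IsOpen Strip :=
  (isOpen_lt continuous_const continuous_snd).inter (isOpen_lt continuous_snd continuous_const)

theorem convex_strip : Convex ℝ Strip :=
  (convex_Ioo (0 : ℝ) 1).linear_preimage (LinearMap.snd ℝ ℝ ℝ)

theorem mem_closure_strip {x : ℝ × ℝ} (hx : x.2 ∈ Icc (0 : ℝ) 1) : x ∈ closure Strip := by
  have h : Strip = univ ×ˢ Ioo (0 : ℝ) 1 := by ext; simp [Strip]
  rw [h, closure_prod_eq, closure_Ioo zero_ne_one]
  simpa using hx

/-- On an open set the first-order partial derivatives of a `C²` function are `C¹`. -/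
theorem contDiffOn_fderiv_apply {f : ℝ × ℝ → ℝ} {s : Set (ℝ × ℝ)} (hs : IsOpen s)
    (hf : ContDiffOn ℝ 2 f s) (v : ℝ × ℝ) : ContDiffOn ℝ 1 (fun x => fderiv ℝ f x v) s :=
  (hf.fderiv_of_isOpen hs (by norm_num)).clm_apply contDiffOn_const

/-- A function with `C¹` partial derivatives on an open set is `C²` there. -/
theorem contDiffOn_two_of_partials {p : ℝ × ℝ → ℝ} {s : Set (ℝ × ℝ)} (hs : IsOpen s)
    (hp : DifferentiableOn ℝ p s) (h1 : ContDiffOn ℝ 1 (pd1 p) s)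
    (h2 : ContDiffOn ℝ 1 (pd2 p) s) : ContDiffOn ℝ 2 p s := by
  refine (contDiffOn_succ_iff_fderiv_of_isOpen (n := 1) hs).2 ⟨hp, by simp, ?_⟩
  have h : ∀ x, fderiv ℝ p x = pd1 p x • ContinuousLinearMap.fst ℝ ℝ ℝ
      + pd2 p x • ContinuousLinearMap.snd ℝ ℝ ℝ := fun x => by
    ext <;> simp [pd1, pd2]
  exact ((h1.smul contDiffOn_const).add (h2.smul contDiffOn_const)).congr fun x _ => h x

/-- The rotated gradient of a `C²` function is divergence free: its pairing with the gradient of a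
function vanishing on the boundary of a rectangle integrates to zero. -/
theorem integral_rotated_gradient {s : Set (ℝ × ℝ)} (hs : IsOpen s) {p φ : ℝ × ℝ → ℝ}
    (hp : ContDiffOn ℝ 2 p s) (hφ : ContDiffOn ℝ 1 φ s) {a b : ℝ × ℝ} (hab : a ≤ b)
    (hsub : Icc a b ⊆ s) (hleft : ∀ t, φ (a.1, t) = 0) (hright : ∀ t, φ (b.1, t) = 0)
    (hbot : ∀ t, φ (t, a.2) = 0) (htop : ∀ t, φ (t, b.2) = 0) :
    IntegrableOn (fun x => pd2 φ x * pd1 p x - pd1 φ x * pd2 p x) (Icc a b) ∧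
      ∫ x in Icc a b, (pd2 φ x * pd1 p x - pd1 φ x * pd2 p x) = 0 := by
  have hq1 : ContDiffOn ℝ 1 (pd1 p) s := contDiffOn_fderiv_apply hs hp (1, 0)
  have hq2 : ContDiffOn ℝ 1 (pd2 p) s := contDiffOn_fderiv_apply hs hp (0, 1)
  have hf : ContDiffOn ℝ 1 (fun x => -(φ x * pd2 p x)) s := (hφ.mul hq2).neg
  have hg : ContDiffOn ℝ 1 (fun x => φ x * pd1 p x) s := hφ.mul hq1
  have hd : ∀ {f : ℝ × ℝ → ℝ}, ContDiffOn ℝ 1 f s → ∀ x ∈ s, DifferentiableAt ℝ f x :=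
    fun hf x hx => (hf.differentiableOn one_ne_zero).differentiableAt (hs.mem_nhds hx)
  have hc : ∀ {f : ℝ × ℝ → ℝ}, ContDiffOn ℝ 1 f s → ∀ v,
      ContinuousOn (fun x => fderiv ℝ f x v) s :=
    fun hf v => (hf.continuousOn_fderiv_of_isOpen hs le_rfl).clm_apply continuousOn_const
  have hdiv : ∀ x ∈ s, fderiv ℝ (fun x => -(φ x * pd2 p x)) x (1, 0)
      + fderiv ℝ (fun x => φ x * pd1 p x) x (0, 1)
      = pd2 φ x * pd1 p x - pd1 φ x * pd2 p x := by
    intro x hx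
    have hsymm : fderiv ℝ (pd2 p) x (1, 0) = fderiv ℝ (pd1 p) x (0, 1) := by
      have hpx : ContDiffAt ℝ 2 p x := hp.contDiffAt (hs.mem_nhds hx)
      have hdd : DifferentiableAt ℝ (fderiv ℝ p) x :=
        (hpx.fderiv_right (m := 1) (by norm_num)).differentiableAt one_ne_zero
      have e : ∀ v w, fderiv ℝ (fun y => fderiv ℝ p y v) x w = fderiv ℝ (fderiv ℝ p) x w v := by
        intro v w
        rw [fderiv_clm_apply hdd (differentiableAt_const v)]
        simp
      have := (hpx.isSymmSndFDerivAt (by simp)) (1, 0) (0, 1)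
      calc _ = _ := e (0, 1) (1, 0)
        _ = _ := this
        _ = _ := (e (1, 0) (0, 1)).symm
    rw [fderiv_fun_neg, fderiv_fun_mul (hd hφ x hx) (hd hq2 x hx),
      fderiv_fun_mul (hd hφ x hx) (hd hq1 x hx)]
    simp only [pd1, pd2, neg_apply, add_apply,
      smul_apply, smul_eq_mul] at hsymm ⊢
    linear_combination (-φ x) * hsymm
  have hI : IntegrableOn (fun x => fderiv ℝ (fun x => -(φ x * pd2 p x)) x (1, 0)
      + fderiv ℝ (fun x => φ x * pd1 p x) x (0, 1)) (Icc a b) :=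
    (((hc hf _).add (hc hg _)).mono hsub).integrableOn_compact isCompact_Icc
  have hsub' : Ioo a.1 b.1 ×ˢ Ioo a.2 b.2 ⊆ s := fun x hx =>
    hsub ⟨⟨hx.1.1.le, hx.2.1.le⟩, ⟨hx.1.2.le, hx.2.2.le⟩⟩
  have key := integral_divergence_prod_Icc_of_hasFDerivAt_of_le _ _ _ _ a b hab
    (hf.continuousOn.mono hsub) (hg.continuousOn.mono hsub)
    (fun x hx => (hd hf x (hsub' hx)).hasFDerivAt) (fun x hx => (hd hg x (hsub' hx)).hasFDerivAt) hI
  simp only [hleft, hright, hbot, htop, zero_mul, neg_zero, intervalIntegral.integral_zero,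
    sub_zero, add_zero] at key
  have hEq : EqOn _ _ (Icc a b) := fun x hx => hdiv x (hsub hx)
  exact ⟨hI.congr_fun hEq measurableSet_Icc,
    (setIntegral_congr_fun measurableSet_Icc hEq).symm.trans key⟩

theorem pd1_eq_of_hasDerivAt {f : ℝ × ℝ → ℝ} {x : ℝ × ℝ} {c : ℝ} (hf : DifferentiableAt ℝ f x)
    (h : HasDerivAt (fun t => f (t, x.2)) c x.1) : pd1 f x = c :=
  (hf.hasFDerivAt.comp_hasDerivAt x.1
    ((hasDerivAt_id x.1).prodMk (hasDerivAt_const x.1 x.2))).unique h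

theorem pd2_eq_of_hasDerivAt {f : ℝ × ℝ → ℝ} {x : ℝ × ℝ} {c : ℝ} (hf : DifferentiableAt ℝ f x)
    (h : HasDerivAt (fun t => f (x.1, t)) c x.2) : pd2 f x = c :=
  (hf.hasFDerivAt.comp_hasDerivAt x.2
    ((hasDerivAt_const x.2 x.1).prodMk (hasDerivAt_id x.2))).unique h

theorem differentiableAt_of_contDiffOn_strip {f : ℝ × ℝ → ℝ} (hf : ContDiffOn ℝ 1 f Strip)
    {x : ℝ × ℝ} (hx : x ∈ Strip) : DifferentiableAt ℝ f x :=
  (hf.differentiableOn one_ne_zero).differentiableAt (isOpen_strip.mem_nhds hx)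

/-- Cutoff function for the strip, logarithmic in the transverse variable: it is positive where
`|x₁| < R` and `x₂ (1 - x₂) > exp (-R)`. -/
def stripCutoff (R : ℝ) (x : ℝ × ℝ) : ℝ :=
  (1 - x.1 ^ 2 / R ^ 2) * (1 + log (x.2 * (1 - x.2)) / R)

theorem mul_one_sub_pos {x : ℝ × ℝ} (hx : x ∈ Strip) : 0 < x.2 * (1 - x.2) :=
  mul_pos hx.1 (by linarith [hx.2])

theorem contDiffOn_stripCutoff (R : ℝ) : ContDiffOn ℝ 1 (stripCutoff R) Strip := by
  unfold stripCutoff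
  have hlog : ContDiffOn ℝ 1 (fun x : ℝ × ℝ => log (x.2 * (1 - x.2))) Strip :=
    ContDiffOn.log (by fun_prop) fun x hx => (mul_one_sub_pos hx).ne'
  refine ContDiffOn.mul (by fun_prop) (contDiffOn_const.add (hlog.div_const R))

theorem pd1_stripCutoff (R : ℝ) {x : ℝ × ℝ} (hx : x ∈ Strip) :
    pd1 (stripCutoff R) x = -(2 * x.1 / R ^ 2) * (1 + log (x.2 * (1 - x.2)) / R) := by
  refine pd1_eq_of_hasDerivAt
    (differentiableAt_of_contDiffOn_strip (contDiffOn_stripCutoff R) hx) ?_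
  have h := ((((hasDerivAt_id x.1).pow 2).div_const (R ^ 2)).const_sub 1).mul_const
    (1 + log (x.2 * (1 - x.2)) / R)
  exact h.congr_deriv (by simp)

theorem pd2_stripCutoff (R : ℝ) {x : ℝ × ℝ} (hx : x ∈ Strip) :
    pd2 (stripCutoff R) x =
      (1 - x.1 ^ 2 / R ^ 2) * ((1 - 2 * x.2) / (x.2 * (1 - x.2)) / R) := by
  refine pd2_eq_of_hasDerivAt
    (differentiableAt_of_contDiffOn_strip (contDiffOn_stripCutoff R) hx) ?_
  have hm : HasDerivAt (fun t : ℝ => t * (1 - t)) (1 - 2 * x.2) x.2 :=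
    ((hasDerivAt_id x.2).mul ((hasDerivAt_id x.2).const_sub 1)).congr_deriv
      (by simp only [id_eq]; ring)
  exact (((hm.log (mul_one_sub_pos hx).ne').div_const R).const_add 1).const_mul
    (1 - x.1 ^ 2 / R ^ 2)

/-- On the support of the cutoff its gradient, weighted by the distance to the boundary of the
strip, is of order `1 / R`. -/
theorem weighted_gradient_stripCutoff_le {R : ℝ} (hR : 0 < R) {x : ℝ × ℝ} (hx : x ∈ Strip)
    (hx1 : |x.1| ≤ R) (hx2 : -R ≤ log (x.2 * (1 - x.2))) :
    (x.2 * (1 - x.2)) ^ 2 * (pd1 (stripCutoff R) x ^ 2 + pd2 (stripCutoff R) x ^ 2)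
      ≤ 5 / R ^ 2 := by
  have hs := mul_one_sub_pos hx
  rw [pd1_stripCutoff R hx, pd2_stripCutoff R hx]
  have hs1 : x.2 * (1 - x.2) ≤ 1 := by nlinarith [hx.1, hx.2]
  have hlog : log (x.2 * (1 - x.2)) ≤ 0 := log_nonpos hs.le hs1
  have h2 : (1 - 2 * x.2) ^ 2 ≤ 1 := by nlinarith
  set s := x.2 * (1 - x.2) with hsdef
  set b := 1 + log s / R with hb
  have hb0 : 0 ≤ b := by
    have : -1 ≤ log s / R := by rw [le_div_iff₀ hR]; linarith
    linarith
  have hb1 : b ≤ 1 := by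
    have : log s / R ≤ 0 := div_nonpos_of_nonpos_of_nonneg hlog hR.le
    linarith
  have hxR : x.1 ^ 2 / R ^ 2 ≤ 1 := by
    rw [div_le_one (by positivity)]
    exact sq_le_sq' (abs_le.1 hx1).1 (abs_le.1 hx1).2
  have hxR0 : 0 ≤ x.1 ^ 2 / R ^ 2 := by positivity
  set r := x.1 ^ 2 / R ^ 2 with hr
  have e1 : s ^ 2 * (-(2 * x.1 / R ^ 2) * b) ^ 2 = s ^ 2 * b ^ 2 * r * (4 / R ^ 2) := by
    rw [hr]; field_simp; ring
  have e2 : s ^ 2 * ((1 - r) * ((1 - 2 * x.2) / s / R)) ^ 2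
      = (1 - r) ^ 2 * (1 - 2 * x.2) ^ 2 * (1 / R ^ 2) := by
    field_simp
  have hsb : s ^ 2 * b ^ 2 * r ≤ 1 :=
    mul_le_one₀ (mul_le_one₀ (pow_le_one₀ hs.le hs1) (sq_nonneg b) (pow_le_one₀ hb0 hb1)) hxR0 hxR
  have hrs : (1 - r) ^ 2 * (1 - 2 * x.2) ^ 2 ≤ 1 :=
    mul_le_one₀ (pow_le_one₀ (by linarith) (by linarith)) (sq_nonneg _) h2
  rw [mul_add, e1, e2]
  calc _ ≤ 1 * (4 / R ^ 2) + 1 * (1 / R ^ 2) := by gcongr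
    _ = 5 / R ^ 2 := by ring

/-- For every `R ≥ 2` the logarithmic cutoff level is attained at some height. -/
theorem exists_log_mul_one_sub_eq {R : ℝ} (hR : 2 ≤ R) :
    ∃ δ ∈ Ioo (0 : ℝ) (1 / 2), log (δ * (1 - δ)) = -R := by
  have hexp : exp (-R) < 1 / 4 := by
    have h1 : (2 : ℝ) < exp 1 := by linarith [exp_one_gt_d9]
    have h2 : exp 2 = exp 1 * exp 1 := by rw [← exp_add]; norm_num
    have h3 : exp 2 ≤ exp R := exp_le_exp.2 hR
    rw [exp_neg, inv_lt_comm₀ (exp_pos _) (by norm_num)]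
    nlinarith
  have hc : ContinuousOn (fun t : ℝ => t * (1 - t)) (Icc 0 (1 / 2)) := by fun_prop
  obtain ⟨δ, hδ, h⟩ := intermediate_value_Ioo (by norm_num) hc
    (show exp (-R) ∈ Ioo _ _ from ⟨by simpa using exp_pos (-R), by norm_num at hexp ⊢; linarith⟩)
  exact ⟨δ, hδ, by rw [show δ * (1 - δ) = exp (-R) from h, log_exp]⟩

/-- Pointwise energy inequality for `div (U² ∇σ) = 0` tested against `ξ² σ`. -/
theorem energy_le_rotated_gradient {U σ p ξ : ℝ × ℝ → ℝ} {x : ℝ × ℝ}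
    (hξ : DifferentiableAt ℝ ξ x) (hσ : DifferentiableAt ℝ σ x)
    (h1 : pd1 p x = U x ^ 2 * pd2 σ x) (h2 : pd2 p x = -(U x ^ 2 * pd1 σ x)) :
    ξ x ^ 2 * (U x ^ 2 * (pd1 σ x ^ 2 + pd2 σ x ^ 2)) / 2 ≤
      pd2 (fun y => ξ y ^ 2 * σ y) x * pd1 p x - pd1 (fun y => ξ y ^ 2 * σ y) x * pd2 p x
        + 2 * ((U x * σ x) ^ 2 * (pd1 ξ x ^ 2 + pd2 ξ x ^ 2)) := by
  have hder : ∀ v, fderiv ℝ (fun y => ξ y ^ 2 * σ y) x v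
      = 2 * ξ x * fderiv ℝ ξ x v * σ x + ξ x ^ 2 * fderiv ℝ σ x v := fun v => by
    rw [fderiv_fun_mul (hξ.fun_pow 2) hσ, fderiv_fun_pow 2 hξ]
    simp
    ring
  have e1 : pd1 (fun y => ξ y ^ 2 * σ y) x
      = 2 * ξ x * pd1 ξ x * σ x + ξ x ^ 2 * pd1 σ x := hder _
  have e2 : pd2 (fun y => ξ y ^ 2 * σ y) x
      = 2 * ξ x * pd2 ξ x * σ x + ξ x ^ 2 * pd2 σ x := hder _
  rw [e1, e2, h1, h2]
  nlinarith [sq_nonneg (ξ x * U x * pd2 σ x + 2 * (U x * σ x * pd2 ξ x)),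
    sq_nonneg (ξ x * U x * pd1 σ x + 2 * (U x * σ x * pd1 ξ x))]

theorem mul_measureReal_le_of_setIntegral_eq_zero {α : Type*} [MeasurableSpace α] {μ : Measure α}
    {f : α → ℝ} {s t : Set α} {k c : ℝ} (hs : MeasurableSet s) (ht : MeasurableSet t)
    (hst : s ⊆ t) (hμt : μ t ≠ ⊤) (hf : IntegrableOn f t μ) (hzero : ∫ x in t, f x ∂μ = 0)
    (hk : ∀ x ∈ s, k ≤ f x + c) (hc : ∀ x ∈ t, 0 ≤ f x + c) :
    k * μ.real s ≤ c * μ.real t := by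
  have hconst : IntegrableOn (fun _ => c) t μ := integrableOn_const hμt
  have hint : IntegrableOn (fun x => f x + c) t μ := hf.add hconst
  calc k * μ.real s ≤ ∫ x in s, (f x + c) ∂μ :=
        setIntegral_ge_of_const_le_real hs (measure_ne_top_of_subset hst hμt) hk
          (hint.mono_set hst)
    _ ≤ ∫ x in t, (f x + c) ∂μ := by
        refine setIntegral_mono_set hint ?_ hst.eventuallyLE
        filter_upwards [ae_restrict_mem ht] with x hx using hc x hx
    _ = c * μ.real t := by
        rw [integral_add hf hconst, hzero, setIntegral_const, zero_add, smul_eq_mul, mul_comm]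

/-- Liouville theorem for the degenerate equation `div (U² ∇σ) = 0` in the strip, where `p` is a
conjugate function and `U σ` vanishes linearly at the boundary. -/
theorem fderiv_eq_zero_of_conjugate {U σ p : ℝ × ℝ → ℝ} {K : ℝ} (hU : ContinuousOn U Strip)
    (hU0 : ∀ x ∈ Strip, U x ≠ 0) (hσ : ContDiffOn ℝ 1 σ Strip) (hp : ContDiffOn ℝ 2 p Strip)
    (h1 : ∀ x ∈ Strip, pd1 p x = U x ^ 2 * pd2 σ x)
    (h2 : ∀ x ∈ Strip, pd2 p x = -(U x ^ 2 * pd1 σ x))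
    (hb : ∀ x ∈ Strip, |U x * σ x| ≤ K * (x.2 * (1 - x.2))) :
    ∀ x ∈ Strip, fderiv ℝ σ x = 0 := by
  intro x₀ hx₀
  set g : ℝ × ℝ → ℝ := fun x => U x ^ 2 * (pd1 σ x ^ 2 + pd2 σ x ^ 2) with hg
  have hgnn : ∀ x, 0 ≤ g x := fun x => by positivity
  have hσc : ∀ v, ContinuousOn (fun x => fderiv ℝ σ x v) Strip := fun v =>
    (hσ.continuousOn_fderiv_of_isOpen isOpen_strip le_rfl).clm_apply continuousOn_const
  have hgc : ContinuousOn g Strip :=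
    (hU.pow 2).mul (((hσc (1, 0)).pow 2).add ((hσc (0, 1)).pow 2))
  suffices hg0 : g x₀ = 0 by
    have h : pd1 σ x₀ ^ 2 + pd2 σ x₀ ^ 2 = 0 :=
      (mul_eq_zero.1 hg0).resolve_left (pow_ne_zero 2 (hU0 x₀ hx₀))
    have e1 : pd1 σ x₀ = 0 := by nlinarith [sq_nonneg (pd1 σ x₀), sq_nonneg (pd2 σ x₀)]
    have e2 : pd2 σ x₀ = 0 := by nlinarith [sq_nonneg (pd1 σ x₀), sq_nonneg (pd2 σ x₀)]
    ext
    · simpa [pd1] using e1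
    · simpa [pd2] using e2
  by_contra hne
  have hpos : 0 < g x₀ := lt_of_le_of_ne (hgnn x₀) (Ne.symm hne)
  set m := g x₀ / 2 with hm
  have hm0 : 0 < m := by positivity
  have hs₀ := mul_one_sub_pos hx₀
  set s₀ := x₀.2 * (1 - x₀.2) / 2 with hs₀def
  have hs₀pos : 0 < s₀ := by positivity
  have hnear : ∀ᶠ x in nhds x₀,
      x ∈ Strip ∧ m < g x ∧ s₀ < x.2 * (1 - x.2) ∧ |x.1| < |x₀.1| + 1 := by
    refine (isOpen_strip.eventually_mem hx₀).and (.and ?_ (.and ?_ ?_))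
    · exact (hgc.continuousAt (isOpen_strip.mem_nhds hx₀)).tendsto.eventually_const_lt
        (by linarith)
    · have h : ContinuousAt (fun x : ℝ × ℝ => x.2 * (1 - x.2)) x₀ := by fun_prop
      exact h.tendsto.eventually_const_lt (by linarith)
    · have h : ContinuousAt (fun x : ℝ × ℝ => |x.1|) x₀ := by fun_prop
      exact h.tendsto.eventually_lt_const (by linarith)
  obtain ⟨ρ, hρ, hball⟩ := Metric.eventually_nhds_iff_ball.1 hnear
  set S := Metric.ball x₀ ρ with hS
  have hSpos : 0 < volume.real S :=
    ENNReal.toReal_pos (Metric.measure_ball_pos volume x₀ hρ).ne' measure_ball_lt_top.ne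
  have hbound : ∀ R : ℝ, 2 ≤ R → 2 * (|x₀.1| + 1) ≤ R → -(4 * log s₀) ≤ R →
      m / 8 * volume.real S ≤ 20 * K ^ 2 / R := by
    intro R hR2 hRx hRs
    have hR : 0 < R := by linarith
    obtain ⟨δ, hδ, hδlog⟩ := exists_log_mul_one_sub_eq hR2
    set a : ℝ × ℝ := (-R, δ) with ha
    set b : ℝ × ℝ := (R, 1 - δ) with hbdef
    have hab : a ≤ b := ⟨by simp [ha, hbdef]; linarith, by simp [ha, hbdef]; linarith [hδ.2]⟩
    have hsub : Icc a b ⊆ Strip := fun x hx =>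
      ⟨lt_of_lt_of_le hδ.1 hx.1.2, lt_of_le_of_lt hx.2.2 (by simp [hbdef, hδ.1])⟩
    set ξ := stripCutoff R with hξ
    have hξc : ContDiffOn ℝ 1 ξ Strip := contDiffOn_stripCutoff R
    set φ : ℝ × ℝ → ℝ := fun x => ξ x ^ 2 * σ x with hφ
    have hφc : ContDiffOn ℝ 1 φ Strip := (hξc.pow 2).mul hσ
    have hlevel : ∀ t, ξ (t, δ) = 0 ∧ ξ (t, 1 - δ) = 0 := fun t => by
      simp [hξ, stripCutoff, hδlog, mul_comm (1 - δ) δ, hR.ne']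
    have hside : ∀ t, ξ (-R, t) = 0 ∧ ξ (R, t) = 0 := fun t => by
      simp [hξ, stripCutoff, hR.ne']
    obtain ⟨hint, hzero⟩ := integral_rotated_gradient isOpen_strip hp hφc hab hsub
      (fun t => by simp [hφ, ha, (hside t).1]) (fun t => by simp [hφ, hbdef, (hside t).2])
      (fun t => by simp [hφ, ha, (hlevel t).1]) (fun t => by simp [hφ, hbdef, (hlevel t).2])
    set D : ℝ × ℝ → ℝ := fun x => pd2 φ x * pd1 p x - pd1 φ x * pd2 p x with hD
    set C := 5 * K ^ 2 / R ^ 2 with hC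
    have hlow : ∀ x ∈ Icc a b, ξ x ^ 2 * g x / 2 ≤ D x + 2 * C := by
      intro x hx
      have hxs := hsub hx
      have hsmall : (U x * σ x) ^ 2 * (pd1 ξ x ^ 2 + pd2 ξ x ^ 2) ≤ C := by
        have hsx := mul_one_sub_pos hxs
        have hmono : δ * (1 - δ) ≤ x.2 * (1 - x.2) := by
          have : δ ≤ x.2 := hx.1.2
          have : x.2 ≤ 1 - δ := hx.2.2
          nlinarith
        have hlogx : -R ≤ log (x.2 * (1 - x.2)) := by
          rw [← hδlog]
          exact log_le_log (mul_pos hδ.1 (by linarith [hδ.2])) hmono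
        have hw := weighted_gradient_stripCutoff_le hR hxs (abs_le.2 ⟨hx.1.1, hx.2.1⟩) hlogx
        have hsq : (U x * σ x) ^ 2 ≤ (K * (x.2 * (1 - x.2))) ^ 2 := by
          rw [← sq_abs]
          exact pow_le_pow_left₀ (abs_nonneg _) (hb x hxs) 2
        calc (U x * σ x) ^ 2 * (pd1 ξ x ^ 2 + pd2 ξ x ^ 2)
            ≤ (K * (x.2 * (1 - x.2))) ^ 2 * (pd1 ξ x ^ 2 + pd2 ξ x ^ 2) := by gcongr
          _ = K ^ 2 * ((x.2 * (1 - x.2)) ^ 2 * (pd1 ξ x ^ 2 + pd2 ξ x ^ 2)) := by ring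
          _ ≤ K ^ 2 * (5 / R ^ 2) := by gcongr
          _ = C := by rw [hC]; ring
      have := energy_le_rotated_gradient (differentiableAt_of_contDiffOn_strip hξc hxs)
        (differentiableAt_of_contDiffOn_strip hσ hxs) (h1 x hxs) (h2 x hxs)
      simp only [hD, hg]
      linarith
    have hmem : ∀ x ∈ S, x ∈ Icc a b ∧ 1 / 2 ≤ ξ x := by
      intro x hx
      obtain ⟨hxs, -, hxs₀, hx1⟩ := hball x hx
      have hlog4 : -(R / 4) ≤ log (x.2 * (1 - x.2)) := by
        have := log_le_log hs₀pos hxs₀.le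
        linarith
      have hδs : δ * (1 - δ) ≤ x.2 * (1 - x.2) := by
        refine (log_le_log_iff (mul_pos hδ.1 (by linarith [hδ.2])) (mul_one_sub_pos hxs)).1 ?_
        rw [hδlog]
        linarith
      have hxlt := abs_lt.1 hx1
      have hδ2 := hδ.2
      refine ⟨⟨⟨by simp only [ha]; linarith, ?_⟩, ⟨by simp only [hbdef]; linarith, ?_⟩⟩, ?_⟩
      · simp only [ha]
        by_contra! hlt
        nlinarith
      · simp only [hbdef]
        by_contra! hlt
        nlinarith
      · have hA : x.1 ^ 2 / R ^ 2 ≤ 1 / 4 := by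
          rw [div_le_iff₀ (by positivity)]
          nlinarith [abs_nonneg x.1, sq_abs x.1]
        have hB : -(1 / 4) ≤ log (x.2 * (1 - x.2)) / R := by
          rw [le_div_iff₀ hR]; linarith
        simp only [hξ, stripCutoff]
        nlinarith
    have hvol : volume.real (Icc a b) ≤ 2 * R := by
      have : Icc a b = Icc (-R) R ×ˢ Icc δ (1 - δ) := by rw [Icc_prod_eq]
      rw [this, Measure.volume_eq_prod, measureReal_prod_prod,
        Real.volume_real_Icc_of_le (by linarith), Real.volume_real_Icc_of_le (by linarith [hδ.2])]
      nlinarith [hδ.1]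
    have hfin : volume (Icc a b) ≠ ⊤ := isCompact_Icc.measure_lt_top.ne
    have hSsub : S ⊆ Icc a b := fun x hx => (hmem x hx).1
    have hSlow : ∀ x ∈ S, m / 8 ≤ D x + 2 * C := fun x hx => by
      refine le_trans ?_ (hlow x (hmem x hx).1)
      have hξx : (1 / 4 : ℝ) ≤ ξ x ^ 2 := by
        have := pow_le_pow_left₀ (by norm_num) (hmem x hx).2 2
        norm_num at this ⊢
        exact this
      have := mul_le_mul hξx (hball x hx).2.1.le hm0.le (sq_nonneg (ξ x))
      linarith
    have hTlow : ∀ x ∈ Icc a b, 0 ≤ D x + 2 * C := fun x hx =>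
      le_trans (div_nonneg (mul_nonneg (sq_nonneg _) (hgnn x)) two_pos.le) (hlow x hx)
    calc m / 8 * volume.real S ≤ 2 * C * volume.real (Icc a b) :=
          mul_measureReal_le_of_setIntegral_eq_zero measurableSet_ball measurableSet_Icc hSsub hfin
            hint hzero hSlow hTlow
      _ ≤ 2 * C * (2 * R) := mul_le_mul_of_nonneg_left hvol (by positivity)
      _ = 20 * K ^ 2 / R := by rw [hC]; field_simp; ring
  have hlim : Filter.Tendsto (fun R : ℝ => 20 * K ^ 2 / R) Filter.atTop (nhds 0) :=
    tendsto_const_nhds.div_atTop Filter.tendsto_id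
  have hle : m / 8 * volume.real S ≤ 0 := by
    refine ge_of_tendsto hlim ?_
    filter_upwards [Filter.eventually_ge_atTop 2, Filter.eventually_ge_atTop (2 * (|x₀.1| + 1)),
      Filter.eventually_ge_atTop (-(4 * log s₀))] with R ha hb hc using hbound R ha hb hc
  have : 0 < m / 8 * volume.real S := by positivity
  linarith

/-- Liouville type theorem for Poiseuille flows: a solution of the steady incompressible
Euler system in the strip `ℝ × (0,1)` with slip condition, positive horizontal velocity,
and upstream far-field state `6Qx₂(1−x₂)` must be the Poiseuille flow. -/
theorem stmt1
    (Q : ℝ) (hQ : 0 < Q)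
    (u : ℝ × ℝ → ℝ × ℝ) (p : ℝ × ℝ → ℝ)
    (hu : IsEulerSlipStrip u p)
    (hu1 : ∀ x ∈ Strip, 0 < (u x).1)
    (huf : ∀ ε > 0, ∃ M : ℝ, ∀ x₁ ≤ M, ∀ x₂ ∈ Set.Icc (0 : ℝ) 1,
      |(u (x₁, x₂)).1 - 6 * Q * x₂ * (1 - x₂)| < ε) :
    ∀ x ∈ closure Strip, u x = (6 * Q * x.2 * (1 - x.2), 0) := by
  obtain ⟨hu2, ⟨K, hK⟩, hp, heuler, hslip⟩ := hu
  have hU : ContDiffOn ℝ 2 (fun y => (u y).1) Strip := hu2.fst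
  have hV : ContDiffOn ℝ 2 (fun y => (u y).2) Strip := hu2.snd
  have hUc : ContinuousOn (fun y => (u y).1) (closure Strip) := hK.continuousOn.fst
  have hVc : ContinuousOn (fun y => (u y).2) (closure Strip) := hK.continuousOn.snd
  set U : ℝ × ℝ → ℝ := fun y => (u y).1 with hUdef
  set V : ℝ × ℝ → ℝ := fun y => (u y).2 with hVdef
  have hU1 : ContDiffOn ℝ 1 U Strip := hU.of_le one_le_two
  have hV1 : ContDiffOn ℝ 1 V Strip := hV.of_le one_le_two
  have hUpos : ∀ x ∈ Strip, 0 < U x := hu1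
  have hp1 : ∀ x ∈ Strip, pd1 p x = U x * pd2 V x - V x * pd2 U x := fun x hx => by
    obtain ⟨h1, -, h3⟩ := heuler x hx
    linear_combination h1 - U x * h3
  have hp2 : ∀ x ∈ Strip, pd2 p x = V x * pd1 U x - U x * pd1 V x := fun x hx => by
    obtain ⟨-, h2, h3⟩ := heuler x hx
    linear_combination h2 - V x * h3
  have hUi : ∀ v, ContDiffOn ℝ 1 (fun x => fderiv ℝ U x v) Strip :=
    contDiffOn_fderiv_apply isOpen_strip hU
  have hVi : ∀ v, ContDiffOn ℝ 1 (fun x => fderiv ℝ V x v) Strip :=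
    contDiffOn_fderiv_apply isOpen_strip hV
  have hpC : ContDiffOn ℝ 2 p Strip := by
    refine contDiffOn_two_of_partials isOpen_strip (hp.differentiableOn one_ne_zero) ?_ ?_
    · exact ((hU1.mul (hVi (0, 1))).sub (hV1.mul (hUi (0, 1)))).congr hp1
    · exact ((hV1.mul (hUi (1, 0))).sub (hU1.mul (hVi (1, 0)))).congr hp2
  set σ : ℝ × ℝ → ℝ := fun x => V x / U x with hσdef
  have hσ : ContDiffOn ℝ 1 σ Strip := hV1.div hU1 fun x hx => (hUpos x hx).ne'
  have hσd : ∀ x ∈ Strip, ∀ v,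
      U x ^ 2 * fderiv ℝ σ x v = U x * fderiv ℝ V x v - V x * fderiv ℝ U x v := by
    intro x hx v
    have hdU := differentiableAt_of_contDiffOn_strip hU1 hx
    have hdσ := differentiableAt_of_contDiffOn_strip hσ hx
    have hVσ : V =ᶠ[nhds x] fun y => U y * σ y := by
      filter_upwards [isOpen_strip.mem_nhds hx] with y hy
      have := (hUpos y hy).ne'
      simp only [hσdef]
      field_simp
    have hx' : V x = U x * σ x := hVσ.self_of_nhds
    rw [hVσ.fderiv_eq, fderiv_fun_mul hdU hdσ, hx']
    simp only [add_apply, smul_apply, smul_eq_mul]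
    ring
  have hVb : ∀ x ∈ Strip, |U x * σ x| ≤ 2 * K * (x.2 * (1 - x.2)) := by
    rintro ⟨a, t⟩ hx
    have hUx := (hUpos _ hx).ne'
    have hUσ : U (a, t) * σ (a, t) = V (a, t) := by
      simp only [hσdef]
      field_simp
    have hlip : ∀ r ∈ Icc (0 : ℝ) 1, V (a, r) = 0 → |V (a, t)| ≤ K * |t - r| := by
      intro r hr hr0
      have h := hK.dist_le_mul (a, t) (subset_closure hx) (a, r) (mem_closure_strip hr)
      have hsnd : dist (u (a, t)).2 (u (a, r)).2 ≤ dist (u (a, t)) (u (a, r)) := by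
        rw [Prod.dist_eq (x := u (a, t))]
        exact le_max_right _ _
      have hd : dist (a, t) (a, r) = |t - r| := by
        rw [Prod.dist_eq, dist_self, Real.dist_eq]
        exact max_eq_right (abs_nonneg _)
      have hv : dist (u (a, t)).2 (u (a, r)).2 = |V (a, t)| := by
        rw [Real.dist_eq, show (u (a, r)).2 = 0 from hr0, sub_zero]
      rw [← hv, ← hd]
      exact hsnd.trans h
    have h0 := hlip 0 (by simp) (hslip a).1
    have h1 := hlip 1 (by simp) (hslip a).2
    have ht0 : 0 < t := hx.1
    have ht1 : t < 1 := hx.2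
    rw [sub_zero, abs_of_pos ht0] at h0
    rw [abs_of_neg (sub_neg.2 ht1)] at h1
    have hK0 : (0 : ℝ) ≤ K := K.2
    rw [hUσ]
    change |V (a, t)| ≤ 2 * K * (t * (1 - t))
    rcases le_total t (1 / 2) with h | h
    · have : t ≤ 2 * (t * (1 - t)) := by nlinarith
      nlinarith
    · have : -(t - 1) ≤ 2 * (t * (1 - t)) := by nlinarith
      nlinarith
  have hσ0 := fderiv_eq_zero_of_conjugate hU1.continuousOn (fun x hx => (hUpos x hx).ne') hσ hpC
    (fun x hx => (hp1 x hx).trans (hσd x hx (0, 1)).symm)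
    (fun x hx => by
      have := hσd x hx (1, 0)
      rw [hp2 x hx]
      simp only [pd1]
      linarith) hVb
  obtain ⟨c, hc⟩ := isOpen_strip.exists_is_const_of_fderiv_eq_zero convex_strip.isPreconnected
    (hσ.differentiableOn one_ne_zero) hσ0
  have hVU : EqOn V (fun x => c * U x) (closure Strip) := by
    refine EqOn.of_subset_closure (s := Strip) (fun x hx => ?_) hVc (continuousOn_const.mul hUc)
      subset_closure subset_rfl
    have := (hUpos x hx).ne'
    rw [← hc x hx]
    simp only [hσdef]
    field_simp
  have hdiv : ∀ x ∈ Strip, pd1 U x + c * pd2 U x = 0 := by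
    intro x hx
    have h : V =ᶠ[nhds x] fun y => c * U y := by
      filter_upwards [isOpen_strip.mem_nhds hx] with y hy using hVU (subset_closure hy)
    have hdU := differentiableAt_of_contDiffOn_strip hU1 hx
    have h2 : pd2 V x = c * pd2 U x := by
      simp [pd2, h.fderiv_eq, fderiv_const_mul hdU]
    rw [← h2]
    exact (heuler x hx).2.2
  have hc0 : c = 0 := by
    by_contra hc0
    have hmem : ∀ t ∈ Icc (0 : ℝ) (1 / 2), ((t / c, 1 / 2 + t) : ℝ × ℝ) ∈ closure Strip :=
      fun t ht => mem_closure_strip ⟨by linarith [ht.1], by linarith [ht.2]⟩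
    have hcont : ContinuousOn (fun t : ℝ => U (t / c, 1 / 2 + t)) (Icc 0 (1 / 2)) :=
      hUc.comp (f := fun t : ℝ => ((t / c, 1 / 2 + t) : ℝ × ℝ)) (by fun_prop) hmem
    have hder : ∀ t ∈ Ico (0 : ℝ) (1 / 2),
        HasDerivWithinAt (fun t : ℝ => U (t / c, 1 / 2 + t)) 0 (Ici t) t := by
      intro t ht
      have hx : ((t / c, 1 / 2 + t) : ℝ × ℝ) ∈ Strip :=
        ⟨by change 0 < 1 / 2 + t; linarith [ht.1], by change 1 / 2 + t < 1; linarith [ht.2]⟩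
      have hl : HasDerivAt (fun t : ℝ => ((t / c, 1 / 2 + t) : ℝ × ℝ)) (1 / c, 1) t :=
        ((hasDerivAt_id t).div_const c).prodMk ((hasDerivAt_id t).const_add _)
      have h := (differentiableAt_of_contDiffOn_strip hU1 hx).hasFDerivAt.comp_hasDerivAt t hl
      refine (h.congr_deriv ?_).hasDerivWithinAt
      have hsplit : ((1 / c, 1) : ℝ × ℝ) = (1 / c) • (1, 0) + (0, 1) := by simp
      rw [hsplit, map_add, map_smul, smul_eq_mul]
      have := hdiv _ hx
      simp only [pd1, pd2] at this
      rw [eq_neg_of_add_eq_zero_left this]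
      field_simp
      ring
    have hend := constant_of_has_deriv_right_zero hcont hder (1 / 2) (by norm_num)
    norm_num at hend
    have hwall : c * U (1 / 2 / c, 1) = 0 :=
      (hVU (mem_closure_strip (by simp))).symm.trans (hslip _).2
    have hUwall : U (1 / 2 / c, 1) = 0 := (mul_eq_zero.1 hwall).resolve_left hc0
    have hpos := hUpos (0, 1 / 2) ⟨by norm_num, by norm_num⟩
    rw [hUwall] at hend
    linarith
  subst hc0
  have hUshear : ∀ x ∈ Strip, U x = 6 * Q * x.2 * (1 - x.2) := by
    rintro ⟨a, t⟩ hx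
    have hd : ∀ r, HasDerivAt (fun r => U (r, t)) 0 r := fun r => by
      have hr : ((r, t) : ℝ × ℝ) ∈ Strip := hx
      have h := (differentiableAt_of_contDiffOn_strip hU1 hr).hasFDerivAt.comp_hasDerivAt r
        ((hasDerivAt_id r).prodMk (hasDerivAt_const r t))
      exact h.congr_deriv (by simpa [pd1] using hdiv _ hr)
    refine eq_of_abs_sub_le_all fun ε hε => ?_
    obtain ⟨M, hM⟩ := huf ε hε
    rw [is_const_of_deriv_eq_zero (fun r => (hd r).differentiableAt) (fun r => (hd r).deriv) a M]
    exact (hM M le_rfl t ⟨hx.1.le, hx.2.le⟩).le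
  have hUcl : EqOn U (fun x => 6 * Q * x.2 * (1 - x.2)) (closure Strip) :=
    EqOn.of_subset_closure hUshear hUc (by fun_prop) subset_closure subset_rfl
  intro x hx
  exact Prod.ext (hUcl hx) ((hVU hx).trans (zero_mul _))
end
end

section
/- Let (u,p) be a solution of the steady incompressible Euler system with slip boundary condition in the nozzle Ω. Suppose ∫_{h₀(x₁)}^{h₁(x₁)} u₁(x₁,x₂)dx₂ = Q for all x₁∈ℝ, u₁(x₁,x₂)>0 for all (x₁,x₂)∈Ω, and u₁(x₁,x₂)→6Qx₂(1−x₂) as x₁→−∞ uniformly for x₂∈[0,1]. Then the stream function ψ(x₁,x₂):=∫_{h₀(x₁)}^{x₂} u₁(x₁,s)ds satisfies 0<ψ(x)<Q for all x∈Ω and solves the semilinear equation Δψ(x)=f(ψ(x)) for all x∈Ω, where Δψ=∂²ψ/∂x₁²+∂²ψ/∂x₂². -/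
open Real Set MeasureTheory

noncomputable section

/-- The Laplacian `Δφ = ∂²φ/∂x₁² + ∂²φ/∂x₂²`. -/
def lap (φ : ℝ × ℝ → ℝ) (x : ℝ × ℝ) : ℝ := pd1 (pd1 φ) x + pd2 (pd2 φ) x

open Filter Topology

lemma hasDerivAt_intervalIntegral_of_lipschitz {U : ℝ × ℝ → ℝ} {K : NNReal}
    (hU : LipschitzWith K U) {a b x₀ : ℝ} (hab : a ≤ b)
    (hd : ∀ s ∈ Ioo a b, DifferentiableAt ℝ U (x₀, s)) :
    IntervalIntegrable (fun s => pd1 U (x₀, s)) volume a b ∧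
      HasDerivAt (fun x => ∫ s in a..b, U (x, s)) (∫ s in a..b, pd1 U (x₀, s)) x₀ := by
  have hc : ∀ x, Continuous fun s => U (x, s) := fun x => hU.continuous.comp (by fun_prop)
  refine intervalIntegral.hasDerivAt_integral_of_dominated_loc_of_lip (s := univ)
    (bound := fun _ => (K : ℝ)) univ_mem
    (Eventually.of_forall fun x => (hc x).aestronglyMeasurable) ((hc x₀).intervalIntegrable _ _)
    ?_ ?_ (by simp) ?_
  · have hm : Measurable (fun z : ℝ × ℝ => fderiv ℝ U z (1, 0)) :=
      measurable_fderiv_apply_const ℝ U _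
    exact (hm.comp (by fun_prop : Measurable fun s : ℝ => (x₀, s))).aestronglyMeasurable
  · refine Eventually.of_forall fun t _ => ?_
    refine LipschitzOnWith.of_dist_le_mul fun x _ y _ => ?_
    have := hU.dist_le_mul (x, t) (y, t)
    simpa [Prod.dist_eq] using this
  · have hne : ∀ᵐ t : ℝ, t ≠ b := by simp [ae_iff, measure_singleton]
    filter_upwards [hne] with t ht htm
    rw [uIoc_of_le hab] at htm
    have h1 := (hd t ⟨htm.1, lt_of_le_of_ne htm.2 ht⟩).hasFDerivAt
    exact h1.comp_hasDerivAt (f := fun x : ℝ => (x, t)) x₀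
      ((hasDerivAt_id x₀).prodMk (hasDerivAt_const x₀ t))

lemma hasDerivAt_intervalIntegral_moving_endpoint {U : ℝ × ℝ → ℝ} {K : NNReal}
    (hU : LipschitzWith K U) {h : ℝ → ℝ} {h' x₀ : ℝ} (hh : HasDerivAt h h' x₀) :
    HasDerivAt (fun x => ∫ s in (h x₀)..(h x), U (x, s)) (U (x₀, h x₀) * h') x₀ := by
  have hc : ∀ x, Continuous fun s => U (x, s) := fun x => hU.continuous.comp (by fun_prop)
  have h1 : HasDerivAt (fun x => ∫ s in (h x₀)..(h x), U (x₀, s)) (U (x₀, h x₀) * h') x₀ :=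
    ((hc x₀).integral_hasStrictDerivAt (h x₀) (h x₀)).hasDerivAt.comp x₀ hh
  have h2 : HasDerivAt (fun x => ∫ s in (h x₀)..(h x), (U (x, s) - U (x₀, s))) 0 x₀ := by
    rw [hasDerivAt_iff_isLittleO]
    have hlim : Tendsto (fun x => (K : ℝ) * |h x - h x₀|) (𝓝 x₀) (𝓝 0) := by
      have : ContinuousAt (fun x => (K : ℝ) * |h x - h x₀|) x₀ := by
        have := hh.continuousAt
        fun_prop
      simpa [ContinuousAt] using this
    rw [Asymptotics.isLittleO_iff]
    intro c hcpos
    filter_upwards [hlim.eventually_lt_const hcpos] with x hx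
    have hb : ‖∫ s in (h x₀)..(h x), (U (x, s) - U (x₀, s))‖ ≤ (K * |x - x₀|) * |h x - h x₀| := by
      refine intervalIntegral.norm_integral_le_of_norm_le_const fun s _ => ?_
      have := hU.dist_le_mul (x, s) (x₀, s)
      simpa [Prod.dist_eq, Real.dist_eq] using this
    simp only [intervalIntegral.integral_same, sub_zero, smul_zero]
    calc _ ≤ _ := hb
      _ = (K * |h x - h x₀|) * |x - x₀| := by ring
      _ ≤ c * ‖x - x₀‖ := by
        rw [Real.norm_eq_abs]; gcongr
  have h3 := h2.add h1
  rw [zero_add] at h3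
  refine h3.congr_of_eventuallyEq (Eventually.of_forall fun x => ?_)
  simp only [Pi.add_apply]
  rw [intervalIntegral.integral_sub ((hc x).intervalIntegrable _ _)
    ((hc x₀).intervalIntegrable _ _)]
  ring

lemma deriv_nonpos_of_isLocalMax {g g' : ℝ → ℝ} {d x₀ : ℝ}
    (hg : ∀ᶠ x in 𝓝 x₀, HasDerivAt g (g' x) x) (hg' : HasDerivAt g' d x₀)
    (hmax : IsLocalMax g x₀) : d ≤ 0 := by
  by_contra! hd
  have he : deriv g =ᶠ[𝓝 x₀] g' := hg.mono fun x hx => hx.deriv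
  have h2 : deriv (deriv g) x₀ = d := by rw [he.deriv_eq, hg'.deriv]
  have hmin := isLocalMin_of_deriv_deriv_pos (by rw [h2]; exact hd) hmax.deriv_eq_zero
    hg.self_of_nhds.continuousAt
  have hconst : g =ᶠ[𝓝 x₀] fun _ => g x₀ := by
    filter_upwards [hmin, hmax] with x h1 h2 using le_antisymm h2 h1
  have h4 : deriv g =ᶠ[𝓝 x₀] fun _ => 0 := by
    have := hconst.deriv
    simpa using this
  have := h4.deriv_eq
  rw [h2] at this
  simp at this
  linarith

/-- Quantitative maximum principle on a square. -/
lemma mul_sq_le_of_laplacian_ge {v v₁ v₂ d₁ d₂ : ℝ × ℝ → ℝ} {c : ℝ × ℝ} {r ε η : ℝ}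
    (hr : 0 < r) (hε : 0 < ε)
    (hcont : ContinuousOn v (Metric.closedBall c r))
    (h1 : ∀ z ∈ Metric.ball c r, HasDerivAt (fun x => v (x, z.2)) (v₁ z) z.1)
    (h2 : ∀ z ∈ Metric.ball c r, HasDerivAt (fun y => v (z.1, y)) (v₂ z) z.2)
    (h11 : ∀ z ∈ Metric.ball c r, HasDerivAt (fun x => v₁ (x, z.2)) (d₁ z) z.1)
    (h22 : ∀ z ∈ Metric.ball c r, HasDerivAt (fun y => v₂ (z.1, y)) (d₂ z) z.2)
    (hlap : ∀ z ∈ Metric.ball c r, ε ≤ d₁ z + d₂ z)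
    (hv : ∀ z ∈ Metric.closedBall c r, |v z| ≤ η) : ε * r ^ 2 ≤ 16 * η := by
  set w : ℝ × ℝ → ℝ := fun z => v z - ε / 8 * ((z.1 - c.1) ^ 2 + (z.2 - c.2) ^ 2) with hw
  have hwc : ContinuousOn w (Metric.closedBall c r) := hcont.sub (by fun_prop)
  obtain ⟨z, hz, hmax⟩ := (isCompact_closedBall c r).exists_isMaxOn
    ⟨c, Metric.mem_closedBall_self hr.le⟩ hwc
  have hc0 := hv c (Metric.mem_closedBall_self hr.le)
  have hwcz : w c ≤ w z := hmax (Metric.mem_closedBall_self hr.le)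
  by_cases hzb : z ∈ Metric.ball c r
  · exfalso
    have hopen : ∀ᶠ y in 𝓝 z, y ∈ Metric.ball c r := Metric.isOpen_ball.mem_nhds hzb
    have hmaxl : IsLocalMax w z :=
      hmax.isLocalMax (mem_of_superset hopen Metric.ball_subset_closedBall)
    have t1 : Tendsto (fun x : ℝ => (x, z.2)) (𝓝 z.1) (𝓝 z) :=
      (by fun_prop : Continuous fun x : ℝ => (x, z.2)).tendsto z.1
    have t2 : Tendsto (fun y : ℝ => (z.1, y)) (𝓝 z.2) (𝓝 z) :=
      (by fun_prop : Continuous fun y : ℝ => (z.1, y)).tendsto z.2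
    have q : ∀ a x : ℝ, HasDerivAt (fun x => ε / 8 * (x - a)) (ε / 8) x := fun a x => by
      simpa using ((hasDerivAt_id x).sub_const a).const_mul (ε / 8)
    have q2 : ∀ a x : ℝ, HasDerivAt (fun x => ε / 8 * (x - a) ^ 2) (2 * (ε / 8 * (x - a))) x :=
      fun a x => by
        refine ((((hasDerivAt_id x).sub_const a).pow 2).const_mul (ε / 8)).congr_deriv ?_
        simp only [id, Nat.cast_ofNat]
        ring
    have k1 : d₁ z - 2 * (ε / 8) ≤ 0 := by
      refine deriv_nonpos_of_isLocalMax (g := fun x => w (x, z.2))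
        (g' := fun x => v₁ (x, z.2) - 2 * (ε / 8 * (x - c.1))) (x₀ := z.1) ?_
        ((h11 z hzb).sub ((q c.1 z.1).const_mul 2)) (t1.eventually hmaxl)
      filter_upwards [t1.eventually hopen] with x hx
      refine ((h1 _ hx).sub ((q2 c.1 x).add_const (ε / 8 * (z.2 - c.2) ^ 2))).congr_of_eventuallyEq
        (Eventually.of_forall fun y => ?_)
      simp only [hw, Pi.sub_apply]
      ring
    have k2 : d₂ z - 2 * (ε / 8) ≤ 0 := by
      refine deriv_nonpos_of_isLocalMax (g := fun y => w (z.1, y))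
        (g' := fun y => v₂ (z.1, y) - 2 * (ε / 8 * (y - c.2))) (x₀ := z.2) ?_
        ((h22 z hzb).sub ((q c.2 z.2).const_mul 2)) (t2.eventually hmaxl)
      filter_upwards [t2.eventually hopen] with y hy
      refine ((h2 _ hy).sub ((q2 c.2 y).add_const (ε / 8 * (z.1 - c.1) ^ 2))).congr_of_eventuallyEq
        (Eventually.of_forall fun y => ?_)
      simp only [hw, Pi.sub_apply]
      ring
    have := hlap z hzb
    linarith
  · have hd : r ≤ dist z c := not_lt.1 hzb
    have hsq : r ^ 2 ≤ (z.1 - c.1) ^ 2 + (z.2 - c.2) ^ 2 := by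
      rw [Prod.dist_eq, le_max_iff, Real.dist_eq, Real.dist_eq] at hd
      rcases hd with hd | hd
      · have := pow_le_pow_left₀ hr.le hd 2
        rw [sq_abs] at this
        nlinarith [sq_nonneg (z.2 - c.2)]
      · have := pow_le_pow_left₀ hr.le hd 2
        rw [sq_abs] at this
        nlinarith [sq_nonneg (z.1 - c.1)]
    have hz0 := hv z hz
    simp only [hw] at hwcz
    simp only [sub_self] at hwcz
    rw [abs_le] at hz0 hc0
    nlinarith [mul_le_mul_of_nonneg_left hsq hε.le]

/-- If `dB = W dψ` on a domain in which `(x₁, ψ)` are global coordinates with range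
`ℝ × (0, Q)`, then `W` is a continuous function of `ψ`. -/
lemma exists_continuousOn_comp_eq_of_hasFDerivAt_smul {Ω : Set (ℝ × ℝ)} (hΩ : IsOpen Ω)
    {ψ B W a b : ℝ × ℝ → ℝ} {Q : ℝ}
    (hψ : ∀ z ∈ Ω, HasStrictFDerivAt ψ
      (a z • ContinuousLinearMap.fst ℝ ℝ ℝ + b z • ContinuousLinearMap.snd ℝ ℝ ℝ) z)
    (hb : ∀ z ∈ Ω, b z ≠ 0)
    (hB : ∀ z ∈ Ω, HasFDerivAt B (W z •
      (a z • ContinuousLinearMap.fst ℝ ℝ ℝ + b z • ContinuousLinearMap.snd ℝ ℝ ℝ)) z)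
    (hW : ContinuousOn W Ω)
    (hinj : InjOn (fun z : ℝ × ℝ => (z.1, ψ z)) Ω)
    (hmaps : ∀ z ∈ Ω, ψ z ∈ Ioo 0 Q)
    (hsurj : ∀ x, ∀ s ∈ Ioo 0 Q, ∃ z ∈ Ω, z.1 = x ∧ ψ z = s) :
    ∃ F : ℝ → ℝ, ContinuousOn F (Ioo 0 Q) ∧ ∀ z ∈ Ω, W z = F (ψ z) := by
  set Φ : ℝ × ℝ → ℝ × ℝ := fun z => (z.1, ψ z) with hΦ
  set g : ℝ × ℝ → ℝ × ℝ := Function.invFunOn Φ Ω with hg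
  have hgΦ : ∀ z ∈ Ω, g (Φ z) = z := fun z hz => hinj.leftInvOn_invFunOn hz
  have hex : ∀ x, ∀ s ∈ Ioo 0 Q, ∃ z ∈ Ω, Φ z = (x, s) := fun x s hs => by
    obtain ⟨z, hz, h1, h2⟩ := hsurj x s hs
    exact ⟨z, hz, by simp [hΦ, h1, h2]⟩
  have key : ∀ z ∈ Ω, ContinuousAt g (Φ z) ∧
      HasFDerivAt (fun q => B (g q)) (W z • ContinuousLinearMap.snd ℝ ℝ ℝ) (Φ z) := by
    intro z hz
    have hbz := hb z hz
    let e : (ℝ × ℝ) ≃L[ℝ] (ℝ × ℝ) := ContinuousLinearEquiv.equivOfInverse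
      ((ContinuousLinearMap.fst ℝ ℝ ℝ).prod
        (a z • ContinuousLinearMap.fst ℝ ℝ ℝ + b z • ContinuousLinearMap.snd ℝ ℝ ℝ))
      ((ContinuousLinearMap.fst ℝ ℝ ℝ).prod
        ((-(a z / b z)) • ContinuousLinearMap.fst ℝ ℝ ℝ +
          (b z)⁻¹ • ContinuousLinearMap.snd ℝ ℝ ℝ))
      (fun q => by ext <;> simp; field_simp; ring)
      (fun q => by ext <;> simp; field_simp; ring)
    have hΦd : HasStrictFDerivAt Φ (e : (ℝ × ℝ) →L[ℝ] (ℝ × ℝ)) z :=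
      hasStrictFDerivAt_fst.prodMk (hψ z hz)
    have hgd : HasFDerivAt g (e.symm : (ℝ × ℝ) →L[ℝ] (ℝ × ℝ)) (Φ z) := (hΦd.to_local_left_inverse
      (mem_of_superset (hΩ.mem_nhds hz) hgΦ)).hasFDerivAt
    refine ⟨hgd.continuousAt, ?_⟩
    have hBz : HasFDerivAt B (W z •
        (a z • ContinuousLinearMap.fst ℝ ℝ ℝ + b z • ContinuousLinearMap.snd ℝ ℝ ℝ)) (g (Φ z)) := by
      rw [hgΦ z hz]
      exact hB z hz
    refine (hBz.comp (Φ z) hgd).congr_fderiv ?_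
    ext <;> simp [e]
    · field_simp
      ring
    · field_simp
  have hWg : ∀ x, ∀ s ∈ Ioo 0 Q, W (g (x, s)) = W (g (0, s)) := by
    have hconst : ∀ x, ∀ s ∈ Ioo 0 Q, B (g (x, s)) = B (g (0, s)) := by
      intro x s hs
      have hd : ∀ x, HasDerivAt (fun x => B (g (x, s))) 0 x := fun x => by
        obtain ⟨z, hz, hzs⟩ := hex x s hs
        have := (key z hz).2
        rw [hzs] at this
        exact (this.comp_hasDerivAt (f := fun x : ℝ => (x, s)) x
          ((hasDerivAt_id x).prodMk (hasDerivAt_const x s))).congr_deriv (by simp)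
      exact is_const_of_deriv_eq_zero (fun x => (hd x).differentiableAt)
        (fun x => (hd x).deriv) x 0
    intro x s hs
    have hd : ∀ x, HasDerivAt (fun s => B (g (x, s))) (W (g (x, s))) s := fun x => by
      obtain ⟨z, hz, hzs⟩ := hex x s hs
      have := (key z hz).2
      rw [hzs] at this
      have h := this.comp_hasDerivAt (f := fun s : ℝ => (x, s)) s
          ((hasDerivAt_const s x).prodMk (hasDerivAt_id s))
      rw [← hzs, hgΦ z hz]
      exact h.congr_deriv (by simp)
    refine (hd x).unique ((hd 0).congr_of_eventuallyEq ?_)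
    filter_upwards [isOpen_Ioo.mem_nhds hs] with t ht using hconst x t ht
  refine ⟨fun s => W (g (0, s)), fun s hs => ContinuousAt.continuousWithinAt ?_, fun z hz => ?_⟩
  · obtain ⟨z, hz, hzs⟩ := hex 0 s hs
    have hgc := (key z hz).1
    have hWc : ContinuousAt W (g (Φ z)) := by
      rw [hgΦ z hz]; exact hW.continuousAt (hΩ.mem_nhds hz)
    have := hWc.comp hgc
    rw [hzs] at this
    exact this.comp (f := fun s : ℝ => ((0 : ℝ), s)) (by fun_prop)
  · beta_reduce
    rw [← hWg z.1 (ψ z) (hmaps z hz)]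
    exact congrArg W (hgΦ z hz).symm

/-- A solution of `Δψ = F(ψ)` in a half-strip that converges uniformly upstream to
`Q(3y² - 2y³)` has `F` determined by this profile. -/
lemma nonlinearity_eq_of_upstream_limit {Q L t : ℝ} {ψ p₁ p₂ d₁ d₂ : ℝ × ℝ → ℝ} {F : ℝ → ℝ}
    (ht : t ∈ Ioo (0 : ℝ) 1)
    (hc : ∀ z : ℝ × ℝ, z.1 < L → z.2 ∈ Ioo (0 : ℝ) 1 → ContinuousAt ψ z)
    (h1 : ∀ z : ℝ × ℝ, z.1 < L → z.2 ∈ Ioo (0 : ℝ) 1 →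
      HasDerivAt (fun x => ψ (x, z.2)) (p₁ z) z.1)
    (h2 : ∀ z : ℝ × ℝ, z.1 < L → z.2 ∈ Ioo (0 : ℝ) 1 →
      HasDerivAt (fun y => ψ (z.1, y)) (p₂ z) z.2)
    (h11 : ∀ z : ℝ × ℝ, z.1 < L → z.2 ∈ Ioo (0 : ℝ) 1 →
      HasDerivAt (fun x => p₁ (x, z.2)) (d₁ z) z.1)
    (h22 : ∀ z : ℝ × ℝ, z.1 < L → z.2 ∈ Ioo (0 : ℝ) 1 →
      HasDerivAt (fun y => p₂ (z.1, y)) (d₂ z) z.2)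
    (hlap : ∀ z : ℝ × ℝ, z.1 < L → z.2 ∈ Ioo (0 : ℝ) 1 → d₁ z + d₂ z = F (ψ z))
    (hlim : ∀ ε > 0, ∃ M : ℝ, ∀ x ≤ M, ∀ y ∈ Icc (0 : ℝ) 1,
      |ψ (x, y) - Q * (3 * y ^ 2 - 2 * y ^ 3)| ≤ ε)
    (hF : ContinuousAt F (Q * (3 * t ^ 2 - 2 * t ^ 3))) :
    F (Q * (3 * t ^ 2 - 2 * t ^ 3)) = 6 * Q * (1 - 2 * t) := by
  set s₀ := Q * (3 * t ^ 2 - 2 * t ^ 3) with hs₀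
  have main : ∀ σ : ℝ, |σ| = 1 → ¬ 0 < σ * (F s₀ - 6 * Q * (1 - 2 * t)) := by
    intro σ hσ hpos
    set d := σ * (F s₀ - 6 * Q * (1 - 2 * t)) with hd
    obtain ⟨δ, hδ, hδF⟩ := Metric.continuousAt_iff.1 hF (d / 4) (by positivity)
    have hφc : ContinuousAt (fun y : ℝ => Q * (3 * y ^ 2 - 2 * y ^ 3)) t := by fun_prop
    have hφc' : ContinuousAt (fun y : ℝ => 6 * Q * (1 - 2 * y)) t := by fun_prop
    obtain ⟨r, hr, hrall⟩ : ∃ r > 0, ∀ y : ℝ, |y - t| ≤ r → y ∈ Ioo (0 : ℝ) 1 ∧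
        |Q * (3 * y ^ 2 - 2 * y ^ 3) - s₀| < δ / 2 ∧
        |6 * Q * (1 - 2 * y) - 6 * Q * (1 - 2 * t)| < d / 4 := by
      have hev := (isOpen_Ioo.eventually_mem ht).and
        ((Metric.tendsto_nhds.1 hφc (δ / 2) (by positivity)).and
          (Metric.tendsto_nhds.1 hφc' (d / 4) (by positivity)))
      obtain ⟨r, hr, hball⟩ := Metric.nhds_basis_closedBall.eventually_iff.1 hev
      exact ⟨r, hr, fun y hy => hball (by simpa [Real.dist_eq] using hy)⟩
    set η := min (δ / 4) (d / 2 * r ^ 2 / 32) with hη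
    have hη0 : 0 < η := by positivity
    obtain ⟨M, hM⟩ := hlim η hη0
    set c : ℝ × ℝ := (min M L - 2 * r, t) with hcdef
    have hmem : ∀ z ∈ Metric.closedBall c r, z.1 < L ∧ z.1 ≤ M ∧ |z.2 - t| ≤ r := by
      intro z hz
      rw [Metric.mem_closedBall, Prod.dist_eq, max_le_iff, Real.dist_eq, Real.dist_eq] at hz
      have h3 := (abs_le.1 hz.1).2
      have h4 := min_le_left M L
      have h5 := min_le_right M L
      simp only [hcdef] at h3
      exact ⟨by linarith, by linarith, hz.2⟩
    have hin : ∀ z ∈ Metric.ball c r, z.1 < L ∧ z.2 ∈ Ioo (0 : ℝ) 1 := fun z hz => by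
      obtain ⟨e1, -, e3⟩ := hmem z (Metric.ball_subset_closedBall hz)
      exact ⟨e1, (hrall _ e3).1⟩
    have hq : ∀ y : ℝ, HasDerivAt (fun y : ℝ => Q * (3 * y ^ 2 - 2 * y ^ 3))
        (6 * Q * (y - y ^ 2)) y := fun y => by
      refine ((((hasDerivAt_pow 2 y).const_mul 3).sub
        ((hasDerivAt_pow 3 y).const_mul 2)).const_mul Q).congr_deriv ?_
      norm_num
      ring
    have hq' : ∀ y : ℝ, HasDerivAt (fun y : ℝ => 6 * Q * (y - y ^ 2))
        (6 * Q * (1 - 2 * y)) y := fun y => by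
      refine (((hasDerivAt_id y).sub (hasDerivAt_pow 2 y)).const_mul (6 * Q)).congr_deriv ?_
      norm_num
    have hle := mul_sq_le_of_laplacian_ge (c := c) (r := r) (ε := d / 2) (η := η)
      (v := fun z => σ * (ψ z - Q * (3 * z.2 ^ 2 - 2 * z.2 ^ 3)))
      (v₁ := fun z => σ * p₁ z) (v₂ := fun z => σ * (p₂ z - 6 * Q * (z.2 - z.2 ^ 2)))
      (d₁ := fun z => σ * d₁ z) (d₂ := fun z => σ * (d₂ z - 6 * Q * (1 - 2 * z.2)))
      hr (by positivity) ?_ ?_ ?_ ?_ ?_ ?_ ?_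
    · have := min_le_right (δ / 4) (d / 2 * r ^ 2 / 32)
      have h0 : 0 < d / 2 * r ^ 2 := by positivity
      linarith
    · intro z hz
      obtain ⟨e1, -, e3⟩ := hmem z hz
      have := hc z e1 (hrall _ e3).1
      exact ContinuousAt.continuousWithinAt (by fun_prop)
    · intro z hz
      exact ((h1 z (hin z hz).1 (hin z hz).2).sub_const (Q * (3 * z.2 ^ 2 - 2 * z.2 ^ 3))).const_mul σ
    · intro z hz
      exact ((h2 z (hin z hz).1 (hin z hz).2).sub (hq z.2)).const_mul σ
    · intro z hz
      exact (h11 z (hin z hz).1 (hin z hz).2).const_mul σ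
    · intro z hz
      exact ((h22 z (hin z hz).1 (hin z hz).2).sub (hq' z.2)).const_mul σ
    · intro z hz
      obtain ⟨e1, e2, e3⟩ := hmem z (Metric.ball_subset_closedBall hz)
      obtain ⟨f1, f2, f3⟩ := hrall _ e3
      have g1 := hM z.1 e2 z.2 (Ioo_subset_Icc_self f1)
      have g2 : dist (ψ z) s₀ < δ := by
        have g4 := min_le_left (δ / 4) (d / 2 * r ^ 2 / 32)
        have g5 := abs_sub_le (ψ z) (Q * (3 * z.2 ^ 2 - 2 * z.2 ^ 3)) s₀
        rw [Real.dist_eq]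
        linarith
      have g3 := hδF g2
      rw [Real.dist_eq] at g3
      have hA : -(d / 4) ≤ σ * (F (ψ z) - F s₀) := by
        have := neg_abs_le (σ * (F (ψ z) - F s₀))
        rw [abs_mul, hσ] at this
        linarith
      have hB : σ * (6 * Q * (1 - 2 * z.2) - 6 * Q * (1 - 2 * t)) ≤ d / 4 := by
        have := le_abs_self (σ * (6 * Q * (1 - 2 * z.2) - 6 * Q * (1 - 2 * t)))
        rw [abs_mul, hσ] at this
        linarith
      have hl := hlap z e1 f1
      have : σ * d₁ z + σ * (d₂ z - 6 * Q * (1 - 2 * z.2)) = σ * (F (ψ z) - F s₀) + d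
          - σ * (6 * Q * (1 - 2 * z.2) - 6 * Q * (1 - 2 * t)) := by
        rw [hd, ← hl]
        ring
      linarith
    · intro z hz
      obtain ⟨e1, e2, e3⟩ := hmem z hz
      rw [abs_mul, hσ, one_mul]
      exact hM z.1 e2 z.2 (Ioo_subset_Icc_self (hrall _ e3).1)
  have m1 := main 1 (by simp)
  have m2 := main (-1) (by simp)
  linarith

section Nozzle

variable {h₀ h₁ : ℝ → ℝ}

lemma isOpen_nozzle_s2 (hh₀ : Continuous h₀) (hh₁ : Continuous h₁) :
    IsOpen {x : ℝ × ℝ | h₀ x.1 < x.2 ∧ x.2 < h₁ x.1} :=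
  (isOpen_lt (hh₀.comp continuous_fst) continuous_snd).inter
    (isOpen_lt continuous_snd (hh₁.comp continuous_fst))

lemma mem_closure_nozzle_s2 {x y : ℝ} (hlt : h₀ x < h₁ x) (hy : y ∈ Icc (h₀ x) (h₁ x)) :
    (x, y) ∈ closure {x : ℝ × ℝ | h₀ x.1 < x.2 ∧ x.2 < h₁ x.1} := by
  rw [← closure_Ioo hlt.ne] at hy
  have hm : MapsTo (fun y : ℝ => (x, y)) (Ioo (h₀ x) (h₁ x))
      {x : ℝ × ℝ | h₀ x.1 < x.2 ∧ x.2 < h₁ x.1} := fun y hy => hy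
  exact hm.closure (by fun_prop) hy

variable {U v : ℝ × ℝ → ℝ} {K : NNReal} {Ω : Set (ℝ × ℝ)}

lemma hasDerivAt_stream_fst (hlt : ∀ x, h₀ x < h₁ x)
    (hΩ : Ω = {x : ℝ × ℝ | h₀ x.1 < x.2 ∧ x.2 < h₁ x.1})
    (hh₀ : Differentiable ℝ h₀) (hU : LipschitzWith K U)
    (hUd : ∀ z ∈ Ω, DifferentiableAt ℝ U z) (hvd : ∀ z ∈ Ω, DifferentiableAt ℝ v z)
    (hvc : ContinuousOn v (closure Ω)) (hdiv : ∀ z ∈ Ω, pd1 U z + pd2 v z = 0)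
    (hbc : ∀ x, v (x, h₀ x) = deriv h₀ x * U (x, h₀ x)) {z : ℝ × ℝ} (hz : z ∈ Ω) :
    HasDerivAt (fun x => ∫ s in (h₀ x)..z.2, U (x, s)) (-v z) z.1 := by
  obtain ⟨x₀, y⟩ := z
  have hc : ∀ x, Continuous fun s => U (x, s) := fun x => hU.continuous.comp (by fun_prop)
  have hz' : h₀ x₀ < y ∧ y < h₁ x₀ := by rwa [hΩ] at hz
  have hmem : ∀ s ∈ Ioo (h₀ x₀) y, (x₀, s) ∈ Ω := fun s hs => by
    rw [hΩ]; exact ⟨hs.1, hs.2.trans hz'.2⟩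
  obtain ⟨hint, hder⟩ := hasDerivAt_intervalIntegral_of_lipschitz hU hz'.1.le
    fun s hs => hUd _ (hmem s hs)
  have hend := hasDerivAt_intervalIntegral_moving_endpoint hU (hh₀ x₀).hasDerivAt
  have hval : ∫ s in (h₀ x₀)..y, -pd1 U (x₀, s) = v (x₀, y) - v (x₀, h₀ x₀) := by
    refine intervalIntegral.integral_eq_sub_of_hasDerivAt_of_le (f := fun s => v (x₀, s))
      hz'.1.le ?_ (fun s hs => ?_) hint.neg
    · refine hvc.comp (f := fun s : ℝ => (x₀, s)) (by fun_prop) fun s hs => ?_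
      rw [hΩ]
      exact mem_closure_nozzle_s2 (hlt x₀) ⟨hs.1, hs.2.trans hz'.2.le⟩
    · have h1 := (hvd _ (hmem s hs)).hasFDerivAt
      have h2 := h1.comp_hasDerivAt (f := fun s : ℝ => (x₀, s)) s
        ((hasDerivAt_const s x₀).prodMk (hasDerivAt_id s))
      refine h2.congr_deriv ?_
      have := hdiv _ (hmem s hs)
      simp only [pd2] at this
      linarith
  rw [intervalIntegral.integral_neg] at hval
  refine ((hder.sub hend).congr_deriv ?_).congr_of_eventuallyEq
    (Eventually.of_forall fun x => ?_)
  · have := hbc x₀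
    linarith
  · have := intervalIntegral.integral_add_adjacent_intervals (μ := volume)
      ((hc x).intervalIntegrable (h₀ x₀) (h₀ x)) ((hc x).intervalIntegrable (h₀ x) y)
    simp only [Pi.sub_apply]
    linarith

lemma hasStrictFDerivAt_stream (hlt : ∀ x, h₀ x < h₁ x)
    (hΩ : Ω = {x : ℝ × ℝ | h₀ x.1 < x.2 ∧ x.2 < h₁ x.1}) (hopen : IsOpen Ω)
    (hh₀ : Differentiable ℝ h₀) (hU : LipschitzWith K U)
    (hUd : ∀ z ∈ Ω, DifferentiableAt ℝ U z) (hvd : ∀ z ∈ Ω, DifferentiableAt ℝ v z)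
    (hvc : ContinuousOn v (closure Ω)) (hdiv : ∀ z ∈ Ω, pd1 U z + pd2 v z = 0)
    (hbc : ∀ x, v (x, h₀ x) = deriv h₀ x * U (x, h₀ x)) {z : ℝ × ℝ} (hz : z ∈ Ω) :
    HasStrictFDerivAt (fun z : ℝ × ℝ => ∫ s in (h₀ z.1)..z.2, U (z.1, s))
      ((-v z) • ContinuousLinearMap.fst ℝ ℝ ℝ + U z • ContinuousLinearMap.snd ℝ ℝ ℝ) z := by
  have hc : ∀ x, Continuous fun s => U (x, s) := fun x => hU.continuous.comp (by fun_prop)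
  have hev := hopen.eventually_mem hz
  have hvz := (hvd z hz).continuousAt
  have hUz := (hUd z hz).continuousAt
  have h := hasStrictFDerivAt_uncurry_coprod (𝕜 := ℝ) (u := z)
    (f := fun x y => ∫ s in (h₀ x)..y, U (x, s))
    (f₁ := fun x y => ContinuousLinearMap.toSpanSingleton ℝ (-v (x, y)))
    (f₂ := fun x y => ContinuousLinearMap.toSpanSingleton ℝ (U (x, y)))
    (hev.mono fun w hw =>
      (hasDerivAt_stream_fst hlt hΩ hh₀ hU hUd hvd hvc hdiv hbc hw).hasFDerivAt)
    (hev.mono fun w _ =>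
      ((hc w.1).integral_hasStrictDerivAt (h₀ w.1) w.2).hasDerivAt.hasFDerivAt) ?_ ?_
  · refine h.congr_fderiv ?_
    ext <;> simp [Function.HasUncurry.uncurry]
  · have hcl := (ContinuousLinearMap.toSpanSingletonCLE (𝕜 := ℝ) (E := ℝ)).continuous
    exact hcl.continuousAt.comp hvz.neg
  · have hcl := (ContinuousLinearMap.toSpanSingletonCLE (𝕜 := ℝ) (E := ℝ)).continuous
    exact hcl.continuousAt.comp hUz

end Nozzle

/-- Bernoulli's law: the head `p + |u|²/2` has differential `(∂₂u₁ - ∂₁u₂) (u₁ dx₂ - u₂ dx₁)`. -/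
lemma hasFDerivAt_bernoulli {u₁ u₂ p : ℝ × ℝ → ℝ} {z : ℝ × ℝ}
    (h1 : DifferentiableAt ℝ u₁ z) (h2 : DifferentiableAt ℝ u₂ z) (hp : DifferentiableAt ℝ p z)
    (he1 : u₁ z * pd1 u₁ z + u₂ z * pd2 u₁ z + pd1 p z = 0)
    (he2 : u₁ z * pd1 u₂ z + u₂ z * pd2 u₂ z + pd2 p z = 0) :
    HasFDerivAt (fun z => p z + (u₁ z * u₁ z + u₂ z * u₂ z) / 2)
      ((pd2 u₁ z - pd1 u₂ z) •
        ((-u₂ z) • ContinuousLinearMap.fst ℝ ℝ ℝ + u₁ z • ContinuousLinearMap.snd ℝ ℝ ℝ)) z := by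
  have h := hp.hasFDerivAt.add (((h1.hasFDerivAt.mul h1.hasFDerivAt).add
    (h2.hasFDerivAt.mul h2.hasFDerivAt)).const_mul (1 / 2))
  refine (h.congr_fderiv ?_).congr_of_eventuallyEq (Eventually.of_forall fun y => ?_)
  · simp only [pd1, pd2] at *
    ext
    · simp
      linear_combination he1
    · simp
      linear_combination he2
  · simp only [Pi.add_apply, Pi.mul_apply]
    ring

lemma lap_eq_of_hasFDerivAt {Ω : Set (ℝ × ℝ)} (hΩ : IsOpen Ω) {ψ u₁ u₂ : ℝ × ℝ → ℝ}
    (hψ : ∀ z ∈ Ω, HasFDerivAt ψ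
      ((-u₂ z) • ContinuousLinearMap.fst ℝ ℝ ℝ + u₁ z • ContinuousLinearMap.snd ℝ ℝ ℝ) z)
    {z : ℝ × ℝ} (hz : z ∈ Ω) : lap ψ z = pd2 u₁ z - pd1 u₂ z := by
  have e1 : pd1 ψ =ᶠ[𝓝 z] fun y => -u₂ y := by
    filter_upwards [hΩ.mem_nhds hz] with y hy
    simp [pd1, (hψ y hy).fderiv]
  have e2 : pd2 ψ =ᶠ[𝓝 z] u₁ := by
    filter_upwards [hΩ.mem_nhds hz] with y hy
    simp [pd2, (hψ y hy).fderiv]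
  simp only [lap]
  rw [pd1, pd2, e1.fderiv_eq, e2.fderiv_eq]
  simp only [pd1, pd2, fderiv_fun_neg, neg_apply]
  ring

/-- Stream function formulation: for a solution of the Euler system with flux `Q`,
positive horizontal velocity and Poiseuille upstream behavior, the stream function
`ψ(x₁,x₂) = ∫_{h₀(x₁)}^{x₂} u₁(x₁,s) ds` satisfies `0 < ψ < Q` in `Ω` and solves
`Δψ = f(ψ)` in `Ω`, where `f(s) = 6Q(1 − 2κ(s))` and `κ` inverts `t ↦ Q(3t²−2t³)`. -/
theorem stmt2
    (Q α : ℝ) (hQ : 0 < Q) (hα : α ∈ Set.Ioo (0 : ℝ) 1)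
    (κ : ℝ → ℝ) (hκ : ∀ t ∈ Set.Icc (0 : ℝ) 1, κ (Q * (3 * t ^ 2 - 2 * t ^ 3)) = t)
    (f : ℝ → ℝ) (hf : ∀ s : ℝ, f s = 6 * Q * (1 - 2 * κ s))
    (h₀ h₁ : ℝ → ℝ)
    (hh₀ : ContDiff ℝ 2 h₀) (hh₁ : ContDiff ℝ 2 h₁)
    (hh₀α : ∃ C : ℝ, ∀ x y : ℝ, |deriv (deriv h₀) x - deriv (deriv h₀) y| ≤ C * |x - y| ^ α)
    (hh₁α : ∃ C : ℝ, ∀ x y : ℝ, |deriv (deriv h₁) x - deriv (deriv h₁) y| ≤ C * |x - y| ^ α)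
    (hlt : ∀ x₁ : ℝ, h₀ x₁ < h₁ x₁)
    (Lm Lp a b : ℝ) (hLm : Lm < 0) (hLp : 0 < Lp)
    (ha : 0 ≤ a) (hab : a < b) (hb : b ≤ 1)
    (hup : ∀ x₁ ≤ Lm, h₀ x₁ = 0 ∧ h₁ x₁ = 1)
    (hdown : ∀ x₁ ≥ Lp, h₀ x₁ = a ∧ h₁ x₁ = b)
    (Ω : Set (ℝ × ℝ)) (hΩ : Ω = {x : ℝ × ℝ | h₀ x.1 < x.2 ∧ x.2 < h₁ x.1})
    (u : ℝ × ℝ → ℝ × ℝ) (p : ℝ × ℝ → ℝ)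
    (hu : IsEulerSlip h₀ h₁ Ω u p)
    (hflux : ∀ x₁ : ℝ, (∫ s in (h₀ x₁)..(h₁ x₁), (u (x₁, s)).1) = Q)
    (hu1 : ∀ x ∈ Ω, 0 < (u x).1)
    (huf : ∀ ε > 0, ∃ M : ℝ, ∀ x₁ ≤ M, ∀ x₂ ∈ Set.Icc (0 : ℝ) 1,
      |(u (x₁, x₂)).1 - 6 * Q * x₂ * (1 - x₂)| < ε)
    (ψ : ℝ × ℝ → ℝ)
    (hψ : ∀ x : ℝ × ℝ, ψ x = ∫ s in (h₀ x.1)..(x.2), (u (x.1, s)).1) :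
    ∀ x ∈ Ω, (0 < ψ x ∧ ψ x < Q) ∧ lap ψ x = f (ψ x) := by
  obtain ⟨huC, ⟨K, hK⟩, hpC, heq, hbc⟩ := hu
  have hopen : IsOpen Ω := hΩ ▸ isOpen_nozzle_s2 hh₀.continuous hh₁.continuous
  have hcl : ∀ x, ∀ y ∈ Icc (h₀ x) (h₁ x), (x, y) ∈ closure Ω := fun x y hy =>
    hΩ ▸ mem_closure_nozzle_s2 (hlt x) hy
  have hmemΩ : ∀ x, ∀ y ∈ Ioo (h₀ x) (h₁ x), (x, y) ∈ Ω := fun x y hy => by rw [hΩ]; exact hy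
  have hΩmem : ∀ z ∈ Ω, z.2 ∈ Ioo (h₀ z.1) (h₁ z.1) := fun z hz => by rw [hΩ] at hz; exact hz
  obtain ⟨U, hU, hUeq⟩ := (LipschitzWith.prod_fst.comp_lipschitzOnWith hK).extend_real
  replace hUeq : ∀ z ∈ closure Ω, (u z).1 = U z := hUeq
  set v : ℝ × ℝ → ℝ := fun z => (u z).2 with hv
  have hUev : ∀ z ∈ Ω, (fun y => (u y).1) =ᶠ[𝓝 z] U := fun z hz =>
    mem_of_superset (hopen.mem_nhds hz) fun y hy => hUeq y (subset_closure hy)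
  have huA : ∀ z ∈ Ω, ContDiffAt ℝ 2 u z := fun z hz => huC.contDiffAt (hopen.mem_nhds hz)
  have hUA : ∀ z ∈ Ω, ContDiffAt ℝ 2 U z := fun z hz =>
    ((huA z hz).fst).congr_of_eventuallyEq (hUev z hz).symm
  have hvA : ∀ z ∈ Ω, ContDiffAt ℝ 2 v z := fun z hz => (huA z hz).snd
  have hUd : ∀ z ∈ Ω, DifferentiableAt ℝ U z := fun z hz => (hUA z hz).differentiableAt (by simp)
  have hvd : ∀ z ∈ Ω, DifferentiableAt ℝ v z := fun z hz => (hvA z hz).differentiableAt (by simp)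
  have hpd : ∀ z ∈ Ω, DifferentiableAt ℝ p z := fun z hz =>
    (hpC.contDiffAt (hopen.mem_nhds hz)).differentiableAt (by simp)
  have hvc : ContinuousOn v (closure Ω) := hK.continuousOn.snd
  have hpd1 : ∀ z ∈ Ω, pd1 (fun y => (u y).1) z = pd1 U z := fun z hz => by
    rw [pd1, (hUev z hz).fderiv_eq, pd1]
  have hpd2 : ∀ z ∈ Ω, pd2 (fun y => (u y).1) z = pd2 U z := fun z hz => by
    rw [pd2, (hUev z hz).fderiv_eq, pd2]
  have heqU : ∀ z ∈ Ω, U z * pd1 U z + v z * pd2 U z + pd1 p z = 0 ∧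
      U z * pd1 v z + v z * pd2 v z + pd2 p z = 0 ∧ pd1 U z + pd2 v z = 0 := fun z hz => by
    have := heq z hz
    rwa [hpd1 z hz, hpd2 z hz, hUeq z (subset_closure hz)] at this
  have hbcU : ∀ x, v (x, h₀ x) = deriv h₀ x * U (x, h₀ x) := fun x => by
    rw [← hUeq _ (hcl x _ (left_mem_Icc.2 (hlt x).le))]
    exact (hbc x).1
  have hUpos : ∀ z ∈ Ω, 0 < U z := fun z hz => hUeq z (subset_closure hz) ▸ hu1 z hz
  have hUc : ∀ x, Continuous fun s => U (x, s) := fun x => hU.continuous.comp (by fun_prop)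
  have hψU : ∀ x, ∀ y ∈ Icc (h₀ x) (h₁ x), ψ (x, y) = ∫ s in (h₀ x)..y, U (x, s) := by
    intro x y hy
    rw [hψ]
    refine intervalIntegral.integral_congr fun s hs => hUeq _ (hcl x s ?_)
    rw [uIcc_of_le hy.1] at hs
    exact ⟨hs.1, hs.2.trans hy.2⟩
  have hψd : ∀ z ∈ Ω, HasStrictFDerivAt ψ
      ((-v z) • ContinuousLinearMap.fst ℝ ℝ ℝ + U z • ContinuousLinearMap.snd ℝ ℝ ℝ) z := by
    intro z hz
    refine (hasStrictFDerivAt_stream hlt hΩ hopen (hh₀.differentiable (by simp)) hU hUd hvd hvc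
      (fun z hz => (heqU z hz).2.2) hbcU hz).congr_of_eventuallyEq ?_
    filter_upwards [hopen.mem_nhds hz] with y hy
    exact (hψU y.1 y.2 (Ioo_subset_Icc_self (hΩmem y hy))).symm
  have hmono : ∀ x, StrictMonoOn (fun y => ψ (x, y)) (Icc (h₀ x) (h₁ x)) := by
    intro x y hy y' hy' hlt'
    have hadd := intervalIntegral.integral_add_adjacent_intervals (μ := volume)
      ((hUc x).intervalIntegrable (h₀ x) y) ((hUc x).intervalIntegrable y y')
    have hpos := intervalIntegral.intervalIntegral_pos_of_pos_on
      ((hUc x).intervalIntegrable y y')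
      (fun s hs => hUpos _ (hmemΩ x s ⟨hy.1.trans_lt hs.1, hs.2.trans_le hy'.2⟩)) hlt'
    simp only [hψU x y hy, hψU x y' hy']
    linarith
  have hψbot : ∀ x, ψ (x, h₀ x) = 0 := fun x => by simp [hψ]
  have hψtop : ∀ x, ψ (x, h₁ x) = Q := fun x => by rw [hψ]; exact hflux x
  have hψc : ∀ x, ContinuousOn (fun y => ψ (x, y)) (Icc (h₀ x) (h₁ x)) := fun x =>
    (intervalIntegral.continuous_primitive
      (fun a b => (hUc x).intervalIntegrable a b) (h₀ x)).continuousOn.congr (hψU x)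
  have hrange : ∀ z ∈ Ω, ψ z ∈ Ioo 0 Q := by
    intro z hz
    have hz' := hΩmem z hz
    have hzc := Ioo_subset_Icc_self hz'
    have hl := (hlt z.1).le
    have k1 := hmono z.1 (left_mem_Icc.2 hl) hzc hz'.1
    have k2 := hmono z.1 hzc (right_mem_Icc.2 hl) hz'.2
    simp only [hψbot, hψtop] at k1 k2
    exact ⟨k1, k2⟩
  have hinj : InjOn (fun z : ℝ × ℝ => (z.1, ψ z)) Ω := by
    rintro ⟨x, y⟩ hz ⟨x', y'⟩ hz' heq'
    obtain ⟨rfl, h2⟩ := Prod.mk.inj heq'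
    exact Prod.ext rfl ((hmono x).injOn (Ioo_subset_Icc_self (hΩmem _ hz))
      (Ioo_subset_Icc_self (hΩmem _ hz')) h2)
  have hsurj : ∀ x, ∀ s ∈ Ioo 0 Q, ∃ z ∈ Ω, z.1 = x ∧ ψ z = s := by
    intro x s hs
    have := intermediate_value_Ioo (hlt x).le (hψc x)
    simp only [hψbot, hψtop] at this
    obtain ⟨y, hy, hys⟩ := this hs
    exact ⟨(x, y), hmemΩ x y hy, rfl, hys⟩
  have hfderiv : ∀ {g : ℝ × ℝ → ℝ}, (∀ z ∈ Ω, ContDiffAt ℝ 2 g z) →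
      ContinuousOn (fderiv ℝ g) Ω := fun hg z hz =>
    ((hg z hz).continuousAt_fderiv (by simp)).continuousWithinAt
  have hWc : ContinuousOn (fun z => pd2 U z - pd1 v z) Ω :=
    ((hfderiv hUA).clm_apply continuousOn_const).sub ((hfderiv hvA).clm_apply continuousOn_const)
  obtain ⟨F, hFc, hF⟩ := exists_continuousOn_comp_eq_of_hasFDerivAt_smul hopen hψd
    (fun z hz => (hUpos z hz).ne')
    (fun z hz => hasFDerivAt_bernoulli (hUd z hz) (hvd z hz) (hpd z hz) (heqU z hz).1
      (heqU z hz).2.1) hWc hinj hrange hsurj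
  have hlim : ∀ ε > 0, ∃ M : ℝ, ∀ x ≤ M, ∀ y ∈ Icc (0 : ℝ) 1,
      |ψ (x, y) - Q * (3 * y ^ 2 - 2 * y ^ 3)| ≤ ε := by
    intro ε hε
    obtain ⟨M, hM⟩ := huf ε hε
    refine ⟨min M Lm, fun x hx y hy => ?_⟩
    obtain ⟨e0, e1⟩ := hup x (hx.trans (min_le_right _ _))
    have hprim : ∫ s in (0 : ℝ)..y, 6 * Q * s * (1 - s) = Q * (3 * y ^ 2 - 2 * y ^ 3) := by
      rw [intervalIntegral.integral_eq_sub_of_hasDerivAt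
        (f := fun s => Q * (3 * s ^ 2 - 2 * s ^ 3)) (fun s _ => ?_)
        (Continuous.intervalIntegrable (by fun_prop) _ _)]
      · ring
      · refine ((((hasDerivAt_pow 2 s).const_mul 3).sub
          ((hasDerivAt_pow 3 s).const_mul 2)).const_mul Q).congr_deriv ?_
        norm_num
        ring
    rw [hψU x y (by rwa [e0, e1]), e0, ← hprim, ← intervalIntegral.integral_sub
      ((hUc x).intervalIntegrable _ _) (Continuous.intervalIntegrable (by fun_prop) _ _)]
    have hb := intervalIntegral.norm_integral_le_of_norm_le_const (a := 0) (b := y) (C := ε)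
      (f := fun s => U (x, s) - 6 * Q * s * (1 - s)) fun s hs => by
        rw [uIoc_of_le hy.1] at hs
        have hs' : s ∈ Icc (0 : ℝ) 1 := ⟨hs.1.le, hs.2.trans hy.2⟩
        rw [← hUeq _ (hcl x s (by rwa [e0, e1]))]
        exact (hM x (hx.trans (min_le_left _ _)) s hs').le
    rw [Real.norm_eq_abs, sub_zero, abs_of_nonneg hy.1] at hb
    exact hb.trans (mul_le_of_le_one_right hε.le hy.2)
  have hup' : ∀ z : ℝ × ℝ, z.1 < Lm → z.2 ∈ Ioo (0 : ℝ) 1 → z ∈ Ω := fun z hz1 hz2 => by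
    obtain ⟨e0, e1⟩ := hup z.1 hz1.le
    exact hmemΩ z.1 z.2 (by rwa [e0, e1])
  have hx : ∀ {g : ℝ × ℝ → ℝ} {z : ℝ × ℝ} {g' : ℝ × ℝ →L[ℝ] ℝ}, HasFDerivAt g g' z →
      HasDerivAt (fun x => g (x, z.2)) (g' (1, 0)) z.1 := fun {g z g'} hg =>
    hg.comp_hasDerivAt (f := fun x : ℝ => (x, z.2)) z.1
      ((hasDerivAt_id z.1).prodMk (hasDerivAt_const z.1 z.2))
  have hy : ∀ {g : ℝ × ℝ → ℝ} {z : ℝ × ℝ} {g' : ℝ × ℝ →L[ℝ] ℝ}, HasFDerivAt g g' z →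
      HasDerivAt (fun y => g (z.1, y)) (g' (0, 1)) z.2 := fun {g z g'} hg =>
    hg.comp_hasDerivAt (f := fun y : ℝ => (z.1, y)) z.2
      ((hasDerivAt_const z.2 z.1).prodMk (hasDerivAt_id z.2))
  intro z hz
  refine ⟨hrange z hz, ?_⟩
  rw [lap_eq_of_hasFDerivAt hopen (fun y hy => (hψd y hy).hasFDerivAt) hz, hF z hz, hf]
  obtain ⟨t, ht, hts⟩ : ∃ t ∈ Ioo (0 : ℝ) 1, Q * (3 * t ^ 2 - 2 * t ^ 3) = ψ z := by
    have := intermediate_value_Ioo (f := fun t : ℝ => Q * (3 * t ^ 2 - 2 * t ^ 3))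
      zero_le_one (by fun_prop)
    have hz' := hrange z hz
    exact this ⟨by norm_num; exact hz'.1, by norm_num; exact hz'.2⟩
  have hmem : Q * (3 * t ^ 2 - 2 * t ^ 3) ∈ Ioo 0 Q := hts ▸ hrange z hz
  rw [← hts, hκ t (Ioo_subset_Icc_self ht)]
  refine nonlinearity_eq_of_upstream_limit (L := Lm) (p₁ := fun z => -v z) (p₂ := U)
    (d₁ := fun z => -pd1 v z) (d₂ := pd2 U) ht
    (fun z h1 h2 => (hψd z (hup' z h1 h2)).hasFDerivAt.continuousAt)
    (fun z h1 h2 => (hx (hψd z (hup' z h1 h2)).hasFDerivAt).congr_deriv (by simp))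
    (fun z h1 h2 => (hy (hψd z (hup' z h1 h2)).hasFDerivAt).congr_deriv (by simp))
    (fun z h1 h2 => (hx (hvd z (hup' z h1 h2)).hasFDerivAt).neg)
    (fun z h1 h2 => hy (hUd z (hup' z h1 h2)).hasFDerivAt)
    (fun z h1 h2 => ?_) hlim (hFc.continuousAt (isOpen_Ioo.mem_nhds hmem))
  rw [← hF z (hup' z h1 h2)]
  ring
end
end

section
/- The function κ (the inverse of φ̄₁(t)=Q(3t²−2t³) on [0,1]) is Hölder continuous with exponent 1/2 on [0,Q] (there exists C>0 with |κ(t)−κ(t')|≤C|t−t'|^{1/2} for all t,t'∈[0,Q]) and is infinitely differentiable on the open interval (0,Q). Consequently the function f(s)=6Q(1−2κ(s)) satisfies f∈C^{1/2}([0,Q])∩C^∞((0,Q)); moreover this regularity is optimal: for every β>1/2 there is no constant C with |f(t)−f(t')|≤C|t−t'|^β for all t,t'∈[0,Q]. -/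
open Real Set MeasureTheory

noncomputable section

/-- The smoothstep polynomial `3t² - 2t³` separates points of `[0,1]` at least quadratically. -/
lemma sq_sub_le_smoothstep_sub {a b : ℝ} (ha : 0 ≤ a) (hab : a ≤ b) (hb : b ≤ 1) :
    (b - a) ^ 2 ≤ (3 * b ^ 2 - 2 * b ^ 3) - (3 * a ^ 2 - 2 * a ^ 3) := by
  have h : b - a ≤ 3 * (a + b) - 2 * (a ^ 2 + a * b + b ^ 2) := by
    nlinarith [mul_nonneg ha (sub_nonneg.2 hb),
      mul_nonneg (sub_nonneg.2 hab) (by linarith : 0 ≤ 1 - (b - a))]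
  nlinarith [mul_le_mul_of_nonneg_left h (sub_nonneg.2 hab)]

lemma sq_sub_le_abs_smoothstep_sub {a b : ℝ} (ha : a ∈ Icc (0 : ℝ) 1) (hb : b ∈ Icc (0 : ℝ) 1) :
    (a - b) ^ 2 ≤ |(3 * a ^ 2 - 2 * a ^ 3) - (3 * b ^ 2 - 2 * b ^ 3)| := by
  rcases le_total a b with h | h
  · rw [abs_sub_comm]
    exact (by ring : (a - b) ^ 2 = (b - a) ^ 2) ▸
      (sq_sub_le_smoothstep_sub ha.1 h hb.2).trans (le_abs_self _)
  · exact (sq_sub_le_smoothstep_sub hb.1 h ha.2).trans (le_abs_self _)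

lemma surjOn_smoothstep (Q : ℝ) :
    SurjOn (fun t : ℝ => Q * (3 * t ^ 2 - 2 * t ^ 3)) (Icc 0 1) (Icc 0 Q) := by
  have h := intermediate_value_Icc (zero_le_one (α := ℝ))
    (f := fun t : ℝ => Q * (3 * t ^ 2 - 2 * t ^ 3)) (by fun_prop)
  norm_num at h
  exact h

lemma holder_of_smoothstep_leftInverse {Q : ℝ} (hQ : 0 < Q) {κ : ℝ → ℝ}
    (hκ : ∀ t ∈ Icc (0 : ℝ) 1, κ (Q * (3 * t ^ 2 - 2 * t ^ 3)) = t)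
    {s s' : ℝ} (hs : s ∈ Icc 0 Q) (hs' : s' ∈ Icc 0 Q) :
    |κ s - κ s'| ≤ (√Q)⁻¹ * |s - s'| ^ ((1 : ℝ) / 2) := by
  obtain ⟨a, ha, rfl⟩ := surjOn_smoothstep Q hs
  obtain ⟨b, hb, rfl⟩ := surjOn_smoothstep Q hs'
  dsimp only
  rw [hκ a ha, hκ b hb, ← Real.sqrt_eq_rpow, ← mul_sub, abs_mul, abs_of_pos hQ,
    Real.sqrt_mul hQ.le, inv_mul_cancel_left₀ (Real.sqrt_pos.2 hQ).ne']
  exact Real.abs_le_sqrt (sq_sub_le_abs_smoothstep_sub ha hb)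

lemma contDiffOn_of_smoothstep_leftInverse {Q : ℝ} (hQ : 0 < Q) {κ : ℝ → ℝ}
    (hκ : ∀ t ∈ Icc (0 : ℝ) 1, κ (Q * (3 * t ^ 2 - 2 * t ^ 3)) = t) :
    ContDiffOn ℝ (⊤ : ℕ∞) κ (Ioo 0 Q) := by
  intro s hs
  obtain ⟨a, ha, rfl⟩ := surjOn_smoothstep Q (Ioo_subset_Icc_self hs)
  have ha0 : a ≠ 0 := by rintro rfl; simp at hs
  have ha1 : a ≠ 1 := by rintro rfl; norm_num at hs
  have ha' : a ∈ Ioo (0 : ℝ) 1 := ⟨ha.1.lt_of_ne' ha0, ha.2.lt_of_ne ha1⟩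
  set φ : ℝ → ℝ := fun t => Q * (3 * t ^ 2 - 2 * t ^ 3)
  have hsmooth : ContDiffAt ℝ (⊤ : ℕ∞) φ a := by fun_prop
  have hne : 6 * Q * (a * (1 - a)) ≠ 0 :=
    mul_ne_zero (by positivity) (mul_ne_zero ha0 (sub_ne_zero.2 ha1.symm))
  have hderiv : HasDerivAt φ (6 * Q * (a * (1 - a))) a := by
    have h := ((((hasDerivAt_id a).pow 2).const_mul 3).sub
      (((hasDerivAt_id a).pow 3).const_mul 2)).const_mul Q
    refine HasDerivAt.congr_deriv (f := φ) h ?_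
    simp only [id, Nat.cast_ofNat]
    ring
  have hfderiv : HasFDerivAt φ
      (ContinuousLinearEquiv.unitsEquivAut ℝ (Units.mk0 _ hne) : ℝ →L[ℝ] ℝ) a :=
    hderiv.hasFDerivAt.congr_fderiv (by ext; simp)
  have htop : ((⊤ : ℕ∞) : WithTop ℕ∞) ≠ 0 := by simp
  have hinv := hsmooth.to_localInverse hfderiv htop
  have hstrict := hsmooth.hasStrictFDerivAt' hfderiv htop
  have himage : hsmooth.localInverse hfderiv htop (φ a) = a := hstrict.localInverse_apply_image
  refine (hinv.congr_of_eventuallyEq ?_).contDiffWithinAt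
  have hmem : ∀ᶠ y in nhds (φ a), hsmooth.localInverse hfderiv htop y ∈ Ioo (0 : ℝ) 1 :=
    hinv.continuousAt.eventually_mem (himage.symm ▸ Ioo_mem_nhds ha'.1 ha'.2)
  filter_upwards [hmem, hstrict.eventually_right_inverse] with y hy hright
  calc κ y = κ (φ (hsmooth.localInverse hfderiv htop y)) := congrArg κ hright.symm
    _ = _ := hκ _ (Ioo_subset_Icc_self hy)

lemma not_holder_of_smoothstep_leftInverse {Q : ℝ} (hQ : 0 < Q) {κ : ℝ → ℝ}
    (hκ : ∀ t ∈ Icc (0 : ℝ) 1, κ (Q * (3 * t ^ 2 - 2 * t ^ 3)) = t) {β : ℝ} (hβ : 1 / 2 < β) :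
    ¬ ∃ C : ℝ, ∀ t ∈ Icc (0 : ℝ) Q, ∀ t' ∈ Icc (0 : ℝ) Q, |κ t - κ t'| ≤ C * |t - t'| ^ β := by
  rintro ⟨C, hC⟩
  have hκ0 : κ 0 = 0 := by simpa using hκ 0 (by simp)
  have hbound : ∀ x ∈ Ioo (0 : ℝ) 1, 1 ≤ |C| * (3 * Q) ^ β * x ^ (2 * β - 1) := by
    intro x hx
    have hp : 0 ≤ 3 * x ^ 2 - 2 * x ^ 3 := by
      nlinarith [mul_nonneg (sq_nonneg x) (sub_nonneg.2 hx.2.le), sq_nonneg x]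
    have hp1 : 3 * x ^ 2 - 2 * x ^ 3 ≤ 1 := by
      nlinarith [mul_nonneg (sq_nonneg (1 - x)) (by linarith [hx.1] : 0 ≤ 1 + 2 * x)]
    have h := hC (Q * (3 * x ^ 2 - 2 * x ^ 3)) ⟨by positivity, by nlinarith⟩ 0 ⟨le_rfl, hQ.le⟩
    rw [hκ x (Ioo_subset_Icc_self hx), hκ0, sub_zero, sub_zero, abs_of_pos hx.1,
      abs_of_nonneg (by positivity)] at h
    have hle : Q * (3 * x ^ 2 - 2 * x ^ 3) ≤ 3 * Q * x ^ 2 := by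
      nlinarith [mul_pos hQ (pow_pos hx.1 3)]
    have hpow : (3 * Q * x ^ 2) ^ β = (3 * Q) ^ β * x ^ (2 * β - 1) * x := by
      rw [Real.mul_rpow (by positivity) (by positivity), ← Real.rpow_natCast_mul hx.1.le, mul_assoc,
        ← Real.rpow_add_one hx.1.ne']
      norm_num
    have h' : 1 * x ≤ |C| * (3 * Q) ^ β * x ^ (2 * β - 1) * x := by
      calc 1 * x ≤ C * (Q * (3 * x ^ 2 - 2 * x ^ 3)) ^ β := by linarith
        _ ≤ |C| * (3 * Q * x ^ 2) ^ β := by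
          gcongr
          exact le_abs_self C
        _ = _ := by rw [hpow]; ring
    exact le_of_mul_le_mul_right h' hx.1
  have hlim : Filter.Tendsto (fun x : ℝ => |C| * (3 * Q) ^ β * x ^ (2 * β - 1))
      (nhdsWithin 0 (Ioi 0)) (nhds 0) := by
    have h := ((Real.continuousAt_rpow_const 0 (2 * β - 1) (Or.inr (by linarith))).tendsto.const_mul
      (|C| * (3 * Q) ^ β)).mono_left (nhdsWithin_le_nhds (s := Ioi 0))
    rwa [Real.zero_rpow (by linarith), mul_zero] at h
  have : (1 : ℝ) ≤ 0 := ge_of_tendsto hlim <| by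
    filter_upwards [Ioo_mem_nhdsGT (zero_lt_one (α := ℝ))] with x hx using hbound x hx
  linarith

/-- Regularity of `κ` and `f`: `κ`, the inverse of `t ↦ Q(3t²−2t³)` on `[0,1]`, is
`1/2`-Hölder on `[0,Q]` and `C^∞` on `(0,Q)`; hence `f(s) = 6Q(1−2κ(s))` belongs to
`C^{1/2}([0,Q]) ∩ C^∞((0,Q))`, and this regularity is optimal: for every `β > 1/2`
there is no constant `C` with `|f(t)−f(t')| ≤ C|t−t'|^β` on `[0,Q]`. -/
theorem stmt3
    (Q : ℝ) (hQ : 0 < Q)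
    (κ : ℝ → ℝ) (hκ : ∀ t ∈ Set.Icc (0 : ℝ) 1, κ (Q * (3 * t ^ 2 - 2 * t ^ 3)) = t)
    (f : ℝ → ℝ) (hf : ∀ s : ℝ, f s = 6 * Q * (1 - 2 * κ s)) :
    (∃ C > 0, ∀ t ∈ Set.Icc (0 : ℝ) Q, ∀ t' ∈ Set.Icc (0 : ℝ) Q,
      |κ t - κ t'| ≤ C * |t - t'| ^ ((1 : ℝ) / 2)) ∧
    ContDiffOn ℝ (⊤ : ℕ∞) κ (Set.Ioo 0 Q) ∧
    (∃ C > 0, ∀ t ∈ Set.Icc (0 : ℝ) Q, ∀ t' ∈ Set.Icc (0 : ℝ) Q,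
      |f t - f t'| ≤ C * |t - t'| ^ ((1 : ℝ) / 2)) ∧
    ContDiffOn ℝ (⊤ : ℕ∞) f (Set.Ioo 0 Q) ∧
    (∀ β : ℝ, (1 : ℝ) / 2 < β →
      ¬ ∃ C : ℝ, ∀ t ∈ Set.Icc (0 : ℝ) Q, ∀ t' ∈ Set.Icc (0 : ℝ) Q,
        |f t - f t'| ≤ C * |t - t'| ^ β) := by
  have hsub : ∀ t t', |f t - f t'| = 12 * Q * |κ t - κ t'| := fun t t' => by
    rw [hf, hf, show 6 * Q * (1 - 2 * κ t) - 6 * Q * (1 - 2 * κ t') = -(12 * Q) * (κ t - κ t') by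
      ring, abs_mul, abs_neg, abs_of_pos (by positivity)]
  have hsqrt : 0 < √Q := Real.sqrt_pos.2 hQ
  have hsmooth := contDiffOn_of_smoothstep_leftInverse hQ hκ
  refine ⟨⟨(√Q)⁻¹, by positivity, fun t ht t' ht' =>
    holder_of_smoothstep_leftInverse hQ hκ ht ht'⟩, hsmooth,
    ⟨12 * Q * (√Q)⁻¹, by positivity, fun t ht t' ht' => ?_⟩, ?_, fun β hβ => ?_⟩
  · rw [hsub, mul_assoc (12 * Q)]
    gcongr
    exact holder_of_smoothstep_leftInverse hQ hκ ht ht'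
  · rw [funext hf]
    exact contDiffOn_const.mul (contDiffOn_const.sub (contDiffOn_const.mul hsmooth))
  · rintro ⟨C, hC⟩
    refine not_holder_of_smoothstep_leftInverse hQ hκ hβ ⟨C / (12 * Q), fun t ht t' ht' => ?_⟩
    rw [div_mul_eq_mul_div, le_div_iff₀ (by positivity), mul_comm, ← hsub]
    exact hC t ht t' ht'
end
end
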